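/- Let G be a 2-connected subgraph of Q_n and a, b distinct vertices of G with every vertex z ∉ {a,b} of degree at least d in G. If G is not isomorphic to Q_d with a and b at even Hamming distance, then G contains an a–b path of length at least 2^d - 1. -/

import Mathlib

def hypercube (n : ℕ) : SimpleGraph (Fin n → Bool) :=
  SimpleGraph.fromRel (fun x y => hammingDist x y = 1)

def TwoConnected {V : Type*} (H : SimpleGraph V) : Prop :=
  (∃ x y z : V, x ≠ y ∧ x ≠ z ∧ y ≠ z) ∧
  ∀ v : V, ((⊤ : H.Subgraph).deleteVerts {v}).coe.Connected

/-!
Induction on `d`, for graphs that become 2-connected once `a` and `b` are joined: this weaker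
hypothesis passes to pieces of the graph. Along with the claim, the induction shows that length
`2 ^ d - 2` is reached in the exceptional cube too.

Suppose first that two vertices `u`, `v` separate a part of the graph from `a`, `b` and a further
vertex. If `{u, v} ≠ {a, b}`, a long path through that part gains at least one edge when it is
extended to `a` and `b`, which makes up for the edge lost in an exceptional cube. If
`{u, v} = {a, b}`, the two sides cannot both be exceptional, because two `d`-cubes through `a` and
`b` share a third vertex.

Otherwise the graph is 3-connected relative to `a` and `b`. Cut it along a direction of the cube
into a connected side of `a` and a connected side of `b`. A vertex loses at most one neighbour to
the other side, so the induction hypothesis for `d - 1` applies to the end blocks of either side.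
If an edge crosses the cut between an end block `D` on the side of `a` and one on the side of `b`,
the long paths of both blocks are joined through it, for a total of `2 * (2 ^ (d - 1) - 1) + 1`
edges. An edge missing in an exceptional block is recovered by choosing another crossing edge or
by a detour outside the blocks; when neither is available the whole graph is a `d`-cube.

If there is no such edge, 3-connectedness forces edges from the end blocks on the side of `b` to
the rest `P` of the side of `a`. Either a path crossing the cut three times can be threaded through
two of these end blocks and `D`; or the blocks beyond a suitable cut vertex form a chain, and a
single end block is combined with a long path in the remainder of the chain or in `D`.
-/

namespace HypercubePath

section Paths

variable {V : Type*} {G : SimpleGraph V} {S T : Set V} {a b c u v w x y z : V} {k l : ℕ}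

/-- Inside the vertex set `S` there is a path of `G` from `a` to `b` of length at least `k`. -/
def LongPath (G : SimpleGraph V) (S : Set V) (a b : V) (k : ℕ) : Prop :=
  ∃ p : G.Walk a b, p.IsPath ∧ (∀ x ∈ p.support, x ∈ S) ∧ k ≤ p.length

/-- Two vertices are linked in `S` if `G` has a path between them inside `S`.  Both ends then
belong to `S`. -/
abbrev Linked (G : SimpleGraph V) (S : Set V) (a b : V) : Prop := LongPath G S a b 0

theorem linked_of_walk (p : G.Walk a b) (hp : ∀ x ∈ p.support, x ∈ S) : Linked G S a b := by
  classical
  exact ⟨p.bypass, p.bypass_isPath, fun x hx => hp x (p.support_bypass_subset_support hx),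
    Nat.zero_le _⟩

namespace LongPath

theorem left_mem (h : LongPath G S a b k) : a ∈ S := by
  obtain ⟨p, -, hS, -⟩ := h
  exact hS a p.start_mem_support

theorem right_mem (h : LongPath G S a b k) : b ∈ S := by
  obtain ⟨p, -, hS, -⟩ := h
  exact hS b p.end_mem_support

theorem refl (h : a ∈ S) : Linked G S a a :=
  ⟨.nil, .nil, by simpa using h, Nat.zero_le _⟩

theorem mono (h : LongPath G S a b k) (hST : S ⊆ T) : LongPath G T a b k := by
  obtain ⟨p, hp, hS, hk⟩ := h
  exact ⟨p, hp, fun x hx => hST (hS x hx), hk⟩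

theorem mono_length (h : LongPath G S a b k) (hl : l ≤ k) : LongPath G S a b l := by
  obtain ⟨p, hp, hS, hk⟩ := h
  exact ⟨p, hp, hS, hl.trans hk⟩

theorem transfer {G' : SimpleGraph V} (h : LongPath G S a b k)
    (hG : ∀ x ∈ S, ∀ y ∈ S, G.Adj x y → G'.Adj x y) : LongPath G' S a b k := by
  obtain ⟨p, hp, hS, hk⟩ := h
  have hedges : ∀ e ∈ p.edges, e ∈ G'.edgeSet := by
    rintro ⟨x, y⟩ he
    exact hG x (hS x (p.fst_mem_support_of_mem_edges he)) y
      (hS y (p.snd_mem_support_of_mem_edges he)) (p.edges_subset_edgeSet he)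
  exact ⟨p.transfer G' hedges, hp.transfer hedges, by simpa using hS, by simpa using hk⟩

theorem symm (h : LongPath G S a b k) : LongPath G S b a k := by
  obtain ⟨p, hp, hS, hk⟩ := h
  exact ⟨p.reverse, hp.reverse, by simpa using hS, by simpa using hk⟩

theorem append_edge (h : LongPath G S a b k) (e : G.Adj b c) (h' : LongPath G T c x l)
    (hST : ∀ y ∈ S, y ∉ T) : LongPath G (S ∪ T) a x (k + 1 + l) := by
  obtain ⟨p, hp, hS, hk⟩ := h
  obtain ⟨q, hq, hT, hl⟩ := h'
  refine ⟨p.append (.cons e q), ?_, ?_, ?_⟩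
  · rw [SimpleGraph.Walk.isPath_def, SimpleGraph.Walk.support_append]
    exact hp.support_nodup.append hq.support_nodup fun y hy hy' => hST y (hS y hy) (hT y hy')
  · intro y hy
    rw [SimpleGraph.Walk.support_append] at hy
    exact (List.mem_append.1 hy).imp (hS y) (hT y)
  · rw [SimpleGraph.Walk.length_append, SimpleGraph.Walk.length_cons]
    omega

theorem cons (ha : a ∉ S) (e : G.Adj a b) (h : LongPath G S b c k) :
    LongPath G (insert a S) a c (k + 1) :=
  ((refl (Set.mem_singleton a)).append_edge e h (by rintro _ rfl; exact ha)).mono_length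
    (by omega)

theorem append (h : LongPath G S a b k) (h' : LongPath G T b c l)
    (hST : ∀ x ∈ S, x ∈ T → x = b) : LongPath G (S ∪ T) a c (k + l) := by
  obtain ⟨p, hp, hS, hk⟩ := h
  obtain ⟨q, hq, hT, hl⟩ := h'
  have hnodup := hq.support_nodup
  rw [← q.cons_tail_support, List.nodup_cons] at hnodup
  refine ⟨p.append q, ?_, fun y hy => ?_, by rw [SimpleGraph.Walk.length_append]; omega⟩
  · rw [SimpleGraph.Walk.isPath_def, SimpleGraph.Walk.support_append]
    refine hp.support_nodup.append hnodup.2 fun y hy hy' => hnodup.1 ?_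
    rwa [hST y (hS y hy) (hT y (List.mem_of_mem_tail hy'))] at hy'
  · rw [SimpleGraph.Walk.mem_support_append_iff] at hy
    exact hy.imp (hS y) (hT y)

theorem append_insert (h : LongPath G S a c k) (h' : LongPath G (insert c T) c x l)
    (hST : ∀ z ∈ S, z ∉ T) : LongPath G (S ∪ T) a x (k + l) := by
  refine (h.append h' ?_).mono (Set.union_subset Set.subset_union_left
    (Set.insert_subset (.inl h.right_mem) Set.subset_union_right))
  rintro z hz (hz' | hz')
  · exact hz'
  · exact absurd hz' (hST z hz)

theorem one_of_ne (h : Linked G S a b) (hab : a ≠ b) : LongPath G S a b 1 := by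
  obtain ⟨p, hp, hS, -⟩ := h
  exact ⟨p, hp, hS, Nat.one_le_iff_ne_zero.2 fun h0 => hab (p.eq_of_length_eq_zero h0)⟩

theorem trans (h : Linked G S u v) (h' : Linked G S v w) : Linked G S u w := by
  obtain ⟨p, -, hp, -⟩ := h
  obtain ⟨q, -, hq, -⟩ := h'
  refine linked_of_walk (p.append q) fun x hx => ?_
  rw [SimpleGraph.Walk.mem_support_append_iff] at hx
  exact hx.elim (hp x) (hq x)

theorem of_adj (hu : u ∈ S) (hv : v ∈ S) (e : G.Adj u v) : Linked G S u v :=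
  linked_of_walk (.cons e .nil) (by simp [hu, hv])

theorem trans_adj (h : Linked G S u v) (e : G.Adj v w) (hw : w ∈ S) : Linked G S u w :=
  h.trans (of_adj h.right_mem hw e)

theorem exists_adj_crossing (h : Linked G S u v) (A : Set V) (hu : u ∈ A) (hv : v ∉ A) :
    ∃ x ∈ A, x ∈ S ∧ ∃ y ∈ S, y ∉ A ∧ G.Adj x y := by
  obtain ⟨p, -, hS, -⟩ := h
  obtain ⟨d, hd, hfst, hsnd⟩ := p.exists_boundary_dart A hu hv
  exact ⟨d.fst, hfst, hS _ (p.dart_fst_mem_support_of_mem_darts hd), d.snd,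
    hS _ (p.dart_snd_mem_support_of_mem_darts hd), hsnd, d.adj⟩

theorem mem_of_closed (h : Linked G S u v) (A : Set V) (hu : u ∈ A)
    (hA : ∀ x ∈ A, x ∈ S → ∀ y ∈ S, G.Adj x y → y ∈ A) : v ∈ A := by
  by_contra hv
  obtain ⟨x, hxA, hxS, y, hyS, hyA, e⟩ := h.exists_adj_crossing A hu hv
  exact hyA (hA x hxA hxS y hyS e)

end LongPath

/-- The connected component of `u` in the subgraph of `G` induced on `S`. -/
def component (G : SimpleGraph V) (S : Set V) (u : V) : Set V := {v | Linked G S u v}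

theorem component_subset : component G S u ⊆ S := fun _ h => LongPath.right_mem h

theorem mem_component_self (h : u ∈ S) : u ∈ component G S u := LongPath.refl h

theorem mem_component_of_adj (hx : x ∈ component G S u) (hy : y ∈ S) (e : G.Adj x y) :
    y ∈ component G S u :=
  LongPath.trans_adj hx e hy

theorem linked_component (h : v ∈ component G S u) : Linked G (component G S u) u v := by
  have hS : Linked G S u v := h
  refine hS.mem_of_closed {z | Linked G (component G S u) u z}
    (LongPath.refl (mem_component_self hS.left_mem)) fun x hx _ y hy e => ?_
  exact LongPath.trans_adj hx e (mem_component_of_adj hx.right_mem hy e)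

/-- `G` induces a connected (possibly empty) graph on `S`. -/
def ConnectedOn (G : SimpleGraph V) (S : Set V) : Prop := ∀ u ∈ S, ∀ v ∈ S, Linked G S u v

theorem ConnectedOn.of_root (r : V) (h : ∀ z ∈ S, Linked G S z r) : ConnectedOn G S :=
  fun x hx y hy => (h x hx).trans (h y hy).symm

theorem connectedOn_component : ConnectedOn G (component G S u) :=
  .of_root u fun _ hz => (linked_component hz).symm

theorem LongPath.exists_end_removable (h : Linked G S u w) :
    ∃ T ⊆ S, Linked G T u w ∧ ∀ z ∈ T, z ≠ w → Linked G (T \ {w}) u z := by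
  by_cases huw : u = w
  · subst huw
    exact ⟨{u}, by simpa using h.left_mem, refl rfl, fun z hz hzu => absurd hz hzu⟩
  refine ⟨insert w (component G (S \ {w}) u), ?_, ?_, ?_⟩
  · exact Set.insert_subset h.right_mem (component_subset.trans Set.sdiff_subset)
  · obtain ⟨x, hx, -, y, hyS, hyA, e⟩ := h.exists_adj_crossing (component G (S \ {w}) u)
      (mem_component_self ⟨h.left_mem, huw⟩) fun hw => (component_subset hw).2 rfl
    obtain rfl : y = w := by
      by_contra hyw
      exact hyA (mem_component_of_adj hx ⟨hyS, hyw⟩ e)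
    exact trans_adj ((linked_component hx).mono (Set.subset_insert _ _)) e
      (Set.mem_insert _ _)
  · rintro z (rfl | hz) hzw
    · exact absurd rfl hzw
    · exact (linked_component hz).mono fun t ht => ⟨Or.inr ht, (component_subset ht).2⟩

end Paths

section Menger

variable {V : Type*} {G G' : SimpleGraph V} {S A B : Set V} {w x y : V}

/-- No single vertex separates `A` from `B` in the subgraph induced on `S`. -/
def Unseparated (G : SimpleGraph V) (S A B : Set V) : Prop :=
  ∀ s, ∃ u ∈ A, ∃ v ∈ B, Linked G (S \ {s}) u v

/-- Two vertex-disjoint paths inside `S` from `A` to `B`. -/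
def TwoDisjointLinks (G : SimpleGraph V) (S A B : Set V) : Prop :=
  ∃ p ∈ A, ∃ q ∈ A, ∃ r ∈ B, ∃ t ∈ B, ∃ S₁ ⊆ S, ∃ S₂ ⊆ S,
    Disjoint S₁ S₂ ∧ Linked G S₁ p r ∧ Linked G S₂ q t

theorem Unseparated.symm (h : Unseparated G S A B) : Unseparated G S B A := by
  intro s
  obtain ⟨u, hu, v, hv, huv⟩ := h s
  exact ⟨v, hv, u, hu, huv.symm⟩

theorem TwoDisjointLinks.mono_graph (h : TwoDisjointLinks G' S A B) (hle : G' ≤ G) :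
    TwoDisjointLinks G S A B := by
  obtain ⟨p, hp, q, hq, r, hr, t, ht, S₁, hS₁, S₂, hS₂, hd, h₁, h₂⟩ := h
  exact ⟨p, hp, q, hq, r, hr, t, ht, S₁, hS₁, S₂, hS₂, hd,
    h₁.transfer fun _ _ _ _ e => hle e, h₂.transfer fun _ _ _ _ e => hle e⟩

theorem Unseparated.twoDisjointLinks_bot [Nonempty V] (h : Unseparated ⊥ S A B) :
    TwoDisjointLinks ⊥ S A B := by
  have eq_of_linked {T : Set V} {u v : V} (huv : Linked (⊥ : SimpleGraph V) T u v) : u = v := by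
    obtain ⟨p, -⟩ := huv
    exact SimpleGraph.reachable_bot.1 p.reachable
  obtain ⟨s⟩ := ‹Nonempty V›
  obtain ⟨u, hu, v, hv, huv⟩ := h s
  obtain rfl := eq_of_linked huv
  obtain ⟨u', hu', v', hv', huv'⟩ := h u
  obtain rfl := eq_of_linked huv'
  exact ⟨u, hu, u', hu', u, hv, u', hv', {u}, by simpa using huv.left_mem.1, {u'},
    by simpa using huv'.left_mem.1,
    Set.disjoint_singleton.2 fun huu' => huv'.left_mem.2 huu'.symm, .refl rfl, .refl rfl⟩

/-- `w` separates `A` from `B` in `G'`, and `xy` is the only edge of `G` missing in `G'`; it leads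
from the `A`-side of `w` to the outside of that side. -/
structure CutWithBridge (G G' : SimpleGraph V) (S A B : Set V) (w x y : V) : Prop where
  adj_or : ∀ p q, G.Adj p q → G'.Adj p q ∨ s(p, q) = s(x, y)
  not_linked : ∀ u ∈ A, ∀ v ∈ B, ¬ Linked G' (S \ {w}) u v
  linked_left : ∃ u ∈ A, Linked G' (S \ {w}) u x
  not_linked_right : ∀ u ∈ A, ¬ Linked G' (S \ {w}) u y

theorem CutWithBridge.symm (h : CutWithBridge G G' S A B w x y) (hAB : Unseparated G S A B) :
    CutWithBridge G G' S B A w y x := by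
  have not_linked_left : ∀ v ∈ B, ¬ Linked G' (S \ {w}) v x := by
    intro v hv hvx
    obtain ⟨u, hu, hux⟩ := h.linked_left
    exact h.not_linked u hu v hv (hux.trans hvx.symm)
  refine ⟨by simpa only [Sym2.eq_swap] using h.adj_or,
    fun u hu v hv huv => h.not_linked v hv u hu huv.symm, ?_, not_linked_left⟩
  obtain ⟨u, hu, v, hv, huv⟩ := hAB w
  obtain ⟨p, ⟨v', hv', hp⟩, -, q, hqS, hqB, e⟩ := huv.symm.exists_adj_crossing
    {z | ∃ v ∈ B, Linked G' (S \ {w}) v z} ⟨v, hv, .refl huv.right_mem⟩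
    fun ⟨v', hv', hvu⟩ => h.not_linked u hu v' hv' hvu.symm
  rcases h.adj_or p q e with e' | hpq
  · exact absurd ⟨v', hv', hp.trans_adj e' hqS⟩ hqB
  rcases Sym2.eq_iff.1 hpq with ⟨rfl, rfl⟩ | ⟨rfl, rfl⟩
  · exact absurd hp (not_linked_left v' hv')
  · exact ⟨v', hv', hp⟩

theorem CutWithBridge.unseparated (h : CutWithBridge G G' S A B w x y)
    (hAB : Unseparated G S A B) : Unseparated G' S A {w, x} := by
  intro s
  by_cases hsw : s = w
  · obtain ⟨u, hu, hux⟩ := h.linked_left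
    exact ⟨u, hu, x, by simp, hsw ▸ hux⟩
  obtain ⟨u, hu, v, hv, huv⟩ := hAB s
  by_cases huw : Linked G' (S \ {s}) u w
  · exact ⟨u, hu, w, by simp, huw⟩
  by_cases hux : Linked G' (S \ {s}) u x
  · exact ⟨u, hu, x, by simp, hux⟩
  exfalso
  have avoids_w : ∀ z ∈ component G' (S \ {s}) u, Linked G' (S \ {w}) u z := fun z hz =>
    (linked_component hz).mono fun t ht => ⟨(component_subset ht).1, fun htw => huw (htw ▸ ht)⟩
  refine h.not_linked u hu v hv (avoids_w v ?_)
  refine huv.mem_of_closed _ (mem_component_self huv.left_mem) fun p hp _ q hq e => ?_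
  rcases h.adj_or p q e with e' | hpq
  · exact mem_component_of_adj hp hq e'
  rcases Sym2.eq_iff.1 hpq with ⟨rfl, rfl⟩ | ⟨rfl, rfl⟩
  · exact absurd hp hux
  · exact absurd (avoids_w _ hp) (h.not_linked_right u hu)

theorem TwoDisjointLinks.exists_on_side (h : TwoDisjointLinks G S A {w, x}) :
    ∃ p ∈ A, ∃ q ∈ A, ∃ S₁ ⊆ S, ∃ S₂ ⊆ S, Disjoint S₁ S₂ ∧ Linked G S₁ p w ∧ Linked G S₂ q x ∧
      ∀ z ∈ S₁ ∪ S₂, z ≠ w → ∃ u ∈ A, Linked G (S \ {w}) u z := by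
  obtain ⟨p, hp, q, hq, S₁, hS₁, S₂, hS₂, hd, h₁, h₂⟩ : ∃ p ∈ A, ∃ q ∈ A, ∃ S₁ ⊆ S, ∃ S₂ ⊆ S,
      Disjoint S₁ S₂ ∧ Linked G S₁ p w ∧ Linked G S₂ q x := by
    obtain ⟨p, hp, q, hq, r, hr, t, ht, S₁, hS₁, S₂, hS₂, hd, h₁, h₂⟩ := h
    have hrt : r ≠ t := fun hrt => Set.disjoint_left.1 hd h₁.right_mem (hrt ▸ h₂.right_mem)
    rcases hr with rfl | rfl <;> rcases ht with rfl | rfl <;> try exact absurd rfl hrt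
    · exact ⟨p, hp, q, hq, S₁, hS₁, S₂, hS₂, hd, h₁, h₂⟩
    · exact ⟨q, hq, p, hp, S₂, hS₂, S₁, hS₁, hd.symm, h₂, h₁⟩
  obtain ⟨T₁, hT₁, hpw, hT₁w⟩ := h₁.exists_end_removable
  refine ⟨p, hp, q, hq, T₁, hT₁.trans hS₁, component G S₂ q, component_subset.trans hS₂,
    hd.mono hT₁ component_subset, hpw, linked_component h₂, ?_⟩
  rintro z (hz | hz) hzw
  · exact ⟨p, hp, (hT₁w z hz hzw).mono (Set.sdiff_subset_sdiff_left (hT₁.trans hS₁))⟩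
  · refine ⟨q, hq, LongPath.mono hz fun t ht => ⟨hS₂ ht, ?_⟩⟩
    rintro rfl
    exact Set.disjoint_left.1 hd h₁.right_mem ht

theorem CutWithBridge.twoDisjointLinks (h : CutWithBridge G G' S A B w x y) (hle : G' ≤ G)
    (e : G.Adj x y) (hA : TwoDisjointLinks G' S A {w, x}) (hB : TwoDisjointLinks G' S B {w, y}) :
    TwoDisjointLinks G S A B := by
  obtain ⟨p, hp, q, hq, S₁, hS₁, S₂, hS₂, hdS, hpw, hqx, hAside⟩ := hA.exists_on_side
  obtain ⟨r, hr, t, ht, T₁, hT₁, T₂, hT₂, hdT, hrw, hty, hBside⟩ := hB.exists_on_side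
  have lift {T : Set V} {u v : V} (huv : Linked G' T u v) : Linked G T u v :=
    huv.transfer fun _ _ _ _ e => hle e
  have eq_w : ∀ z ∈ S₁ ∪ S₂, z ∈ T₁ ∪ T₂ → z = w := by
    intro z hzS hzT
    by_contra hzw
    obtain ⟨u, hu, huz⟩ := hAside z hzS hzw
    obtain ⟨v, hv, hvz⟩ := hBside z hzT hzw
    exact h.not_linked u hu v hv (huz.trans hvz.symm)
  have hwS₂ : w ∉ S₂ := Set.disjoint_left.1 hdS hpw.right_mem
  have hwT₂ : w ∉ T₂ := Set.disjoint_left.1 hdT hrw.right_mem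
  refine ⟨p, hp, q, hq, r, hr, t, ht, S₁ ∪ T₁, Set.union_subset hS₁ hT₁, S₂ ∪ T₂,
    Set.union_subset hS₂ hT₂, Set.disjoint_left.2 ?_, ?_, ?_⟩
  · rintro z (hz | hz) (hz' | hz')
    · exact Set.disjoint_left.1 hdS hz hz'
    · exact hwT₂ (eq_w z (.inl hz) (.inr hz') ▸ hz')
    · exact hwS₂ (eq_w z (.inr hz') (.inl hz) ▸ hz')
    · exact Set.disjoint_left.1 hdT hz hz'
  · exact ((lift hpw).mono Set.subset_union_left).trans
      ((lift hrw.symm).mono Set.subset_union_right)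
  · exact (((lift hqx).mono Set.subset_union_left).trans_adj e (.inr hty.right_mem)).trans
      ((lift hty.symm).mono Set.subset_union_right)

theorem exists_cutWithBridge (x₀ y₀ : V) (hAB : Unseparated G S A B)
    (hcut : ¬ Unseparated (G.deleteEdges {s(x₀, y₀)}) S A B) :
    ∃ w x y, G.Adj x y ∧ CutWithBridge G (G.deleteEdges {s(x₀, y₀)}) S A B w x y := by
  set G' := G.deleteEdges {s(x₀, y₀)} with hG'
  have adj_or : ∀ p q, G.Adj p q → G'.Adj p q ∨ s(p, q) = s(x₀, y₀) := fun p q e => by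
    rw [hG', SimpleGraph.deleteEdges_adj, Set.mem_singleton_iff]
    tauto
  rw [Unseparated] at hcut
  push Not at hcut
  obtain ⟨w, hw⟩ := hcut
  obtain ⟨u, hu, v, hv, huv⟩ := hAB w
  obtain ⟨x, ⟨u', hu', hux⟩, -, y, hyS, hyA, e⟩ := huv.exists_adj_crossing
    {z | ∃ u ∈ A, Linked G' (S \ {w}) u z} ⟨u, hu, .refl huv.left_mem⟩
    fun ⟨u', hu', huv'⟩ => hw u' hu' v hv huv'
  have hxy : s(x, y) = s(x₀, y₀) := (adj_or x y e).resolve_left fun e' =>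
    hyA ⟨u', hu', hux.trans_adj e' hyS⟩
  exact ⟨w, x, y, e, by rwa [hxy], hw, ⟨u', hu', hux⟩, fun u hu huy => hyA ⟨u, hu, huy⟩⟩

theorem Unseparated.twoDisjointLinks [Finite V] [Nonempty V] (h : Unseparated G S A B) :
    TwoDisjointLinks G S A B := by
  induction G using WellFoundedLT.induction generalizing A B with
  | ind G ih =>
    by_cases hbot : G = ⊥
    · subst hbot
      exact h.twoDisjointLinks_bot
    obtain ⟨x₀, y₀, e₀⟩ := SimpleGraph.ne_bot_iff_exists_adj.1 hbot
    have hlt : G.deleteEdges {s(x₀, y₀)} < G := by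
      refine lt_of_le_of_ne (SimpleGraph.deleteEdges_le _) fun heq => ?_
      rw [← heq, SimpleGraph.deleteEdges_adj] at e₀
      exact e₀.2 rfl
    by_cases h' : Unseparated (G.deleteEdges {s(x₀, y₀)}) S A B
    · exact (ih _ hlt h').mono_graph hlt.le
    obtain ⟨w, x, y, e, hcut⟩ := exists_cutWithBridge x₀ y₀ h h'
    exact hcut.twoDisjointLinks hlt.le e (ih _ hlt (hcut.unseparated h))
      (ih _ hlt ((hcut.symm h).unseparated h.symm))

theorem Unseparated.exists_disjoint_linked_mem [Finite V] {p q : V}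
    (h : Unseparated G S {p, q} B) :
    ∃ S₁ ⊆ S, ∃ S₂ ⊆ S, (∀ x ∈ S₁, x ∉ S₂) ∧
      ∃ r ∈ B, ∃ t ∈ B, Linked G S₁ p r ∧ Linked G S₂ q t := by
  have : Nonempty V := ⟨p⟩
  obtain ⟨p', hp, q', hq, r, hr, t, ht, S₁, hS₁, S₂, hS₂, hd, h₁, h₂⟩ := h.twoDisjointLinks
  have hpq : p' ≠ q' := fun heq => Set.disjoint_left.1 hd h₁.left_mem (heq ▸ h₂.left_mem)
  rcases hp with rfl | rfl <;> rcases hq with rfl | rfl <;> try exact absurd rfl hpq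
  · exact ⟨S₁, hS₁, S₂, hS₂, fun _ hx => Set.disjoint_left.1 hd hx, r, hr, t, ht, h₁, h₂⟩
  · exact ⟨S₂, hS₂, S₁, hS₁, fun _ hx => Set.disjoint_right.1 hd hx, t, ht, r, hr, h₂, h₁⟩

theorem Unseparated.exists_disjoint_linked [Finite V] {p q r t : V}
    (h : Unseparated G S {p, q} {r, t}) :
    ∃ S₁ ⊆ S, ∃ S₂ ⊆ S, (∀ x ∈ S₁, x ∉ S₂) ∧
      ((Linked G S₁ p r ∧ Linked G S₂ q t) ∨ (Linked G S₁ p t ∧ Linked G S₂ q r)) := by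
  obtain ⟨S₁, hS₁, S₂, hS₂, hd, r', hr, t', ht, h₁, h₂⟩ := h.exists_disjoint_linked_mem
  have hrt : r' ≠ t' := fun heq => hd _ h₁.right_mem (heq ▸ h₂.right_mem)
  rcases hr with rfl | rfl <;> rcases ht with rfl | rfl <;> try exact absurd rfl hrt
  · exact ⟨S₁, hS₁, S₂, hS₂, hd, .inl ⟨h₁, h₂⟩⟩
  · exact ⟨S₁, hS₁, S₂, hS₂, hd, .inr ⟨h₁, h₂⟩⟩

theorem LongPath.reroute {S₁ S₂ : Set V} {p q r t v : V} (h₁ : Linked G S₁ p t)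
    (h₂ : Linked G S₂ q v) (hS₁ : S₁ ⊆ S) (hS₂ : S₂ ⊆ S) (hd : ∀ x ∈ S₁, x ∉ S₂)
    (hrp : Linked G S r p) :
    ∃ T₁ ⊆ S, ∃ T₂ ⊆ S, (∀ x ∈ T₁, x ∉ T₂) ∧
      ((Linked G T₁ p r ∧ Linked G T₂ q v) ∨ (Linked G T₁ p t ∧ Linked G T₂ q r)) := by
  by_cases hr₁ : r ∈ component G S₁ p
  · exact ⟨S₁, hS₁, S₂, hS₂, hd, .inl ⟨hr₁, h₂⟩⟩
  by_cases hr₂ : r ∈ component G S₂ q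
  · exact ⟨S₁, hS₁, S₂, hS₂, hd, .inr ⟨h₁, hr₂⟩⟩
  have hC₁ : component G S₁ p ⊆ S₁ := component_subset
  have hC₂ : component G S₂ q ⊆ S₂ := component_subset
  let R := component G (S \ (component G S₁ p ∪ component G S₂ q)) r
  have hR : R ⊆ S \ (component G S₁ p ∪ component G S₂ q) := component_subset
  have hp₁ : p ∈ component G S₁ p := mem_component_self h₁.left_mem
  obtain ⟨x, hx, -, y, hy, hyR, hxy⟩ := hrp.exists_adj_crossing R
    (mem_component_self ⟨hrp.left_mem, by simp [hr₁, hr₂]⟩) fun hp => (hR hp).2 (.inl hp₁)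
  have reach_r {C : Set V} {u : V} (hyC : Linked G C u y) : Linked G (C ∪ R) u r :=
    ((hyC.mono Set.subset_union_left).trans_adj hxy.symm (.inr hx)).trans
      ((linked_component hx).symm.mono Set.subset_union_right)
  have hy' : y ∈ component G S₁ p ∪ component G S₂ q := by
    by_contra hyC
    exact hyR (mem_component_of_adj hx ⟨hy, hyC⟩ hxy)
  rcases hy' with hy | hy
  · refine ⟨component G S₁ p ∪ R, Set.union_subset (hC₁.trans hS₁) (hR.trans Set.sdiff_subset),
      component G S₂ q, hC₂.trans hS₂, ?_,
      .inl ⟨reach_r (linked_component hy), linked_component h₂⟩⟩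
    rintro z (hz | hz) hz₂
    · exact hd z (hC₁ hz) (hC₂ hz₂)
    · exact (hR hz).2 (.inr hz₂)
  · refine ⟨component G S₁ p, hC₁.trans hS₁, component G S₂ q ∪ R,
      Set.union_subset (hC₂.trans hS₂) (hR.trans Set.sdiff_subset), ?_,
      .inr ⟨linked_component h₁, reach_r (linked_component hy)⟩⟩
    rintro z hz (hz₂ | hz₂)
    · exact hd z (hC₁ hz) (hC₂ hz₂)
    · exact (hR hz₂).2 (.inl hz)

theorem Unseparated.exists_disjoint_linked_of_linked [Finite V] {p q r : V}
    (h : Unseparated G S {p, q} B) (hrp : Linked G S r p) :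
    ∃ S₁ ⊆ S, ∃ S₂ ⊆ S, (∀ x ∈ S₁, x ∉ S₂) ∧ ∃ t ∈ B,
      ((Linked G S₁ p r ∧ Linked G S₂ q t) ∨ (Linked G S₁ p t ∧ Linked G S₂ q r)) := by
  obtain ⟨S₁, hS₁, S₂, hS₂, hd, t, ht, v, hv, h₁, h₂⟩ := h.exists_disjoint_linked_mem
  obtain ⟨T₁, hT₁, T₂, hT₂, hdT, hlinks | hlinks⟩ := h₁.reroute h₂ hS₁ hS₂ hd hrp
  · exact ⟨T₁, hT₁, T₂, hT₂, hdT, v, hv, .inl hlinks⟩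
  · exact ⟨T₁, hT₁, T₂, hT₂, hdT, t, ht, .inr hlinks⟩

end Menger

section Lobes

variable {V : Type*} {G : SimpleGraph V} {J C E : Set V} {r w s z : V}

/-- A lobe of `J` seen from the root `r`: a nonempty connected part `C` of `J` avoiding `r` that
is attached to the rest of `J` only through the vertex `w`. -/
structure IsLobe (G : SimpleGraph V) (J : Set V) (r w : V) (C : Set V) : Prop where
  attach_mem : w ∈ J
  nonempty : C.Nonempty
  subset : C ⊆ J
  attach_notMem : w ∉ C
  root_notMem : r ∉ C
  connectedOn : ConnectedOn G C
  closed : ∀ x ∈ C, ∀ y ∈ J, G.Adj x y → y ∈ C ∨ y = w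

/-- A lobe which is inclusion-minimal among all lobes of `J`, whatever their attachment. Together
with its attachment it plays the role of an end block. -/
structure IsMinLobe (G : SimpleGraph V) (J : Set V) (r w : V) (C : Set V) : Prop
    extends IsLobe G J r w C where
  eq_of_subset : ∀ w' C', IsLobe G J r w' C' → C' ⊆ C → C' = C

theorem IsLobe.exists_isMinLobe [Finite V] (h : IsLobe G J r w C) :
    ∃ w' C', IsMinLobe G J r w' C' ∧ C' ⊆ C := by
  obtain ⟨C', hC'C, hmin⟩ := (Set.toFinite {C | ∃ w, IsLobe G J r w C}).exists_le_minimal ⟨w, h⟩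
  obtain ⟨w', hC'⟩ := hmin.prop
  exact ⟨w', C', ⟨hC', fun w'' C'' h'' hsub => hmin.eq_of_le ⟨w'', h''⟩ hsub⟩, hC'C⟩

theorem isLobe_component (hs : s ∈ J) (hz : z ∈ J) (hzs : z ≠ s)
    (hzr : ¬ Linked G (J \ {s}) z r) : IsLobe G J r s (component G (J \ {s}) z) where
  attach_mem := hs
  nonempty := ⟨z, mem_component_self ⟨hz, hzs⟩⟩
  subset := component_subset.trans Set.sdiff_subset
  attach_notMem := fun h => (component_subset h).2 rfl
  root_notMem := hzr
  connectedOn := connectedOn_component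
  closed := fun x hx y hy e => by
    by_cases hys : y = s
    · exact .inr hys
    · exact .inl (mem_component_of_adj hx ⟨hy, hys⟩ e)

theorem IsLobe.ne_root (h : IsLobe G J r w C) (hz : z ∈ C) : z ≠ r := fun hzr =>
  h.root_notMem (hzr ▸ hz)

theorem IsLobe.mem_insert_of_adj (h : IsLobe G J r w C) {y : V} (hz : z ∈ C) (hy : y ∈ J)
    (e : G.Adj z y) : y ∈ insert w C :=
  (h.closed z hz y hy e).symm

theorem IsLobe.notMem_of_adj (h : IsLobe G J r w C) {y : V} (hz : z ∈ J) (hzC : z ∉ C)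
    (hzw : z ≠ w) (e : G.Adj z y) : y ∉ C := fun hy =>
  (h.closed y hy z hz e.symm).elim hzC hzw

theorem IsLobe.not_linked_root (h : IsLobe G J r w C) (hz : z ∈ C) :
    ¬ Linked G (J \ {w}) z r := fun hzr =>
  h.root_notMem <| hzr.mem_of_closed C hz fun x hx _ y hy e =>
    (h.closed x hx y hy.1 e).resolve_right hy.2

theorem IsLobe.exists_adj_attach (hJ : ConnectedOn G J) (hr : r ∈ J) (h : IsLobe G J r w C) :
    ∃ x ∈ C, G.Adj x w := by
  obtain ⟨z, hz⟩ := h.nonempty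
  obtain ⟨x, hx, -, y, hy, hyC, e⟩ :=
    (hJ z (h.subset hz) r hr).exists_adj_crossing C hz h.root_notMem
  obtain rfl := (h.closed x hx y hy e).resolve_left hyC
  exact ⟨x, hx, e⟩

theorem IsLobe.linked_attach_sdiff (hJ : ConnectedOn G J) (h : IsLobe G J r w C) (hz : z ∈ J)
    (hzC : z ∉ C) : Linked G (J \ C) z w := by
  by_contra hzw
  refine hzw ((hJ z hz w h.attach_mem).mem_of_closed (component G (J \ C) z)
    (mem_component_self ⟨hz, hzC⟩) fun x hx hxJ y hy e =>
      mem_component_of_adj hx ⟨hy, fun hyC => ?_⟩ e)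
  rcases h.closed y hyC x hxJ e.symm with hxC | rfl
  · exact (component_subset hx).2 hxC
  · exact hzw hx

theorem IsLobe.connectedOn_sdiff (hJ : ConnectedOn G J) (h : IsLobe G J r w C) :
    ConnectedOn G (J \ C) :=
  .of_root w fun _ hz => h.linked_attach_sdiff hJ hz.1 hz.2

theorem IsLobe.connectedOn_insert (hJ : ConnectedOn G J) (hr : r ∈ J) (h : IsLobe G J r w C) :
    ConnectedOn G (insert w C) := by
  obtain ⟨x, hx, e⟩ := h.exists_adj_attach hJ hr
  refine .of_root w ?_
  rintro z (rfl | hz)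
  · exact .refl (by simp)
  · exact ((h.connectedOn z hz x hx).mono (Set.subset_insert _ _)).trans_adj e (by simp)

theorem IsLobe.linked_sdiff (h : IsLobe G J r w C) {u v : V} (hu : u ∉ C) (hv : v ∉ C)
    (huv : Linked G (J \ {s}) u v) : Linked G ((J \ C) \ {s}) u v := by
  let K := component G ((J \ C) \ {s}) u
  have hvK : v ∈ K ∪ {y ∈ C | w ∈ K} := by
    refine huv.mem_of_closed _
      (.inl (mem_component_self ⟨⟨huv.left_mem.1, hu⟩, huv.left_mem.2⟩)) ?_
    rintro x (hx | ⟨hx, hw⟩) hxJ y hy e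
    · by_cases hyC : y ∈ C
      · obtain rfl := (h.closed y hyC x hxJ.1 e.symm).resolve_left (component_subset hx).1.2
        exact .inr ⟨hyC, hx⟩
      · exact .inl (mem_component_of_adj hx ⟨⟨hy.1, hyC⟩, hy.2⟩ e)
    · rcases h.closed x hx y hy.1 e with hyC | rfl
      exacts [.inr ⟨hyC, hw⟩, .inl hw]
  exact hvK.resolve_right fun hvC => hv hvC.1

theorem IsLobe.subset_of_inter {C' : Set V} (h : IsLobe G J r w C) (h' : IsLobe G J r w C')
    (hz : z ∈ C) (hz' : z ∈ C') : C ⊆ C' := fun y hy =>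
  (h.connectedOn z hz y hy).mem_of_closed C' hz' fun p hp _ q hq e =>
    (h'.closed p hp q (h.subset hq) e).resolve_right fun hqw => h.attach_notMem (hqw ▸ hq)

theorem IsLobe.attach_mem_of_subset (hJ : ConnectedOn G J) (hr : r ∈ J) (h : IsLobe G J r s C)
    (hE : IsLobe G J r w E) (hEC : E ⊆ C) (hz : z ∈ C) (hzE : z ∉ E) : w ∈ C := by
  obtain ⟨x, hx, e⟩ := hE.exists_adj_attach hJ hr
  rcases h.closed x (hEC hx) w hE.attach_mem e with hw | rfl
  · exact hw
  · exact absurd (h.subset_of_inter hE (hEC hx) hx hz) hzE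

theorem IsMinLobe.linked_attach (hJ : ConnectedOn G J) (hr : r ∈ J) (h : IsMinLobe G J r w E)
    {t : V} (hz : z ∈ E) (hzt : z ≠ t) (htw : t ≠ w) : Linked G (insert w E \ {t}) z w := by
  by_cases ht : t ∈ E
  swap
  · refine (h.connectedOn_insert hJ hr z (.inr hz) w (by simp)).mono ?_
    rintro x (rfl | hx)
    · exact ⟨by simp, fun hxt => htw hxt.symm⟩
    · exact ⟨.inr hx, fun hxt => ht (hxt ▸ hx)⟩
  by_contra hzw
  have hKE : component G (insert w E \ {t}) z ⊆ E := fun x hx =>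
    (component_subset hx).1.resolve_left fun hxw => hzw (hxw ▸ hx)
  have hlobe : IsLobe G J r t (component G (insert w E \ {t}) z) := by
    refine ⟨h.subset ht, ⟨z, mem_component_self ⟨.inr hz, hzt⟩⟩, hKE.trans h.subset,
      fun htK => (component_subset htK).2 rfl, fun hrK => h.root_notMem (hKE hrK),
      connectedOn_component, fun x hx y hy e => ?_⟩
    by_cases hyt : y = t
    · exact .inr hyt
    · exact .inl (mem_component_of_adj hx ⟨(h.closed x (hKE hx) y hy e).symm, hyt⟩ e)
  rw [← h.eq_of_subset t _ hlobe hKE] at ht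
  exact (component_subset ht).2 rfl

variable {w₁ w₂ : V} {E₁ E₂ : Set V}

theorem IsLobe.attach_notMem_of_attach_mem (hJ : ConnectedOn G J) (hr : r ∈ J)
    (h₁ : IsLobe G J r w₁ E₁) (h₂ : IsLobe G J r w₂ E₂) (h₁₂ : w₁ ∈ E₂) : w₂ ∉ E₁ := by
  intro h₂₁
  obtain ⟨z, hz⟩ := h₁.nonempty
  have hr' : r ∈ E₁ ∪ E₂ := by
    refine (hJ z (h₁.subset hz) r hr).mem_of_closed _ (.inl hz) ?_
    rintro x (hx | hx) _ y hy e
    · rcases h₁.closed x hx y hy e with hy | rfl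
      exacts [.inl hy, .inr h₁₂]
    · rcases h₂.closed x hx y hy e with hy | rfl
      exacts [.inr hy, .inl h₂₁]
  exact hr'.elim h₁.root_notMem h₂.root_notMem

theorem IsMinLobe.attach_mem_of_inter (h₁ : IsMinLobe G J r w₁ E₁) (h₂ : IsMinLobe G J r w₂ E₂)
    (hne : E₁ ≠ E₂) (hz₁ : z ∈ E₁) (hz₂ : z ∈ E₂) : w₂ ∈ E₁ := by
  by_contra hw
  refine hne (h₂.eq_of_subset _ _ h₁.toIsLobe fun y hy => ?_)
  exact (h₁.connectedOn z hz₁ y hy).mem_of_closed E₂ hz₂ fun p hp _ q hq e =>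
    (h₂.closed p hp q (h₁.subset hq) e).resolve_right fun hqw => hw (hqw ▸ hq)

theorem IsMinLobe.notMem_of_mem (hJ : ConnectedOn G J) (hr : r ∈ J)
    (h₁ : IsMinLobe G J r w₁ E₁) (h₂ : IsMinLobe G J r w₂ E₂) (hne : E₁ ≠ E₂) :
    ∀ x ∈ E₁, x ∉ E₂ := fun _ hx₁ hx₂ =>
  h₁.toIsLobe.attach_notMem_of_attach_mem hJ hr h₂.toIsLobe
    (h₂.attach_mem_of_inter h₁ hne.symm hx₂ hx₁) (h₁.attach_mem_of_inter h₂ hne hx₁ hx₂)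

theorem IsMinLobe.attach_notMem_of_ne (hJ : ConnectedOn G J) (hr : r ∈ J)
    (h₁ : IsMinLobe G J r w₁ E₁) (h₂ : IsMinLobe G J r w₂ E₂) (hne : E₁ ≠ E₂) : w₁ ∉ E₂ := by
  intro hw
  obtain ⟨x, hx, e⟩ := h₁.exists_adj_attach hJ hr
  rcases h₂.closed w₁ hw x (h₁.subset hx) e.symm with hx₂ | rfl
  · exact h₁.notMem_of_mem hJ hr h₂ hne x hx hx₂
  · exact h₁.toIsLobe.attach_notMem_of_attach_mem hJ hr h₂.toIsLobe hw hx

theorem IsMinLobe.isLobe_sdiff (hJ : ConnectedOn G J) (hr : r ∈ J)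
    (h₁ : IsMinLobe G J r w₁ E₁) (h₂ : IsMinLobe G J r w₂ E₂) (hne : E₁ ≠ E₂) :
    IsLobe G (J \ E₁) r w₂ E₂ :=
  ⟨⟨h₂.attach_mem, h₂.attach_notMem_of_ne hJ hr h₁ hne.symm⟩, h₂.nonempty,
    fun x hx => ⟨h₂.subset hx, fun hx₁ => h₁.notMem_of_mem hJ hr h₂ hne x hx₁ hx⟩,
    h₂.attach_notMem, h₂.root_notMem, h₂.connectedOn,
    fun x hx y hy e => h₂.closed x hx y hy.1 e⟩

theorem IsMinLobe.connectedOn_sdiff_sdiff (hJ : ConnectedOn G J) (hr : r ∈ J)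
    (h₁ : IsMinLobe G J r w₁ E₁) (h₂ : IsMinLobe G J r w₂ E₂) (hne : E₁ ≠ E₂) :
    ConnectedOn G ((J \ E₁) \ E₂) :=
  (h₁.isLobe_sdiff hJ hr h₂ hne).connectedOn_sdiff (h₁.connectedOn_sdiff hJ)

end Lobes

section Flips

variable {n : ℕ} {x y : Fin n → Bool} {i j : Fin n}

/-- The vertex of the cube obtained from `x` by switching its `i`-th coordinate. -/
def flip (x : Fin n → Bool) (i : Fin n) : Fin n → Bool := Function.update x i (!x i)

/-- The colour class of `x` in the bipartition of the cube: `true` if `x` has an odd number of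
ones. -/
def parity (x : Fin n → Bool) : Bool := (∑ i, (x i).toNat).bodd

theorem flip_same : flip x i i = !x i := by simp [flip]

theorem flip_of_ne (h : j ≠ i) : flip x i j = x j := by simp [flip, h]

theorem flip_flip : flip (flip x i) i = x := by simp [flip]

theorem flip_ne_self : flip x i ≠ x := by simp [flip]

theorem flip_injective : Function.Injective (flip x) := by
  intro i j h
  by_contra hij
  have := congrFun h i
  simp [flip_same, flip_of_ne hij] at this

theorem flip_comm : flip (flip x i) j = flip (flip x j) i := by
  by_cases hij : i = j
  · rw [hij]
  · simp only [flip, Function.update_of_ne hij, Function.update_of_ne (Ne.symm hij),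
      Function.update_comm hij]

theorem hammingDist_eq_one_iff : hammingDist x y = 1 ↔ ∃ i, y = flip x i := by
  simp only [hammingDist, Finset.card_eq_one, Finset.ext_iff, Finset.mem_filter_univ,
    Finset.mem_singleton, funext_iff]
  refine exists_congr fun i => forall_congr' fun j => ?_
  by_cases hj : j = i
  · subst hj
    rw [flip_same]
    cases x j <;> cases y j <;> simp
  · simp [flip_of_ne hj, hj, eq_comm]

theorem hypercube_adj_iff : (hypercube n).Adj x y ↔ ∃ i, y = flip x i := by
  rw [hypercube, SimpleGraph.fromRel_adj, hammingDist_comm y x, or_self, hammingDist_eq_one_iff,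
    and_iff_right_iff_imp]
  rintro ⟨i, rfl⟩
  exact flip_ne_self.symm

theorem parity_flip : parity (flip x i) = !parity x := by
  have hrest : ∑ j ∈ Finset.univ.erase i, (flip x i j).toNat =
      ∑ j ∈ Finset.univ.erase i, (x j).toNat :=
    Finset.sum_congr rfl fun j hj => by rw [flip_of_ne (Finset.ne_of_mem_erase hj)]
  rw [parity, parity, ← Finset.add_sum_erase _ _ (Finset.mem_univ i),
    ← Finset.add_sum_erase _ (fun j => (x j).toNat) (Finset.mem_univ i), hrest, flip_same]
  cases x i <;> simp

end Flips

section Degrees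

variable {V : Type*} [Finite V] {G : SimpleGraph V} {S T : Set V} {z t : V}

/-- The number of neighbours of `z` in `S`. -/
noncomputable def degreeIn (G : SimpleGraph V) (S : Set V) (z : V) : ℕ :=
  (S ∩ G.neighborSet z).ncard

theorem degreeIn_le (h : ∀ y ∈ S, G.Adj z y → y ∈ T) : degreeIn G S z ≤ degreeIn G T z :=
  Set.ncard_le_ncard (fun y hy => ⟨h y hy.1 hy.2, hy.2⟩) (Set.toFinite _)

theorem degreeIn_le_add_one (h : ∀ y ∈ S, G.Adj z y → y ∈ T ∨ y = t) :
    degreeIn G S z ≤ degreeIn G T z + 1 := by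
  have hsub : S ∩ G.neighborSet z ⊆ insert t (T ∩ G.neighborSet z) := fun y hy =>
    (h y hy.1 hy.2).symm.imp id fun hyT => ⟨hyT, hy.2⟩
  exact (Set.ncard_le_ncard hsub (Set.toFinite _)).trans (Set.ncard_insert_le _ _)

theorem degreeIn_le_add_one_of_subsingleton
    (h : ∀ y ∈ S, G.Adj z y → y ∉ T → ∀ y' ∈ S, G.Adj z y' → y' ∉ T → y = y') :
    degreeIn G S z ≤ degreeIn G T z + 1 := by
  by_cases hout : ∃ t ∈ S, G.Adj z t ∧ t ∉ T
  · obtain ⟨t, ht, e, htT⟩ := hout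
    exact degreeIn_le_add_one (t := t) fun y hy e' =>
      or_iff_not_imp_left.2 fun hyT => h y hy e' hyT t ht e htT
  · push Not at hout
    exact (degreeIn_le hout).trans (Nat.le_succ _)

theorem exists_adj_notMem_of_degreeIn_lt (h : degreeIn G T z < degreeIn G S z) :
    ∃ y ∈ S, y ∉ T ∧ G.Adj z y := by
  contrapose! h
  exact degreeIn_le fun y hy e => by_contra fun hyT => h y hy hyT e

theorem exists_adj_of_degreeIn_pos (h : 1 ≤ degreeIn G S z) : ∃ y ∈ S, G.Adj z y :=
  (Set.ncard_pos (Set.toFinite _)).1 h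

theorem degreeIn_le_sdiff_add_one : degreeIn G S z ≤ degreeIn G (S \ {t}) z + 1 :=
  degreeIn_le_add_one (t := t) fun y hy _ => (em (y = t)).symm.imp (fun hyt => ⟨hy, hyt⟩) id

theorem exists_adj_ne_of_two_le_degreeIn (h : 2 ≤ degreeIn G S z) (t : V) :
    ∃ y ∈ S, y ≠ t ∧ G.Adj z y := by
  have := degreeIn_le_sdiff_add_one (G := G) (S := S) (z := z) (t := t)
  obtain ⟨y, hy, e⟩ := exists_adj_of_degreeIn_pos (show 1 ≤ degreeIn G (S \ {t}) z by omega)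
  exact ⟨y, hy.1, hy.2, e⟩

theorem exists_adj_ne_ne_of_three_le_degreeIn (h : 3 ≤ degreeIn G S z) (t t' : V) :
    ∃ y ∈ S, y ≠ t ∧ y ≠ t' ∧ G.Adj z y := by
  have := degreeIn_le_sdiff_add_one (G := G) (S := S) (z := z) (t := t)
  obtain ⟨y, hy, hyt', e⟩ :=
    exists_adj_ne_of_two_le_degreeIn (show 2 ≤ degreeIn G (S \ {t}) z by omega) t'
  exact ⟨y, hy.1, hy.2, hyt', e⟩

theorem degreeIn_lt_ncard (hz : z ∈ S) : degreeIn G S z < S.ncard := by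
  have hsub : insert z (S ∩ G.neighborSet z) ⊆ S := Set.insert_subset hz Set.inter_subset_left
  have hcard := Set.ncard_le_ncard hsub (Set.toFinite _)
  rwa [Set.ncard_insert_of_notMem fun hz => G.irrefl hz.2] at hcard

theorem exists_mem_ne_ne_of_two_lt_ncard (h : 2 < S.ncard) (t t' : V) :
    ∃ z ∈ S, z ≠ t ∧ z ≠ t' := by
  have hcard : ({t, t'} : Set V).ncard < S.ncard :=
    (Set.ncard_insert_le t {t'}).trans_lt (by rwa [Set.ncard_singleton])
  obtain ⟨z, hz, hz'⟩ := Set.exists_mem_notMem_of_ncard_lt_ncard hcard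
  exact ⟨z, hz, by simpa using hz'⟩

end Degrees

section Subcubes

variable {n : ℕ} {Γ : SimpleGraph (Fin n → Bool)} {S : Set (Fin n → Bool)}
  {a b w x y z : Fin n → Bool} {k e : ℕ}

theorem exists_eq_flip (hΓ : Γ ≤ hypercube n) (h : Γ.Adj x y) : ∃ i, y = flip x i :=
  hypercube_adj_iff.1 (hΓ h)

theorem parity_of_adj (hΓ : Γ ≤ hypercube n) (h : Γ.Adj x y) : parity y = !parity x := by
  obtain ⟨i, rfl⟩ := exists_eq_flip hΓ h
  exact parity_flip

theorem parity_eq_of_common_adj (hΓ : Γ ≤ hypercube n) (h : Γ.Adj x y) (h' : Γ.Adj y z) :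
    parity x = parity z := by
  rw [parity_of_adj hΓ h', parity_of_adj hΓ h, Bool.not_not]

theorem not_adj_of_common_adj (hΓ : Γ ≤ hypercube n) (h : Γ.Adj x y) (h' : Γ.Adj y z) :
    ¬ Γ.Adj x z := by
  intro h''
  have := parity_of_adj hΓ h''
  simp [parity_eq_of_common_adj hΓ h h'] at this

theorem parity_eq_iff_even_length (hΓ : Γ ≤ hypercube n) (p : Γ.Walk a b) :
    parity a = parity b ↔ Even p.length := by
  induction p with
  | nil => simp
  | @cons u v w e p ih =>
    rw [SimpleGraph.Walk.length_cons, Nat.even_add_one, ← ih, parity_of_adj hΓ e]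
    cases parity u <;> cases parity w <;> simp

theorem LongPath.succ_of_parity (hΓ : Γ ≤ hypercube n) (h : LongPath Γ S a b k)
    (hk : ¬ (parity a = parity b ↔ Even k)) : LongPath Γ S a b (k + 1) := by
  obtain ⟨p, hp, hS, hle⟩ := h
  refine ⟨p, hp, hS, lt_of_le_of_ne hle ?_⟩
  rintro rfl
  exact hk (parity_eq_iff_even_length hΓ p)

/-- The subcube through `u` whose free coordinates are those in `I`. -/
def subcube (I : Finset (Fin n)) (u : Fin n → Bool) : Set (Fin n → Bool) :=
  {x | ∀ i, i ∉ I → x i = u i}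

section Subcube

variable {I : Finset (Fin n)} {u : Fin n → Bool} {i j : Fin n}

theorem subcube_eq_of_mem (hx : x ∈ subcube I u) : subcube I u = subcube I x :=
  Set.ext fun _ => forall₂_congr fun i hi => by rw [hx i hi]

theorem flip_mem_subcube_iff (hx : x ∈ subcube I u) : flip x i ∈ subcube I u ↔ i ∈ I := by
  refine ⟨fun h => by_contra fun hi => ?_, fun hi j hj => ?_⟩
  · have := h i hi
    simp [flip_same, hx i hi] at this
  · rw [flip_of_ne (by rintro rfl; exact hj hi), hx j hj]

theorem flip_mem_subcube_flip (hx : x ∈ subcube I u) : flip x i ∈ subcube I (flip u i) := by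
  intro j hj
  by_cases hji : j = i
  · rw [hji, flip_same, flip_same, hx i (hji ▸ hj)]
  · rw [flip_of_ne hji, flip_of_ne hji, hx j hj]

theorem eq_of_flip_mem_subcube (hx : x ∉ subcube I u) (hi : flip x i ∈ subcube I u)
    (hj : flip x j ∈ subcube I u) : i = j := by
  obtain ⟨m, hm, hxm⟩ : ∃ m, m ∉ I ∧ x m ≠ u m := by
    by_contra! hc
    exact hx hc
  have eq_m {i : Fin n} (hi : flip x i ∈ subcube I u) : i = m := by
    by_contra him
    exact hxm ((flip_of_ne (Ne.symm him)).symm.trans (hi m hm))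
  rw [eq_m hi, eq_m hj]

theorem subcube_insert : subcube (insert i I) u = subcube I u ∪ subcube I (flip u i) := by
  ext x
  constructor
  · intro hx
    have hx' {j : Fin n} (hj : j ∉ I) (hji : j ≠ i) : x j = u j := hx j (by simp [hj, hji])
    by_cases hxi : x i = u i
    · refine .inl fun j hj => ?_
      by_cases hji : j = i
      · rw [hji, hxi]
      · exact hx' hj hji
    · refine .inr fun j hj => ?_
      by_cases hji : j = i
      · rw [hji, flip_same, Bool.eq_not.2 hxi]
      · rw [flip_of_ne hji, hx' hj hji]
  · rintro (hx | hx) j hj <;> rw [Finset.mem_insert, not_or] at hj <;> rw [hx j hj.2]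
    exact flip_of_ne hj.1

theorem subcube_empty : subcube ∅ u = {u} := by
  ext x
  simp [subcube, funext_iff]

end Subcube

/-- `S` is the vertex set of a `k`-dimensional subcube all of whose edges belong to `Γ`. -/
def IsFullSubcube (Γ : SimpleGraph (Fin n → Bool)) (S : Set (Fin n → Bool)) (k : ℕ) : Prop :=
  ∃ (I : Finset (Fin n)) (u : Fin n → Bool), I.card = k ∧ S = subcube I u ∧
    ∀ x ∈ S, ∀ i ∈ I, Γ.Adj x (flip x i)

theorem IsFullSubcube.degreeIn_le (hΓ : Γ ≤ hypercube n) (h : IsFullSubcube Γ S k)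
    (hx : x ∈ S) : degreeIn Γ S x ≤ k := by
  obtain ⟨I, u, hI, rfl, -⟩ := h
  have hsub : subcube I u ∩ Γ.neighborSet x ⊆ flip x '' I := by
    rintro y ⟨hy, hxy⟩
    obtain ⟨i, rfl⟩ := exists_eq_flip hΓ hxy
    exact ⟨i, (flip_mem_subcube_iff hx).1 hy, rfl⟩
  calc degreeIn Γ (subcube I u) x ≤ (flip x '' I).ncard :=
        Set.ncard_le_ncard hsub (Set.toFinite _)
    _ ≤ (I : Set (Fin n)).ncard := Set.ncard_image_le (Set.toFinite _)
    _ = k := by rw [Set.ncard_coe_finset, hI]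

theorem IsFullSubcube.eq_of_adj_of_notMem (hΓ : Γ ≤ hypercube n) (h : IsFullSubcube Γ S k)
    (hx : x ∉ S) (hy : y ∈ S) (hz : z ∈ S) (hxy : Γ.Adj x y) (hxz : Γ.Adj x z) : y = z := by
  obtain ⟨I, u, -, rfl, -⟩ := h
  obtain ⟨i, rfl⟩ := exists_eq_flip hΓ hxy
  obtain ⟨j, rfl⟩ := exists_eq_flip hΓ hxz
  rw [eq_of_flip_mem_subcube hx hy hz]

theorem IsFullSubcube.exists_adj_ne (h : IsFullSubcube Γ S k) (hx : x ∈ S) (hk : 2 ≤ k)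
    (t : Fin n → Bool) : ∃ y ∈ S, y ≠ t ∧ Γ.Adj x y := by
  obtain ⟨I, u, hI, rfl, hadj⟩ := h
  obtain ⟨i, hi, j, hj, hij⟩ := Finset.one_lt_card.1 (show 1 < I.card by omega)
  by_cases hit : flip x i = t
  · exact ⟨flip x j, (flip_mem_subcube_iff hx).2 hj,
      fun hjt => hij (flip_injective (hit.trans hjt.symm)), hadj x hx j hj⟩
  · exact ⟨flip x i, (flip_mem_subcube_iff hx).2 hi, hit, hadj x hx i hi⟩

end Subcubes

section Induction

/-- Every nonempty `U ⊆ S` avoiding `a` and `b` has at least two neighbours in `S`: equivalently,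
the graph on `S` becomes 2-connected once `a` and `b` are joined. -/
def RootedTwoConnected {V : Type*} (Γ : SimpleGraph V) (S : Set V) (a b : V) : Prop :=
  ∀ U : Set V, U ⊆ S → U.Nonempty → a ∉ U → b ∉ U →
    ∀ t, ∃ x ∈ U, ∃ y ∈ S, y ∉ U ∧ y ≠ t ∧ Γ.Adj x y

theorem RootedTwoConnected.symm {V : Type*} {Γ : SimpleGraph V} {S : Set V} {a b : V}
    (h : RootedTwoConnected Γ S a b) : RootedTwoConnected Γ S b a :=
  fun U hU hne hbU haU => h U hU hne haU hbU

theorem rootedTwoConnected_insert {V : Type*} {Γ : SimpleGraph V} {E : Set V} {w x : V}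
    (hwE : w ∉ E) (hE : ConnectedOn Γ E)
    (hlink : ∀ z ∈ E, ∀ t, z ≠ t → t ≠ w → Linked Γ (insert w E \ {t}) z w) (hx : x ∈ E) :
    RootedTwoConnected Γ (insert w E) w x := by
  intro U hU ⟨z, hz⟩ hwU hxU t
  have hUE : U ⊆ E := fun z hz => (hU hz).resolve_left fun hzw => hwU (hzw ▸ hz)
  by_cases htw : t = w
  · obtain ⟨p, hp, -, q, hq, hqU, e⟩ := (hE z (hUE hz) x hx).exists_adj_crossing U hz hxU
    exact ⟨p, hp, q, .inr hq, hqU, fun hqt => hwE (htw ▸ hqt ▸ hq), e⟩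
  by_cases hzt : z = t
  · obtain ⟨p, hp, -, q, hq, hqU, e⟩ := (hlink z (hUE hz) x (fun hzx => hxU (hzx ▸ hz))
      fun hxw => hwE (hxw ▸ hx)).exists_adj_crossing U hz hwU
    exact ⟨p, hp, q, hq.1, hqU, fun hqt => hqU (hqt ▸ hzt ▸ hz), e⟩
  · obtain ⟨p, hp, -, q, hq, hqU, e⟩ :=
      (hlink z (hUE hz) t hzt htw).exists_adj_crossing U hz hwU
    exact ⟨p, hp, q, hq.1, hqU, hq.2, e⟩

variable {n : ℕ} {Γ : SimpleGraph (Fin n → Bool)} {S : Set (Fin n → Bool)}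
  {a b w x y : Fin n → Bool} {d e : ℕ}

/-- The hypotheses of the theorem, for the graph induced on `S` and in the form that passes to
pieces of the graph. -/
structure Admissible (Γ : SimpleGraph (Fin n → Bool)) (d : ℕ) (S : Set (Fin n → Bool))
    (a b : Fin n → Bool) : Prop where
  left_mem : a ∈ S
  right_mem : b ∈ S
  ne : a ≠ b
  three_le_ncard : 3 ≤ S.ncard
  rootedTwoConnected : RootedTwoConnected Γ S a b
  le_degreeIn : ∀ z ∈ S, z ≠ a → z ≠ b → d ≤ degreeIn Γ S z

/-- The exceptional case: a full `d`-cube with ends of equal parity. -/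
def IsEvenSubcube (Γ : SimpleGraph (Fin n → Bool)) (d : ℕ) (S : Set (Fin n → Bool))
    (a b : Fin n → Bool) : Prop :=
  IsFullSubcube Γ S d ∧ parity a = parity b

/-- The conclusion of the induction: an `a`–`b` path of length `2 ^ d - 2`, and one of length
`2 ^ d - 1` outside the exceptional case. -/
def NearlySpanned (Γ : SimpleGraph (Fin n → Bool)) (d : ℕ) (S : Set (Fin n → Bool))
    (a b : Fin n → Bool) : Prop :=
  LongPath Γ S a b (2 ^ d - 2) ∧
    (¬ IsEvenSubcube Γ d S a b → LongPath Γ S a b (2 ^ d - 1))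

/-- The induction statement.  A path of length two, whose middle vertex may have degree two and
whose ends are not constrained, has to be set apart when `d = 2`. -/
def LongPathProperty (Γ : SimpleGraph (Fin n → Bool)) (d : ℕ) : Prop :=
  ∀ S a b, Admissible Γ d S a b →
    LongPath Γ S a b (2 ^ d - 2) ∧ (¬ (d = 2 ∧ S.ncard = 3) → NearlySpanned Γ d S a b)

theorem neighbors_eq_sdiff_of_ncard_eq_three (hcard : S.ncard = 3) (hx : x ∈ S)
    (hdeg : 2 ≤ degreeIn Γ S x) : S ∩ Γ.neighborSet x = S \ {x} := by
  refine Set.eq_of_subset_of_ncard_le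
    (fun y hy => ⟨hy.1, fun hyx => Γ.irrefl (hyx ▸ hy.2 : Γ.Adj x x)⟩) ?_ (Set.toFinite _)
  rw [Set.ncard_sdiff_singleton_of_mem hx, hcard]
  exact hdeg

theorem ncard_ne_three (hΓ : Γ ≤ hypercube n) (hx : x ∈ S) (hy : y ∈ S) (hxy : x ≠ y)
    (hdx : 2 ≤ degreeIn Γ S x) (hdy : 2 ≤ degreeIn Γ S y) : S.ncard ≠ 3 := by
  intro hcard
  have adj_of_mem {x z} (hx : x ∈ S) (hdx : 2 ≤ degreeIn Γ S x) (hz : z ∈ S) (hzx : z ≠ x) :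
      Γ.Adj x z := by
    have hmem : z ∈ S ∩ Γ.neighborSet x := by
      rw [neighbors_eq_sdiff_of_ncard_eq_three hcard hx hdx]
      exact ⟨hz, hzx⟩
    exact hmem.2
  obtain ⟨z, hz, hzy, hxz⟩ := exists_adj_ne_of_two_le_degreeIn hdx y
  exact not_adj_of_common_adj hΓ (adj_of_mem hx hdx hy hxy.symm) (adj_of_mem hy hdy hz hzy) hxz

theorem LongPathProperty.nearlySpanned_insert (hΓ : Γ ≤ hypercube n)
    (hpaths : LongPathProperty Γ e) (he : 2 ≤ e) {E : Set (Fin n → Bool)} (hwE : w ∉ E)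
    (hE : ConnectedOn Γ E)
    (hlink : ∀ z ∈ E, ∀ t, z ≠ t → t ≠ w → Linked Γ (insert w E \ {t}) z w)
    (hdeg : ∀ z ∈ E, e ≤ degreeIn Γ (insert w E) z) (hx : x ∈ E) :
    NearlySpanned Γ e (insert w E) w x := by
  have hadm : Admissible Γ e (insert w E) w x :=
    { left_mem := Set.mem_insert w E
      right_mem := .inr hx
      ne := fun hwx => hwE (hwx ▸ hx)
      three_le_ncard := (he.trans (hdeg x hx)).trans_lt (degreeIn_lt_ncard (.inr hx))
      rootedTwoConnected := rootedTwoConnected_insert hwE hE hlink hx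
      le_degreeIn := fun z hz hzw _ => hdeg z (hz.resolve_left hzw) }
  refine (hpaths _ _ _ hadm).2 fun h => ?_
  obtain ⟨y, hy, hyw, e₁⟩ := exists_adj_ne_of_two_le_degreeIn (he.trans (hdeg x hx)) w
  exact ncard_ne_three hΓ (.inr hx) hy e₁.ne (he.trans (hdeg x hx))
    (he.trans (hdeg y (hy.resolve_left hyw))) h.2

end Induction

section Fans

variable {V : Type*} {G : SimpleGraph V} {S : Set V} {a b c s z : V}

theorem exists_adj_linked_sdiff (hzc : z ≠ c) (h : Linked G S z c) :
    ∃ v, G.Adj z v ∧ Linked G (S \ {z}) c v := by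
  obtain ⟨p, hp, hS, -⟩ := h
  cases p with
  | nil => exact absurd rfl hzc
  | cons e p =>
    rw [SimpleGraph.Walk.cons_isPath_iff] at hp
    refine ⟨_, e, LongPath.symm (linked_of_walk p fun x hx => ⟨hS x ?_, ?_⟩)⟩
    · exact SimpleGraph.Walk.support_subset_support_cons p e hx
    · rintro rfl
      exact hp.2 hx

theorem RootedTwoConnected.unseparated (h : RootedTwoConnected G S a b) (hz : z ∈ S)
    (hza : z ≠ a) (hzb : z ≠ b) : Unseparated G (S \ {z}) {a, b} {y | G.Adj z y} := by
  intro s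
  let T : Set V := {x ∈ S | x = z ∨ x ≠ s}
  have hT : T \ {z} ⊆ (S \ {z}) \ {s} := fun x hx => ⟨⟨hx.1.1, hx.2⟩, hx.1.2.resolve_left hx.2⟩
  obtain ⟨c, hc, hzc, hlink⟩ : ∃ c ∈ ({a, b} : Set V), z ≠ c ∧ Linked G T z c := by
    by_contra! hno
    obtain ⟨x, hx, y, hy, hyU, hys, e⟩ := h (component G T z)
      (fun x hx => (component_subset hx).1) ⟨z, mem_component_self ⟨hz, .inl rfl⟩⟩
      (hno a (.inl rfl) hza) (hno b (.inr rfl) hzb) s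
    exact hyU (mem_component_of_adj hx ⟨hy, .inr hys⟩ e)
  obtain ⟨v, e, hv⟩ := exists_adj_linked_sdiff hzc hlink
  exact ⟨c, hc, v, e, hv.mono hT⟩

theorem RootedTwoConnected.longPath_two_and [Finite V] (h : RootedTwoConnected G S a b) (hz : z ∈ S)
    (hza : z ≠ a) (hzb : z ≠ b) :
    LongPath G S a b 2 ∧ (LongPath G S a b 3 ∨ G.Adj a z ∧ G.Adj z b) := by
  obtain ⟨S₁, hS₁, S₂, hS₂, hdisj, y, hy, y', hy', h₁, h₂⟩ :=
    (h.unseparated hz hza hzb).exists_disjoint_linked_mem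
  have through_z {k l : ℕ} (h₁ : LongPath G S₁ a y k) (h₂ : LongPath G S₂ b y' l) :
      LongPath G S a b (k + 1 + (l + 1)) := by
    have hz₂ := LongPath.cons (fun hz => (hS₂ hz).2 rfl) hy' h₂.symm
    refine (h₁.append_edge (G.adj_symm hy) hz₂ ?_).mono ?_
    · rintro x hx (rfl | hx')
      · exact (hS₁ hx).2 rfl
      · exact hdisj x hx hx'
    · rintro x (hx | rfl | hx)
      · exact (hS₁ hx).1
      · exact hz
      · exact (hS₂ hx).1
  refine ⟨through_z h₁ h₂, ?_⟩
  by_cases hay : a = y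
  · by_cases hby : b = y'
    · exact .inr ⟨hay ▸ G.adj_symm hy, hby ▸ hy'⟩
    · exact .inl (through_z h₁ (h₂.one_of_ne hby))
  · exact .inl (through_z (h₁.one_of_ne hay) h₂)

end Fans

section Base

variable {n : ℕ} {Γ : SimpleGraph (Fin n → Bool)} {S : Set (Fin n → Bool)}
  {a b : Fin n → Bool}

theorem eq_or_eq_of_flip_flip_eq {i j k m : Fin n} (hij : i ≠ j)
    (h : flip (flip a k) m = flip (flip a i) j) : k = i ∨ k = j := by
  by_contra! hk
  have hkm := congrFun h k
  rw [flip_of_ne hk.2, flip_of_ne hk.1] at hkm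
  obtain rfl : k = m := by
    by_contra hne
    simp [flip_of_ne hne, flip_same] at hkm
  have hi := congrFun h i
  simp [flip_flip, flip_of_ne hij, flip_same] at hi

theorem isFullSubcube_square {i j : Fin n} (hij : i ≠ j) (hi : Γ.Adj a (flip a i))
    (hj : Γ.Adj a (flip a j)) (hij' : Γ.Adj (flip a i) (flip (flip a i) j))
    (hji' : Γ.Adj (flip a j) (flip (flip a i) j)) :
    IsFullSubcube Γ {a, flip a i, flip a j, flip (flip a i) j} 2 := by
  refine ⟨{i, j}, a, Finset.card_pair hij, ?_, ?_⟩
  · rw [subcube_insert, ← insert_empty_eq j, subcube_insert, subcube_insert]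
    simp only [subcube_empty, Set.union_singleton]
    grind
  · simp only [Set.mem_insert_iff, Set.mem_singleton_iff, Finset.mem_insert,
      Finset.mem_singleton]
    rintro x (rfl | rfl | rfl | rfl) m (rfl | rfl)
    · exact hi
    · exact hj
    · exact flip_flip.symm ▸ hi.symm
    · exact hij'
    · exact flip_comm ▸ hji'
    · exact flip_flip.symm ▸ hj.symm
    · rw [flip_comm (i := m), flip_flip, ← flip_comm]
      exact hji'.symm
    · exact flip_flip.symm ▸ hij'.symm

theorem isFullSubcube_of_forall_adj_ends (hΓ : Γ ≤ hypercube n) (ha : a ∈ S) (hb : b ∈ S)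
    (hab : a ≠ b) (hadj : ∀ z ∈ S, z ≠ a → z ≠ b → Γ.Adj a z ∧ Γ.Adj z b)
    (hcard : 4 ≤ S.ncard) : IsFullSubcube Γ S 2 := by
  obtain ⟨z, hz, z', hz', hzz'⟩ : ∃ z ∈ S \ {a, b}, ∃ z' ∈ S \ {a, b}, z ≠ z' := by
    have hsdiff := Set.le_ncard_sdiff {a, b} S
    rw [Set.ncard_pair hab] at hsdiff
    exact (Set.one_lt_ncard).1 (by omega)
  obtain ⟨e₁, e₂⟩ := hadj z hz.1 (fun h => hz.2 (.inl h)) (fun h => hz.2 (.inr h))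
  obtain ⟨e₃, e₄⟩ := hadj z' hz'.1 (fun h => hz'.2 (.inl h)) (fun h => hz'.2 (.inr h))
  obtain ⟨i, rfl⟩ := exists_eq_flip hΓ e₁
  obtain ⟨j, rfl⟩ := exists_eq_flip hΓ e₃
  have hij : i ≠ j := fun h => hzz' (h ▸ rfl)
  obtain ⟨k, rfl⟩ := exists_eq_flip hΓ e₂
  have hik : i ≠ k := by
    rintro rfl
    exact hab flip_flip.symm
  have common {m : Fin n} (hm : Γ.Adj (flip a m) (flip (flip a i) k)) : m = i ∨ m = k := by
    obtain ⟨p, hp⟩ := exists_eq_flip hΓ hm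
    exact eq_or_eq_of_flip_flip_eq hik hp.symm
  obtain rfl : j = k := (common e₄).resolve_left hij.symm
  convert isFullSubcube_square hij e₁ e₃ e₂ e₄ using 1
  refine Set.Subset.antisymm (fun x hx => ?_) ?_
  · by_cases hxa : x = a
    · exact .inl hxa
    by_cases hxb : x = flip (flip a i) j
    · exact .inr (.inr (.inr hxb))
    obtain ⟨e₅, e₆⟩ := hadj x hx hxa hxb
    obtain ⟨m, rfl⟩ := exists_eq_flip hΓ e₅
    rcases common e₆ with rfl | rfl
    · exact .inr (.inl rfl)
    · exact .inr (.inr (.inl rfl))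
  · rintro x (rfl | rfl | rfl | rfl)
    exacts [ha, hz.1, hz'.1, hb]

theorem longPathProperty_two (hΓ : Γ ≤ hypercube n) : LongPathProperty Γ 2 := by
  intro S a b hadm
  have two_and {z} (hz : z ∈ S) (hza : z ≠ a) (hzb : z ≠ b) :=
    hadm.rootedTwoConnected.longPath_two_and hz hza hzb
  obtain ⟨z, hz, hza, hzb⟩ := exists_mem_ne_ne_of_two_lt_ncard hadm.three_le_ncard a b
  have hpath : LongPath Γ S a b 2 := (two_and hz hza hzb).1
  refine ⟨hpath, fun hcard => ⟨hpath, fun hcube => by_contra fun hno => hcube ?_⟩⟩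
  have hadj : ∀ z ∈ S, z ≠ a → z ≠ b → Γ.Adj a z ∧ Γ.Adj z b := fun z hz hza hzb =>
    (two_and hz hza hzb).2.resolve_left hno
  have hz_adj := hadj z hz hza hzb
  refine ⟨isFullSubcube_of_forall_adj_ends hΓ hadm.left_mem hadm.right_mem hadm.ne hadj ?_,
    parity_eq_of_common_adj hΓ hz_adj.1 hz_adj.2⟩
  exact hadm.three_le_ncard.lt_of_ne' fun h => hcard ⟨rfl, h⟩

end Base

section Doubling

variable {n : ℕ} {Γ : SimpleGraph (Fin n → Bool)} {L R : Set (Fin n → Bool)}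
  {a b u v : Fin n → Bool} {I J : Finset (Fin n)} {e : ℕ}

theorem subset_of_forall_exists_adj (hΓ : Γ ≤ hypercube n) (hI : 2 ≤ I.card)
    (hdisj : Disjoint (subcube I a) (subcube J v))
    (hadj : ∀ z ∈ subcube I a, z ≠ a → ∃ y ∈ subcube J v, Γ.Adj z y) : I ⊆ J := by
  intro j hj
  by_contra hjJ
  obtain ⟨i, hi, hij⟩ := Finset.exists_mem_ne (show 1 < I.card by omega) j
  have out {z : Fin n → Bool} (hz : z ∈ subcube I a) {k : Fin n} (hk : flip z k ∈ subcube J v) :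
      k ∉ J := fun hkJ => Set.disjoint_left.1 hdisj hz
        (by simpa only [flip_flip] using (flip_mem_subcube_iff hk).2 hkJ)
  have hz : flip a i ∈ subcube I a := (flip_mem_subcube_iff fun _ _ => rfl).2 hi
  have hz' : flip (flip a i) j ∈ subcube I a := (flip_mem_subcube_iff hz).2 hj
  have hza : flip (flip a i) j ≠ a := fun h => by
    have := congrFun h i
    simp [flip_of_ne hij, flip_same] at this
  obtain ⟨y, hy, e₁⟩ := hadj _ hz flip_ne_self
  obtain ⟨y', hy', e₂⟩ := hadj _ hz' hza
  obtain ⟨k, rfl⟩ := exists_eq_flip hΓ e₁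
  obtain ⟨m, rfl⟩ := exists_eq_flip hΓ e₂
  have agree : ∀ p ∉ J, flip (flip a i) k p = flip (flip (flip a i) j) m p := fun p hp =>
    (hy p hp).trans (hy' p hp).symm
  have agree_j := agree j hjJ
  have agree_k := agree k (out hz hy)
  have agree_m := agree m (out hz' hy')
  simp only [flip, Function.update_apply] at agree_j agree_k agree_m
  grind

theorem isFullSubcube_union_flip {k : Fin n} (hk : k ∉ I)
    (hu : ∀ x ∈ subcube I u, ∀ i ∈ I, Γ.Adj x (flip x i))
    (hv : ∀ x ∈ subcube I (flip u k), ∀ i ∈ I, Γ.Adj x (flip x i))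
    (hcross : ∀ x ∈ subcube I u, Γ.Adj x (flip x k)) :
    IsFullSubcube Γ (subcube I u ∪ subcube I (flip u k)) (I.card + 1) := by
  refine ⟨insert k I, u, Finset.card_insert_of_notMem hk, subcube_insert.symm, ?_⟩
  rintro x (hx | hx) i hi <;> rcases Finset.mem_insert.1 hi with rfl | hi
  · exact hcross x hx
  · exact hu x hx i hi
  · have hflip := flip_mem_subcube_flip (i := i) hx
    rw [flip_flip] at hflip
    simpa only [flip_flip] using (hcross _ hflip).symm
  · exact hv x hx i hi

theorem isFullSubcube_union (hΓ : Γ ≤ hypercube n) (he : 2 ≤ e) (hL : IsFullSubcube Γ L e)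
    (hR : IsFullSubcube Γ R e) (hdisj : Disjoint L R) (ha : a ∈ L) (hb : b ∈ R)
    (hLR : ∀ z ∈ L, z ≠ a → ∃ y ∈ R, Γ.Adj z y) (hRL : ∀ z ∈ R, z ≠ b → ∃ y ∈ L, Γ.Adj z y)
    (hparity : parity a = parity b) : IsFullSubcube Γ (L ∪ R) (e + 1) := by
  obtain ⟨I, u, hI, rfl, hLadj⟩ := hL
  obtain ⟨J, v, hJ, rfl, hRadj⟩ := hR
  obtain rfl : I = J := by
    refine Finset.eq_of_subset_of_card_le ?_ (hJ.trans hI.symm).le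
    rw [subcube_eq_of_mem ha] at hdisj hLR
    exact subset_of_forall_exists_adj hΓ (hI ▸ he) hdisj hLR
  obtain ⟨z, hz, hza, -⟩ :=
    IsFullSubcube.exists_adj_ne ⟨I, u, hI, rfl, hLadj⟩ ha he a
  obtain ⟨y, hy, e₁⟩ := hLR z hz hza
  obtain ⟨k, rfl⟩ := exists_eq_flip hΓ e₁
  have hkI : k ∉ I := fun hk => Set.disjoint_left.1 hdisj ((flip_mem_subcube_iff hz).2 hk) hy
  have flip_mem_R {x} (hx : x ∈ subcube I u) : flip x k ∈ subcube I v :=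
    subcube_eq_of_mem hy ▸ flip_mem_subcube_flip (subcube_eq_of_mem hz ▸ hx)
  have hcross : ∀ x ∈ subcube I u, Γ.Adj x (flip x k) := by
    intro x hx
    by_cases hxa : x = a
    · have hxb : flip x k ≠ b := by
        rintro rfl
        simp [parity_flip, hxa] at hparity
      obtain ⟨y, hy, e₂⟩ := hRL _ (flip_mem_R hx) hxb
      obtain ⟨m, rfl⟩ := exists_eq_flip hΓ e₂
      have hmk : m = k := eq_of_flip_mem_subcube
        (fun h => Set.disjoint_left.1 hdisj h (flip_mem_R hx)) hy (flip_flip.symm ▸ hx)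
      rw [hmk, flip_flip] at e₂
      exact e₂.symm
    · obtain ⟨y, hy, e₂⟩ := hLR x hx hxa
      obtain ⟨m, rfl⟩ := exists_eq_flip hΓ e₂
      rwa [eq_of_flip_mem_subcube (Set.disjoint_left.1 hdisj hx) hy (flip_mem_R hx)] at e₂
  rw [subcube_eq_of_mem hz] at hLadj hcross ⊢
  rw [subcube_eq_of_mem hy] at hRadj ⊢
  exact hI ▸ isFullSubcube_union_flip hkI hLadj hRadj hcross

end Doubling

section TwoSides

variable {n : ℕ} {Γ : SimpleGraph (Fin n → Bool)} {e : ℕ} {P D Q E T : Set (Fin n → Bool)}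
  {a b c w x x' y z : Fin n → Bool}

theorem NearlySpanned.of_longPath {d : ℕ} {S : Set (Fin n → Bool)}
    (h : LongPath Γ S a b (2 ^ d - 1)) : NearlySpanned Γ d S a b :=
  ⟨h.mono_length (by omega), fun _ => h⟩

theorem NearlySpanned.symm {d : ℕ} {S : Set (Fin n → Bool)} (h : NearlySpanned Γ d S a b) :
    NearlySpanned Γ d S b a :=
  ⟨h.1.symm, fun hn => (h.2 fun hc => hn ⟨hc.1, hc.2.symm⟩).symm⟩

theorem IsFullSubcube.exists_mem_adj_ne (h : IsFullSubcube Γ (insert c D) e) (he : 2 ≤ e)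
    (t : Fin n → Bool) : ∃ z ∈ D, z ≠ t ∧ Γ.Adj c z := by
  obtain ⟨z, hz, hzt, e₁⟩ := h.exists_adj_ne (Set.mem_insert c D) he t
  exact ⟨z, hz.resolve_left e₁.ne', hzt, e₁⟩

/-- One half `P ∪ D` of a split of the graph: `P` leads from the end `a` to the vertex `c` at
which the piece `D` is attached, and `T` is the other half, which a path enters from `D`. -/
structure IsSide (Γ : SimpleGraph (Fin n → Bool)) (e : ℕ) (T P D : Set (Fin n → Bool))
    (a c : Fin n → Bool) : Prop where
  linked : Linked Γ P a c
  notMem : ∀ z ∈ P, z ∉ D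
  eq_of_eq : a = c → ∀ z ∈ P, z = a
  nearlySpanned : ∀ x ∈ D, NearlySpanned Γ e (insert c D) c x
  exists_adj : IsFullSubcube Γ (insert c D) e → ∀ z ∈ D, ∃ y ∈ T, Γ.Adj z y

namespace IsSide

theorem insert_subset (hL : IsSide Γ e T P D a c) : insert c D ⊆ P ∪ D :=
  Set.insert_subset (.inl hL.linked.right_mem) Set.subset_union_right

theorem eq_insert (hL : IsSide Γ e T P D a c) (hac : a = c) : P ∪ D = insert c D := by
  refine hL.insert_subset.antisymm' ?_
  rintro z (hz | hz)
  · exact .inl ((hL.eq_of_eq hac z hz).trans hac)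
  · exact .inr hz

theorem mem_of_ne (hL : IsSide Γ e T P D a c) (hac : a = c) (hz : z ∈ P ∪ D) (hza : z ≠ a) :
    z ∈ D :=
  hz.resolve_left fun hzP => hza (hL.eq_of_eq hac z hzP)

section

variable (hL : IsSide Γ e (Q ∪ E) P D a c) (hR : IsSide Γ e (P ∪ D) Q E b w)
  (hdisj : Disjoint (P ∪ D) (Q ∪ E))

include hL hR hdisj

theorem longPath_union {k l k' l' m : ℕ} (h₁ : LongPath Γ P a c k)
    (h₂ : LongPath Γ (insert c D) c x l) (hadj : Γ.Adj x x')
    (h₃ : LongPath Γ (insert w E) w x' l') (h₄ : LongPath Γ Q b w k')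
    (hm : m ≤ k + l + 1 + (k' + l')) : LongPath Γ (P ∪ D ∪ (Q ∪ E)) a b m :=
  ((h₁.append_insert h₂ hL.notMem).append_edge hadj (h₄.append_insert h₃ hR.notMem).symm
    fun _ hz hz' => Set.disjoint_left.1 hdisj hz hz').mono_length hm

theorem longPath_union_of_not_even (hx : x ∈ D) (hx' : x' ∈ E) (hadj : Γ.Adj x x')
    (he : 2 ≤ e) (hLx : ¬ IsEvenSubcube Γ e (insert c D) c x)
    (hRx' : ¬ IsEvenSubcube Γ e (insert w E) w x') :
    LongPath Γ (P ∪ D ∪ (Q ∪ E)) a b (2 ^ (e + 1) - 1) := by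
  have hpow := Nat.pow_le_pow_right two_pos he
  exact hL.longPath_union hR hdisj hL.linked ((hL.nearlySpanned x hx).2 hLx) hadj
    ((hR.nearlySpanned x' hx').2 hRx') hR.linked (by omega)

theorem longPath_union_of_ne (hx : x ∈ D) (hx' : x' ∈ E) (hadj : Γ.Adj x x') (he : 2 ≤ e)
    (hbw : b ≠ w) (hnot : ¬ (IsEvenSubcube Γ e (insert c D) c x ∧
      IsEvenSubcube Γ e (insert w E) w x')) :
    LongPath Γ (P ∪ D ∪ (Q ∪ E)) a b (2 ^ (e + 1) - 1) := by
  have hpow := Nat.pow_le_pow_right two_pos he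
  by_cases hLx : IsEvenSubcube Γ e (insert c D) c x
  · exact hL.longPath_union hR hdisj hL.linked (hL.nearlySpanned x hx).1 hadj
      ((hR.nearlySpanned x' hx').2 fun hRx' => hnot ⟨hLx, hRx'⟩) (hR.linked.one_of_ne hbw)
      (by omega)
  · exact hL.longPath_union hR hdisj hL.linked ((hL.nearlySpanned x hx).2 hLx) hadj
      (hR.nearlySpanned x' hx').1 (hR.linked.one_of_ne hbw) (by omega)

theorem longPath_of_eq_of_ne (hΓ : Γ ≤ hypercube n) (hx : x ∈ D) (hx' : x' ∈ E)
    (hadj : Γ.Adj x x') (he : 2 ≤ e) (hac : a = c) (hbw : b ≠ w) :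
    LongPath Γ (P ∪ D ∪ (Q ∪ E)) a b (2 ^ (e + 1) - 1) := by
  by_cases hnot : IsEvenSubcube Γ e (insert c D) c x ∧ IsEvenSubcube Γ e (insert w E) w x'
  swap
  · exact hL.longPath_union_of_ne hR hdisj hx hx' hadj he hbw hnot
  obtain ⟨⟨-, hcx⟩, hRcube, hwx'⟩ := hnot
  obtain ⟨y', hy', -, hwy'⟩ := hRcube.exists_mem_adj_ne he w
  obtain ⟨y, hy, hyy'⟩ := hR.exists_adj hRcube y' hy'
  have hparity_w : parity w = !parity c := by rw [hwx', parity_of_adj hΓ hadj, hcx]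
  have hya : y ≠ a := by
    rintro rfl
    have := parity_eq_of_common_adj hΓ hwy' hyy'
    simp [hparity_w, hac] at this
  refine hL.longPath_union_of_ne hR hdisj (hL.mem_of_ne hac hy hya) hy' hyy'.symm he hbw ?_
  rintro ⟨-, -, hwy⟩
  simp [parity_of_adj hΓ hwy'] at hwy

theorem longPath_of_both_even (hΓ : Γ ≤ hypercube n) (hadj : Γ.Adj x x') (he : 2 ≤ e)
    (hbw : b = w) (hLx : IsEvenSubcube Γ e (insert c D) c x)
    (hwx' : parity w = parity x') :
    LongPath Γ (P ∪ D ∪ (Q ∪ E)) a b (2 ^ (e + 1) - 1) := by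
  obtain ⟨hLcube, hcx⟩ := hLx
  obtain ⟨z, hz, -, hcz⟩ := hLcube.exists_mem_adj_ne he c
  obtain ⟨z', hz', hzz'⟩ := hL.exists_adj hLcube z hz
  have hparity_w : parity w = !parity z' := by
    rw [hwx', parity_of_adj hΓ hadj, ← hcx, parity_eq_of_common_adj hΓ hcz hzz']
  have hz'b : z' ≠ b := by
    rintro rfl
    simp [hbw] at hparity_w
  refine hL.longPath_union_of_not_even hR hdisj hz (hR.mem_of_ne hbw hz' hz'b) hzz' he ?_ ?_
  · rintro ⟨-, h⟩
    simp [parity_of_adj hΓ hcz] at h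
  · rintro ⟨-, h⟩
    simp [h] at hparity_w

theorem isFullSubcube_union (hΓ : Γ ≤ hypercube n) (he : 2 ≤ e) (hac : a = c) (hbw : b = w)
    (hLcube : IsFullSubcube Γ (insert c D) e) (hRcube : IsFullSubcube Γ (insert w E) e)
    (hab : parity a = parity b) : IsFullSubcube Γ (P ∪ D ∪ (Q ∪ E)) (e + 1) := by
  have hLexists := hL.exists_adj hLcube
  have hRexists := hR.exists_adj hRcube
  rw [hL.eq_insert hac] at hRexists hdisj ⊢
  rw [hR.eq_insert hbw] at hLexists hdisj ⊢
  exact HypercubePath.isFullSubcube_union hΓ he hLcube hRcube hdisj (.inl hac) (.inl hbw)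
    (fun z hz hza => hLexists z (hz.resolve_left (hac ▸ hza)))
    (fun z hz hzb => hRexists z (hz.resolve_left (hbw ▸ hzb))) hab

theorem nearlySpanned_of_even_left (hΓ : Γ ≤ hypercube n) (hx : x ∈ D) (hx' : x' ∈ E)
    (hadj : Γ.Adj x x') (he : 2 ≤ e) (hac : a = c) (hbw : b = w)
    (hLcube : IsFullSubcube Γ (insert c D) e)
    (hRx' : ¬ IsEvenSubcube Γ e (insert w E) w x') :
    NearlySpanned Γ (e + 1) (P ∪ D ∪ (Q ∪ E)) a b := by
  have hpow := Nat.pow_le_pow_right two_pos he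
  have hshort : LongPath Γ (P ∪ D ∪ (Q ∪ E)) a b (2 ^ (e + 1) - 2) :=
    hL.longPath_union hR hdisj hL.linked (hL.nearlySpanned x hx).1 hadj
      ((hR.nearlySpanned x' hx').2 hRx') hR.linked (by omega)
  refine ⟨hshort, fun hcube => ?_⟩
  by_cases hab : parity a = parity b
  swap
  · have heven : Even (2 ^ (e + 1) - 2) := ⟨2 ^ e - 1, by omega⟩
    exact (hshort.succ_of_parity hΓ (by simp [hab, heven])).mono_length (by omega)
  have hb : b ∉ insert c D := fun hb =>
    Set.disjoint_left.1 hdisj (hL.insert_subset hb) (.inl hR.linked.left_mem)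
  obtain ⟨t, ht⟩ : ∃ t, ∀ z ∈ insert c D, Γ.Adj b z → z = t := by
    by_cases hex : ∃ t ∈ insert c D, Γ.Adj b t
    · obtain ⟨t, ht, hbt⟩ := hex
      exact ⟨t, fun z hz hbz => hLcube.eq_of_adj_of_notMem hΓ hb hz ht hbz hbt⟩
    · exact ⟨b, fun z hz hbz => absurd ⟨z, hz, hbz⟩ hex⟩
  obtain ⟨z, hz, hzt, hcz⟩ := hLcube.exists_mem_adj_ne he t
  obtain ⟨z', hz', hzz'⟩ := hL.exists_adj hLcube z hz
  have hz'b : z' ≠ b := by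
    rintro rfl
    exact hzt (ht z (.inr hz) hzz'.symm)
  refine hL.longPath_union_of_not_even hR hdisj hz (hR.mem_of_ne hbw hz' hz'b) hzz' he ?_ ?_
  · rintro ⟨-, h⟩
    simp [parity_of_adj hΓ hcz] at h
  · rintro ⟨hRcube, -⟩
    exact hcube ⟨hL.isFullSubcube_union hR hdisj hΓ he hac hbw hLcube hRcube hab, hab⟩

theorem nearlySpanned_union (hΓ : Γ ≤ hypercube n) (he : 2 ≤ e) (hx : x ∈ D) (hx' : x' ∈ E)
    (hadj : Γ.Adj x x') : NearlySpanned Γ (e + 1) (P ∪ D ∪ (Q ∪ E)) a b := by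
  have hpow := Nat.pow_le_pow_right two_pos he
  by_cases hac : a = c <;> by_cases hbw : b = w
  · by_cases hLx : IsEvenSubcube Γ e (insert c D) c x <;>
      by_cases hRx' : IsEvenSubcube Γ e (insert w E) w x'
    · exact .of_longPath (hL.longPath_of_both_even hR hdisj hΓ hadj he hbw hLx hRx'.2)
    · exact hL.nearlySpanned_of_even_left hR hdisj hΓ hx hx' hadj he hac hbw hLx.1 hRx'
    · rw [Set.union_comm]
      exact (hR.nearlySpanned_of_even_left hL hdisj.symm hΓ hx' hx hadj.symm he hbw hac hRx'.1
        hLx).symm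
    · exact .of_longPath (hL.longPath_union_of_not_even hR hdisj hx hx' hadj he hLx hRx')
  · exact .of_longPath (hL.longPath_of_eq_of_ne hR hdisj hΓ hx hx' hadj he hac hbw)
  · rw [Set.union_comm]
    exact (NearlySpanned.of_longPath (hR.longPath_of_eq_of_ne hL hdisj.symm hΓ hx' hx
      hadj.symm he hbw hac)).symm
  · exact .of_longPath (hL.longPath_union hR hdisj (hL.linked.one_of_ne hac)
      (hL.nearlySpanned x hx).1 hadj (hR.nearlySpanned x' hx').1 (hR.linked.one_of_ne hbw)
      (by omega))

end

end IsSide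

end TwoSides

section Splits

/-- Three-connectedness of `S` relative to the ends `a` and `b`: a set of inner vertices, not
all of them, has neighbours outside itself besides any two prescribed vertices `u` and `v`. -/
def RootedThreeConnected {V : Type*} (Γ : SimpleGraph V) (S : Set V) (a b : V) : Prop :=
  ∀ U ⊆ S, U.Nonempty → a ∉ U → b ∉ U → (∃ z ∈ S, z ∉ U ∧ z ≠ a ∧ z ≠ b) →
    ∀ u v, ∃ x ∈ U, ∃ y ∈ S, y ∉ U ∧ y ≠ u ∧ y ≠ v ∧ Γ.Adj x y

/-- A partition of a graph with ends `a` and `b` into `P`, `D` and `J`, obtained by cutting it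
along one direction of the cube: `P ∪ D` is the side of `a`, of which `insert c D` is an end block
with cut vertex `c`, and `J` is the side of `b`.  Every vertex has at most one neighbour across the
cut, except possibly `b` and the vertices of `P`. -/
structure IsSplit {n : ℕ} (Γ : SimpleGraph (Fin n → Bool)) (e : ℕ) (a b : Fin n → Bool)
    (P D J : Set (Fin n → Bool)) (c : Fin n → Bool) : Prop where
  rootedThreeConnected : RootedThreeConnected Γ (P ∪ D ∪ J) a b
  lt_degreeIn : ∀ z ∈ P ∪ D ∪ J, z ≠ a → z ≠ b → e < degreeIn Γ (P ∪ D ∪ J) z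
  notMem_D : ∀ x ∈ P, x ∉ D
  notMem_J : ∀ x ∈ P ∪ D, x ∉ J
  left_mem : a ∈ P
  cut_mem : c ∈ P
  right_mem : b ∈ J
  connectedOn_P : ConnectedOn Γ P
  rootedTwoConnected_P : RootedTwoConnected Γ P a c
  nonempty_D : D.Nonempty
  connectedOn_D : ConnectedOn Γ D
  linked_cut : ∀ z ∈ D, ∀ t, z ≠ t → t ≠ c → Linked Γ (insert c D \ {t}) z c
  eq_cut_of_adj : ∀ x ∈ D, ∀ y ∈ P, Γ.Adj x y → y = c
  eq_of_adj_J : ∀ x ∈ D, ∀ y ∈ J, Γ.Adj x y → ∀ y' ∈ J, Γ.Adj x y' → y = y'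
  connectedOn_J : ConnectedOn Γ J
  connectedOn_J_sdiff : ConnectedOn Γ (J \ {b})
  nonempty_J_sdiff : (J \ {b}).Nonempty
  eq_of_adj_PD : ∀ x ∈ J, x ≠ b →
    ∀ y ∈ P ∪ D, Γ.Adj x y → ∀ y' ∈ P ∪ D, Γ.Adj x y' → y = y'

namespace IsSplit

variable {n : ℕ} {Γ : SimpleGraph (Fin n → Bool)} {e : ℕ} {P D J E : Set (Fin n → Bool)}
  {a b c w x x' y z : Fin n → Bool}

section

variable (h : IsSplit Γ e a b P D J c)

include h

theorem cut_notMem_D : c ∉ D := h.notMem_D c h.cut_mem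

theorem ne_left_of_mem_D (hz : z ∈ D) : z ≠ a := fun hza => h.notMem_D a h.left_mem (hza ▸ hz)

theorem ne_right_of_mem_D (hz : z ∈ D) : z ≠ b := fun hzb =>
  h.notMem_J z (.inr hz) (hzb ▸ h.right_mem)

theorem ne_left_of_mem_J (hz : z ∈ J) : z ≠ a := fun hza =>
  h.notMem_J a (.inl h.left_mem) (hza ▸ hz)

theorem lt_degreeIn_of_mem_D (hz : z ∈ D) : e < degreeIn Γ (P ∪ D ∪ J) z :=
  h.lt_degreeIn z (.inl (.inr hz)) (h.ne_left_of_mem_D hz) (h.ne_right_of_mem_D hz)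

theorem lt_degreeIn_of_mem_J (hz : z ∈ J) (hzb : z ≠ b) : e < degreeIn Γ (P ∪ D ∪ J) z :=
  h.lt_degreeIn z (.inr hz) (h.ne_left_of_mem_J hz) hzb

theorem mem_J_of_adj (hz : z ∈ D) (hy : y ∈ P ∪ D ∪ J) (e : Γ.Adj z y) (hn : y ∉ insert c D) :
    y ∈ J := by
  rcases hy with (hy | hy) | hy
  · exact absurd (.inl (h.eq_cut_of_adj z hz y hy e)) hn
  · exact absurd (.inr hy) hn
  · exact hy

theorem le_degreeIn_insert_cut (hz : z ∈ D) : e ≤ degreeIn Γ (insert c D) z :=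
  Nat.le_of_lt_succ <| (h.lt_degreeIn_of_mem_D hz).trans_le <|
    degreeIn_le_add_one_of_subsingleton fun y hy e₁ hn y' hy' e₁' hn' =>
      h.eq_of_adj_J z hz y (h.mem_J_of_adj hz hy e₁ hn) e₁ y' (h.mem_J_of_adj hz hy' e₁' hn') e₁'

theorem le_degreeIn_of_mem_J {T : Set (Fin n → Bool)} (hz : z ∈ J) (hzb : z ≠ b)
    (hT : ∀ y ∈ J, Γ.Adj z y → y ∈ T) : e ≤ degreeIn Γ T z :=
  Nat.le_of_lt_succ <| (h.lt_degreeIn_of_mem_J hz hzb).trans_le <|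
    degreeIn_le_add_one_of_subsingleton fun y hy hzy hyT y' hy' hzy' hyT' =>
      h.eq_of_adj_PD z hz hzb y (hy.resolve_right fun hyJ => hyT (hT y hyJ hzy)) hzy
        y' (hy'.resolve_right fun hyJ => hyT' (hT y' hyJ hzy')) hzy'

theorem exists_adj_J_of_isFullSubcube (hΓ : Γ ≤ hypercube n)
    (hcube : IsFullSubcube Γ (insert c D) e) (hz : z ∈ D) : ∃ y ∈ J, Γ.Adj z y := by
  obtain ⟨y, hy, hn, hzy⟩ := exists_adj_notMem_of_degreeIn_lt
    ((hcube.degreeIn_le hΓ (.inr hz)).trans_lt (h.lt_degreeIn_of_mem_D hz))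
  exact ⟨y, h.mem_J_of_adj hz hy hzy hn, hzy⟩

theorem eq_left_of_left_eq_cut (hac : a = c) (hz : z ∈ P) : z = a := by
  by_contra hza
  obtain ⟨x, -, y, hy, hn, hya, -⟩ := h.rootedTwoConnected_P (P \ {a}) Set.sdiff_subset
    ⟨z, hz, hza⟩ (fun ha => ha.2 rfl) (fun hc => hc.2 hac.symm) a
  exact hn ⟨hy, hya⟩

theorem isSide_left (hΓ : Γ ≤ hypercube n) (he : 2 ≤ e) (hpaths : LongPathProperty Γ e) :
    IsSide Γ e J P D a c where
  linked := h.connectedOn_P a h.left_mem c h.cut_mem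
  notMem := h.notMem_D
  eq_of_eq hac _ hz := h.eq_left_of_left_eq_cut hac hz
  nearlySpanned _ hx := hpaths.nearlySpanned_insert hΓ he h.cut_notMem_D h.connectedOn_D
    h.linked_cut (fun _ hz => h.le_degreeIn_insert_cut hz) hx
  exists_adj hcube _ hz := h.exists_adj_J_of_isFullSubcube hΓ hcube hz

end

section

variable (h : IsSplit Γ e a b P D J c) (hE : IsMinLobe Γ J b w E)

include h hE

theorem le_degreeIn_insert_attach (hz : z ∈ E) : e ≤ degreeIn Γ (insert w E) z :=
  h.le_degreeIn_of_mem_J (hE.subset hz) (hE.ne_root hz) fun _ => hE.mem_insert_of_adj hz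

theorem exists_adj_PD_of_isFullSubcube (hΓ : Γ ≤ hypercube n)
    (hcube : IsFullSubcube Γ (insert w E) e) (hz : z ∈ E) : ∃ y ∈ P ∪ D, Γ.Adj z y := by
  obtain ⟨y, hy, hn, hzy⟩ := exists_adj_notMem_of_degreeIn_lt
    ((hcube.degreeIn_le hΓ (.inr hz)).trans_lt
      (h.lt_degreeIn_of_mem_J (hE.subset hz) (hE.ne_root hz)))
  exact ⟨y, hy.resolve_right fun hyJ => hn (hE.mem_insert_of_adj hz hyJ hzy), hzy⟩

theorem exists_adj_PD_ne (t : Fin n → Bool) : ∃ x ∈ E, ∃ y ∈ P ∪ D, y ≠ t ∧ Γ.Adj x y := by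
  obtain ⟨z, hz⟩ := h.nonempty_D
  obtain ⟨x, hx, y, hy, hyE, hyw, hyt, hxy⟩ := h.rootedThreeConnected E
    (hE.subset.trans Set.subset_union_right) hE.nonempty
    (fun haE => h.ne_left_of_mem_J (hE.subset haE) rfl) hE.root_notMem
    ⟨z, .inl (.inr hz), fun hzE => h.notMem_J z (.inr hz) (hE.subset hzE),
      h.ne_left_of_mem_D hz, h.ne_right_of_mem_D hz⟩ w t
  exact ⟨x, hx, y, hy.resolve_right fun hyJ =>
    (hE.mem_insert_of_adj hx hyJ hxy).elim hyw hyE, hyt, hxy⟩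

theorem mem_of_root_eq_attach (hbw : b = w) (hz : z ∈ J) (hzb : z ≠ b) : z ∈ E := by
  obtain ⟨y, hy⟩ := hE.nonempty
  refine (h.connectedOn_J_sdiff y ⟨hE.subset hy, hE.ne_root hy⟩ z ⟨hz, hzb⟩).mem_of_closed E hy ?_
  exact fun p hp _ q hq hpq =>
    (hE.closed p hp q hq.1 hpq).resolve_right fun hqw => hq.2 (hqw.trans hbw.symm)

theorem nearlySpanned_insert_attach (hΓ : Γ ≤ hypercube n) (he : 2 ≤ e)
    (hpaths : LongPathProperty Γ e) (hx : x ∈ E) : NearlySpanned Γ e (insert w E) w x :=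
  hpaths.nearlySpanned_insert hΓ he hE.attach_notMem hE.connectedOn
    (fun _ hz _ => hE.linked_attach h.connectedOn_J h.right_mem hz)
    (fun _ hz => h.le_degreeIn_insert_attach hE hz) hx

theorem isSide_right (hΓ : Γ ≤ hypercube n) (he : 2 ≤ e) (hpaths : LongPathProperty Γ e) :
    IsSide Γ e (P ∪ D) (J \ E) E b w where
  linked := hE.linked_attach_sdiff h.connectedOn_J h.right_mem hE.root_notMem
  notMem _ hz := hz.2
  eq_of_eq hbw z hz := by
    by_contra hzb
    exact hz.2 (h.mem_of_root_eq_attach hE hbw hz.1 hzb)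
  nearlySpanned _ := h.nearlySpanned_insert_attach hE hΓ he hpaths
  exists_adj hcube _ hz := h.exists_adj_PD_of_isFullSubcube hE hΓ hcube hz

theorem nearlySpanned_of_adj (hΓ : Γ ≤ hypercube n) (he : 2 ≤ e)
    (hpaths : LongPathProperty Γ e) (hx : x ∈ D) (hx' : x' ∈ E) (hadj : Γ.Adj x x') :
    NearlySpanned Γ (e + 1) (P ∪ D ∪ J) a b := by
  have hJ : J \ E ∪ E = J := Set.sdiff_union_of_subset hE.subset
  have hleft : IsSide Γ e (J \ E ∪ E) P D a c := by
    rw [hJ]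
    exact h.isSide_left hΓ he hpaths
  have hdisj : Disjoint (P ∪ D) (J \ E ∪ E) := by
    rw [hJ]
    exact Set.disjoint_left.2 h.notMem_J
  have hspan := hleft.nearlySpanned_union (h.isSide_right hE hΓ he hpaths) hdisj hΓ he hx hx' hadj
  rwa [hJ] at hspan

end

end IsSplit

end Splits

section SeparatedSets

variable {V : Type*} {G : SimpleGraph V} {J D X : Set V} {b s s' z : V}

/-- The vertices of `J` which `s` separates from `b`, including `s` itself. -/
def separated (G : SimpleGraph V) (J : Set V) (b s : V) : Set V :=
  insert s {z ∈ J | ¬ Linked G (J \ {s}) z b}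

theorem linked_sdiff_of_not_linked (hs' : ¬ Linked G (J \ {s}) s' b)
    (hz : Linked G (J \ {s}) z b) : Linked G (J \ {s'}) z b := by
  refine (linked_component hz.symm).symm.mono fun x hx => ⟨(component_subset hx).1, ?_⟩
  rintro rfl
  exact hs' (LongPath.symm hx)

theorem linked_sdiff_separator (hJ : ConnectedOn G J) (hb : b ∈ J) (hs : s ∈ J) (hne : s' ≠ s)
    (hs' : ¬ Linked G (J \ {s}) s' b) : Linked G (J \ {s'}) s b := by
  by_cases hsb : s = b
  · subst hsb
    exact .refl ⟨hs, hne.symm⟩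
  obtain ⟨x, hx, -, y, hy, hyb, hxy⟩ := (hJ b hb s hs).exists_adj_crossing
    (component G (J \ {s}) b) (mem_component_self ⟨hb, fun hbs => hsb hbs.symm⟩)
    fun hsK => (component_subset hsK).2 rfl
  have hys : y = s := by
    by_contra hys
    exact hyb (mem_component_of_adj hx ⟨hy, hys⟩ hxy)
  subst hys
  exact ((linked_sdiff_of_not_linked hs' (LongPath.symm hx)).symm.trans_adj hxy
    ⟨hy, hne.symm⟩).symm

theorem separated_ssubset (hJ : ConnectedOn G J) (hb : b ∈ J) (hs : s ∈ J) (hne : s' ≠ s)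
    (hs' : s' ∈ separated G J b s) : separated G J b s' ⊂ separated G J b s := by
  have hs'J := hs'.resolve_left hne
  refine ⟨?_, fun hsub => ?_⟩
  · rintro z (rfl | ⟨hz, hzb⟩)
    · exact hs'
    · exact .inr ⟨hz, fun hzb' => hzb (linked_sdiff_of_not_linked hs'J.2 hzb')⟩
  · rcases hsub (.inl rfl) with hss' | ⟨-, hsb⟩
    · exact hne hss'.symm
    · exact hsb (linked_sdiff_separator hJ hb hs hne hs'J.2)

theorem exists_innermost_separator [Finite V] (hJ : ConnectedOn G J) (hb : b ∈ J) (hX : X ⊆ J) :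
    ∃ s ∈ J, X ⊆ separated G J b s ∧
      ∀ s' ∈ separated G J b s, s' ≠ s → ∃ x ∈ X, Linked G (J \ {s'}) x b := by
  obtain ⟨s, ⟨hs, hXs⟩, hmin⟩ := Set.exists_min_image {s ∈ J | X ⊆ separated G J b s}
    (fun s => (separated G J b s).ncard) (Set.toFinite _)
    ⟨b, hb, fun x hx => .inr ⟨hX hx, fun hxb => hxb.right_mem.2 rfl⟩⟩
  refine ⟨s, hs, hXs, fun s' hs' hne => ?_⟩
  by_contra! hno
  exact (hmin s' ⟨(hs'.resolve_left hne).1, fun x hx => .inr ⟨hX hx, hno x hx⟩⟩).not_gt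
    (Set.ncard_lt_ncard (separated_ssubset hJ hb hs hne hs') (Set.toFinite _))

/-- The vertices of `J` with a neighbour in `D`. -/
def attachments (G : SimpleGraph V) (D J : Set V) : Set V := {y ∈ J | ∃ x ∈ D, G.Adj x y}

/-- No end block of `J`, seen from `b`, contains a neighbour of `D` besides its cut vertex. -/
def LobesAvoid (G : SimpleGraph V) (D J : Set V) (b : V) : Prop :=
  ∀ w E, IsMinLobe G J b w E → ∀ x ∈ E, x ∉ attachments G D J

end SeparatedSets

section TwoLobes

namespace IsSplit

variable {n : ℕ} {Γ : SimpleGraph (Fin n → Bool)} {e : ℕ} {P D J E : Set (Fin n → Bool)}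
  {a b c w x x' y z : Fin n → Bool}

section

variable (h : IsSplit Γ e a b P D J c)

include h

theorem exists_mem_attachments_ne (t : Fin n → Bool) : ∃ y ∈ attachments Γ D J, y ≠ t := by
  obtain ⟨j, hj, hjb⟩ := h.nonempty_J_sdiff
  obtain ⟨x, hx, y, hy, hyD, hyc, hyt, hxy⟩ := h.rootedThreeConnected D
    (Set.subset_union_right.trans Set.subset_union_left) h.nonempty_D
    (fun ha => h.ne_left_of_mem_D ha rfl) (fun hb => h.ne_right_of_mem_D hb rfl)
    ⟨j, .inr hj, fun hjD => h.notMem_J j (.inr hjD) hj, h.ne_left_of_mem_J hj, hjb⟩ c t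
  exact ⟨y, ⟨h.mem_J_of_adj hx hy hxy (by simp [hyc, hyD]), x, hx, hxy⟩, hyt⟩

theorem unseparated_P {y₁ y₂ : Fin n → Bool} (hy₁ : y₁ ∈ P) (hy₂ : y₂ ∈ P) (hne : y₁ ≠ y₂) :
    Unseparated Γ P {y₁, y₂} {a, c} := by
  intro s
  obtain ⟨u, hu, hus⟩ : ∃ u ∈ ({y₁, y₂} : Set (Fin n → Bool)), u ≠ s := by
    by_cases hs : y₁ = s
    · exact ⟨y₂, by simp, fun hs' => hne (hs.trans hs'.symm)⟩
    · exact ⟨y₁, by simp, hs⟩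
  have huP : u ∈ P := by
    rcases hu with rfl | rfl <;> assumption
  refine ⟨u, hu, ?_⟩
  by_contra! hno
  obtain ⟨p, hp, q, hq, hqU, hqs, hpq⟩ := h.rootedTwoConnected_P (component Γ (P \ {s}) u)
    (component_subset.trans Set.sdiff_subset) ⟨u, mem_component_self ⟨huP, hus⟩⟩
    (hno a (.inl rfl)) (hno c (.inr rfl)) s
  exact hqU (mem_component_of_adj hp ⟨hq, hqs⟩ hpq)

theorem longPath_zigzag {T₁ T₂ A₁ A₂ : Set (Fin n → Bool)} {p p' q q' r r' : Fin n → Bool}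
    {k l : ℕ} (hT₁ : T₁ ⊆ P) (hT₂ : T₂ ⊆ P) (hT : ∀ x ∈ T₁, x ∉ T₂) (hA₁ : A₁ ⊆ J)
    (hA₂ : A₂ ⊆ J) (hA : ∀ x ∈ A₁, x ∉ A₂) (h₁ : Linked Γ T₁ a p) (hp : Γ.Adj p p')
    (h₂ : LongPath Γ A₁ p' q k) (hq : Γ.Adj q q') (h₃ : LongPath Γ (T₂ ∪ D) q' r l)
    (hr : Γ.Adj r r') {m : ℕ} (h₄ : LongPath Γ A₂ r' b m) :
    LongPath Γ (P ∪ D ∪ J) a b (k + l + m + 3) := by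
  have hT₂D : T₂ ∪ D ⊆ P ∪ D := Set.union_subset_union_left D hT₂
  have hT₁PD : T₁ ⊆ P ∪ D := hT₁.trans Set.subset_union_left
  have h₁₂ := h₁.append_edge hp h₂ fun x hx hx' => h.notMem_J x (hT₁PD hx) (hA₁ hx')
  have h₁₂₃ := h₁₂.append_edge hq h₃ <| by
    rintro x (hx | hx) (hx' | hx')
    · exact hT x hx hx'
    · exact h.notMem_D x (hT₁ hx) hx'
    · exact h.notMem_J x (.inl (hT₂ hx')) (hA₁ hx)
    · exact h.notMem_J x (.inr hx') (hA₁ hx)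
  have h₁₂₃₄ := h₁₂₃.append_edge hr h₄ <| by
    rintro x ((hx | hx) | hx) hx'
    · exact h.notMem_J x (hT₁PD hx) (hA₂ hx')
    · exact hA x hx hx'
    · exact h.notMem_J x (hT₂D hx) (hA₂ hx')
  refine (h₁₂₃₄.mono ?_).mono_length (by omega)
  rintro x (((hx | hx) | hx) | hx)
  · exact .inl (hT₁PD hx)
  · exact .inr (hA₁ hx)
  · exact .inl (hT₂D hx)
  · exact .inr (hA₂ hx)

theorem exists_adj_P_ne (havoid : LobesAvoid Γ D J b) (hE : IsMinLobe Γ J b w E)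
    (t : Fin n → Bool) : ∃ x ∈ E, ∃ y ∈ P, y ≠ t ∧ Γ.Adj x y := by
  obtain ⟨x, hx, y, hy, hyt, hxy⟩ := h.exists_adj_PD_ne hE t
  exact ⟨x, hx, y, hy.resolve_right fun hyD =>
    havoid w E hE x hx ⟨hE.subset hx, y, hyD, hxy.symm⟩, hyt, hxy⟩

end

section

variable {s c₁ c₂ x₁ y₁ y₁' y₂ y₂' : Fin n → Bool} {C E₁ E₂ : Set (Fin n → Bool)}
  (h : IsSplit Γ e a b P D J c) (havoid : LobesAvoid Γ D J b)
  (hmin : ∀ s' ∈ separated Γ J b s, s' ≠ s → ∃ x ∈ attachments Γ D J, Linked Γ (J \ {s'}) x b)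
  (hC : IsLobe Γ J b s C) (hx₁ : x₁ ∈ C) (hx₁D : x₁ ∈ attachments Γ D J)
  (hE₁ : IsMinLobe Γ J b c₁ E₁) (hE₁C : E₁ ⊆ C) (hE₂ : IsMinLobe Γ J b c₂ E₂) (hne : E₁ ≠ E₂)

include h havoid hmin hC hx₁ hx₁D hE₁ hE₁C hE₂ hne

theorem unseparated_attachments :
    Unseparated Γ ((J \ E₁) \ E₂) {c₁, b} (attachments Γ D J) := by
  have hJ := h.connectedOn_J
  have hb := h.right_mem
  have strip {u v s' : Fin n → Bool} (hu₁ : u ∉ E₁) (hu₂ : u ∉ E₂) (hv : v ∈ attachments Γ D J)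
      (huv : Linked Γ (J \ {s'}) u v) : Linked Γ (((J \ E₁) \ E₂) \ {s'}) u v :=
    (hE₁.isLobe_sdiff hJ hb hE₂ hne).linked_sdiff hu₂ (fun hv₂ => havoid c₂ E₂ hE₂ v hv₂ hv)
      (hE₁.linked_sdiff hu₁ (fun hv₁ => havoid c₁ E₁ hE₁ v hv₁ hv) huv)
  intro s'
  by_cases hs' : s' ∈ C
  · obtain ⟨x, hx, hxb⟩ := hmin s' (.inr ⟨hC.subset hs', hC.not_linked_root hs'⟩)
      fun hs's => hC.attach_notMem (hs's ▸ hs')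
    exact ⟨b, by simp, x, hx, strip hE₁.root_notMem hE₂.root_notMem hx hxb.symm⟩
  · have hc₁ : c₁ ∈ C := hC.attach_mem_of_subset hJ hb hE₁.toIsLobe hE₁C hx₁
      fun hx₁E => havoid c₁ E₁ hE₁ x₁ hx₁E hx₁D
    refine ⟨c₁, by simp, x₁, hx₁D, strip hE₁.attach_notMem
      (hE₁.attach_notMem_of_ne hJ hb hE₂ hne) hx₁D ((hC.connectedOn c₁ hc₁ x₁ hx₁).mono ?_)⟩
    exact fun z hz => ⟨hC.subset hz, fun hzs' => hs' (hzs' ▸ hz)⟩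

theorem longPath_of_two_lobes_of_linked (hΓ : Γ ≤ hypercube n) (he : 2 ≤ e)
    (hpaths : LongPathProperty Γ e) {T₁ T₂ : Set (Fin n → Bool)} (hy₁ : y₁ ∈ E₁)
    (hy₂ : y₂ ∈ E₂) (hadj₁ : Γ.Adj y₁' y₁) (hadj₂ : Γ.Adj y₂' y₂) (hT₁ : T₁ ⊆ P) (hT₂ : T₂ ⊆ P)
    (hT : ∀ x ∈ T₁, x ∉ T₂) (hay : Linked Γ T₁ a y₁') (hyc : Linked Γ T₂ y₂' c) :
    LongPath Γ (P ∪ D ∪ J) a b (2 ^ (e + 1) - 1) := by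
  have hpow := Nat.pow_le_pow_right two_pos he
  have hJ := h.connectedOn_J
  have hb := h.right_mem
  have hE := hE₁.notMem_of_mem hJ hb hE₂ hne
  have hc₁ : c₁ ∈ (J \ E₁) \ E₂ :=
    ⟨⟨hE₁.attach_mem, hE₁.attach_notMem⟩, hE₁.attach_notMem_of_ne hJ hb hE₂ hne⟩
  have hc₂ : c₂ ∈ (J \ E₁) \ E₂ :=
    ⟨⟨hE₂.attach_mem, hE₂.attach_notMem_of_ne hJ hb hE₁ hne.symm⟩, hE₂.attach_notMem⟩
  have lobe₁ := (h.nearlySpanned_insert_attach hE₁ hΓ he hpaths hy₁).1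
  have lobe₂ := (h.nearlySpanned_insert_attach hE₂ hΓ he hpaths hy₂).1
  obtain ⟨S₁, hS₁, S₂, hS₂, hS, x', ⟨-, x, hx, hxx'⟩, hlinks⟩ :=
    (h.unseparated_attachments havoid hmin hC hx₁ hx₁D hE₁ hE₁C hE₂ hne
      ).exists_disjoint_linked_of_linked
      (hE₁.connectedOn_sdiff_sdiff hJ hb hE₂ hne c₂ hc₂ c₁ hc₁)
  have block := hyc.append_insert ((h.isSide_left hΓ he hpaths).nearlySpanned x hx).1
    fun z hz => h.notMem_D z (hT₂ hz)
  have hS₁J : S₁ ⊆ J := fun z hz => (hS₁ hz).1.1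
  have hS₂J : S₂ ⊆ J := fun z hz => (hS₂ hz).1.1
  have into_lobe₁ {u : Fin n → Bool} (hu : Linked Γ S₁ u c₁) :=
    hu.append_insert lobe₁ fun z hz => (hS₁ hz).1.2
  rcases hlinks with ⟨h₁, h₂⟩ | ⟨h₁, h₂⟩
  · refine (h.longPath_zigzag hT₁ hT₂ hT (A₁ := S₁ ∪ E₁ ∪ E₂) ?_ hS₂J ?_ hay hadj₁
      ((into_lobe₁ h₁.symm).symm.append_insert lobe₂ ?_) hadj₂.symm block hxx' h₂.symm
      ).mono_length (by omega)
    · exact Set.union_subset (Set.union_subset hS₁J hE₁.subset) hE₂.subset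
    · rintro z ((hz | hz) | hz) hz₂
      exacts [hS z hz hz₂, (hS₂ hz₂).1.2 hz, (hS₂ hz₂).2 hz]
    · rintro z (hz | hz)
      exacts [(hS₁ hz).2, hE z hz]
  · refine (h.longPath_zigzag hT₁ hT₂ hT (Set.union_subset hS₁J hE₁.subset)
      (Set.union_subset hS₂J hE₂.subset) ?_ hay hadj₁ (into_lobe₁ h₁.symm).symm
      hxx'.symm block.symm hadj₂ (h₂.append_insert lobe₂ fun z hz => (hS₂ hz).2).symm
      ).mono_length (by omega)
    rintro z (hz | hz) (hz₂ | hz₂)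
    exacts [hS z hz hz₂, (hS₁ hz).2 hz₂, (hS₂ hz₂).1.2 hz, hE z hz hz₂]

end

end IsSplit

end TwoLobes

section UniqueLobe

variable {V : Type*} [Finite V] {G : SimpleGraph V} {J C E U : Set V} {r s t w : V}

theorem exists_isMinLobe_subset (hJ : ConnectedOn G J) (hr : r ∈ J) (hUJ : U ⊆ J)
    (hU : U.Nonempty) (hrU : r ∉ U) (hclosed : ∀ x ∈ U, ∀ y ∈ J, G.Adj x y → y ∈ U ∨ y = t) :
    ∃ w E, IsMinLobe G J r w E ∧ E ⊆ U := by
  obtain ⟨z, hz⟩ := hU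
  obtain ⟨p, hp, -, q, hq, hqU, hpq⟩ := (hJ z (hUJ hz) r hr).exists_adj_crossing U hz hrU
  obtain rfl : q = t := (hclosed p hp q hq hpq).resolve_left hqU
  have hlobe : IsLobe G J r q (component G U z) := {
    attach_mem := hq
    nonempty := ⟨z, mem_component_self hz⟩
    subset := component_subset.trans hUJ
    attach_notMem := fun h => hqU (component_subset h)
    root_notMem := fun h => hrU (component_subset h)
    connectedOn := connectedOn_component
    closed := fun x hx y hy hxy => (hclosed x (component_subset hx) y hy hxy).imp_left
      fun hyU => mem_component_of_adj hx hyU hxy }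
  obtain ⟨w, E, hE, hsub⟩ := hlobe.exists_isMinLobe
  exact ⟨w, E, hE, hsub.trans component_subset⟩

theorem IsLobe.rootedTwoConnected_sdiff (hJ : ConnectedOn G J) (hr : r ∈ J)
    (hC : IsLobe G J r s C) (hE : IsLobe G J r w E)
    (hunique : ∀ w' E', IsMinLobe G J r w' E' → E' ⊆ C → E' = E) :
    RootedTwoConnected G (insert s C \ E) s w := by
  intro U hU hne hsU hwU t
  by_contra! hno
  have hUC : U ⊆ C := fun x hx => (hU hx).1.resolve_left fun hxs => hsU (hxs ▸ hx)
  have hUE : ∀ x ∈ U, x ∉ E := fun x hx => (hU hx).2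
  obtain ⟨w', E', hE', hsub⟩ := exists_isMinLobe_subset (t := t) hJ hr (hUC.trans hC.subset) hne
    (fun hrU => hC.root_notMem (hUC hrU)) fun x hx y hy hxy => by
      by_contra! hy'
      exact hno x hx y ⟨hC.mem_insert_of_adj (hUC hx) hy hxy,
        hE.notMem_of_adj (hC.subset (hUC hx)) (hUE x hx) (fun hxw => hwU (hxw ▸ hx)) hxy⟩
        hy'.1 hy'.2 hxy
  obtain ⟨v, hv⟩ := hE'.nonempty
  exact hUE v (hsub hv) (hunique w' E' hE' (hsub.trans hUC) ▸ hv)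

end UniqueLobe

section OneLobe

namespace IsSplit

variable {n : ℕ} {Γ : SimpleGraph (Fin n → Bool)} {e : ℕ} {P D J E C : Set (Fin n → Bool)}
  {a b c w x s : Fin n → Bool}

section

variable (h : IsSplit Γ e a b P D J c) (hC : IsLobe Γ J b s C) (hE : IsMinLobe Γ J b w E)

include h hC hE

theorem admissible_sdiff (hEC : E ⊆ C) (hw : w ∈ C)
    (hunique : ∀ w' E', IsMinLobe Γ J b w' E' → E' ⊆ C → E' = E) (hx : x ∈ C) (hxE : x ∉ E)
    (hxw : x ≠ w) : Admissible Γ e (insert s C \ E) s w := by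
  have hs : s ∈ insert s C \ E := ⟨.inl rfl, fun hsE => hC.attach_notMem (hEC hsE)⟩
  have ne_s {z : Fin n → Bool} (hz : z ∈ C) : s ≠ z := fun hsz => hC.attach_notMem (hsz ▸ hz)
  refine ⟨hs, ⟨.inr hw, hE.attach_notMem⟩, ne_s hw, ?_,
    hC.rootedTwoConnected_sdiff h.connectedOn_J h.right_mem hE.toIsLobe hunique, ?_⟩
  · rw [← Set.ncard_eq_three.2 ⟨s, w, x, ne_s hw, ne_s hx, hxw.symm, rfl⟩]
    refine Set.ncard_le_ncard ?_ (Set.toFinite _)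
    rintro z (rfl | rfl | rfl)
    exacts [hs, ⟨.inr hw, hE.attach_notMem⟩, ⟨.inr hx, hxE⟩]
  · intro z hz hzs hzw
    have hzC := hz.1.resolve_left hzs
    exact h.le_degreeIn_of_mem_J (hC.subset hzC) (hC.ne_root hzC) fun y hy hzy =>
      ⟨hC.mem_insert_of_adj hzC hy hzy, hE.notMem_of_adj (hC.subset hzC) hz.2 hzw hzy⟩

theorem longPath_to_right (hEC : E ⊆ C) (hw : w ∈ C) (hpaths : LongPathProperty Γ e)
    (hunique : ∀ w' E', IsMinLobe Γ J b w' E' → E' ⊆ C → E' = E) (hx : x ∈ C) (hxE : x ∉ E)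
    (hxw : x ≠ w) : LongPath Γ (D ∪ J \ E) w b (2 ^ e - 2) := by
  have hws := (hpaths _ _ _ (h.admissible_sdiff hC hE hEC hw hunique hx hxE hxw)).1.symm
  have hsb := (hC.linked_attach_sdiff h.connectedOn_J h.right_mem hC.root_notMem).symm
  refine (hws.append hsb fun z hz hzC => hz.1.resolve_right hzC.2).mono ?_
  rintro z (⟨rfl | hz, hzE⟩ | hz)
  · exact .inr ⟨hC.attach_mem, hzE⟩
  · exact .inr ⟨hC.subset hz, hzE⟩
  · exact .inr ⟨hz.1, fun hzE => hz.2 (hEC hzE)⟩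

end

section

variable {x₁ : Fin n → Bool} (h : IsSplit Γ e a b P D J c) (hw : w ∈ J) (hwb : w ≠ b)
  (hX : ∀ x ∈ attachments Γ D J, x = s ∨ x = w) (hx₁ : x₁ ∈ D) (hadj : Γ.Adj x₁ w)

include h hw hwb hX hx₁ hadj

theorem mem_insert_of_adj {y z : Fin n → Bool} (hz : z ∈ D) (hzx₁ : z ≠ x₁)
    (hy : y ∈ P ∪ D ∪ J) (hyc : y ≠ c) (hzy : Γ.Adj z y) : y ∈ insert s D := by
  by_cases hyD : y ∈ D
  · exact .inr hyD
  have hyJ := h.mem_J_of_adj hz hy hzy (by simp [hyc, hyD])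
  refine .inl ((hX y ⟨hyJ, z, hz, hzy⟩).resolve_right ?_)
  rintro rfl
  exact hzx₁ (h.eq_of_adj_PD y hw hwb z (.inr hz) hzy.symm x₁ (.inr hx₁) hadj.symm)

theorem admissible_insert (hsJ : s ∈ J) (he : 2 ≤ e) : Admissible Γ e (insert s D) x₁ s := by
  have ne_s {z : Fin n → Bool} (hz : z ∈ D) : z ≠ s := fun hzs =>
    h.notMem_J z (.inr hz) (hzs ▸ hsJ)
  have hdeg : ∀ z ∈ D, z ≠ x₁ → e ≤ degreeIn Γ (insert s D) z := fun z hz hzx₁ =>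
    Nat.le_of_lt_succ <| (h.lt_degreeIn_of_mem_D hz).trans_le <|
      degreeIn_le_add_one (t := c) fun y hy hzy => or_iff_not_imp_right.2 fun hyc =>
        h.mem_insert_of_adj hw hwb hX hx₁ hadj hz hzx₁ hy hyc hzy
  refine ⟨.inr hx₁, .inl rfl, ne_s hx₁, ?_, ?_,
    fun z hz hzx₁ hzs => hdeg z (hz.resolve_left hzs) hzx₁⟩
  · obtain ⟨y, hy, hyc, hyw, hx₁y⟩ := exists_adj_ne_ne_of_three_le_degreeIn
      (he.trans_lt (h.lt_degreeIn_of_mem_D hx₁)) c w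
    have hyD : y ∈ D := by
      by_contra hyD
      exact hyw (h.eq_of_adj_J x₁ hx₁ y (h.mem_J_of_adj hx₁ hy hx₁y (by simp [hyc, hyD])) hx₁y
        w hw hadj)
    exact (he.trans (hdeg y hyD hx₁y.ne.symm)).trans_lt (degreeIn_lt_ncard (.inr hyD))
  · intro U hU hne hx₁U hsU t
    have hUD : U ⊆ D := fun z hz => (hU hz).resolve_left fun hzs => hsU (hzs ▸ hz)
    obtain ⟨x, hx, y, hy, hyU, hyc, hyt, hxy⟩ := h.rootedThreeConnected U
      (fun z hz => .inl (.inr (hUD hz))) hne (fun haU => h.ne_left_of_mem_D (hUD haU) rfl)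
      (fun hbU => h.ne_right_of_mem_D (hUD hbU) rfl)
      ⟨x₁, .inl (.inr hx₁), hx₁U, h.ne_left_of_mem_D hx₁, h.ne_right_of_mem_D hx₁⟩ c t
    exact ⟨x, hx, y, h.mem_insert_of_adj hw hwb hX hx₁ hadj (hUD hx)
      (fun hxx₁ => hx₁U (hxx₁ ▸ hx)) hy hyc hxy, hyU, hyt, hxy⟩

end

theorem longPath_through_D (h : IsSplit Γ e a b P D J c) (he : 2 ≤ e)
    (hpaths : LongPathProperty Γ e) (hC : IsLobe Γ J b s C) (hE : IsMinLobe Γ J b w E)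
    (hEC : E ⊆ C) (hw : w ∈ C) (hX : ∀ x ∈ attachments Γ D J, x = s ∨ x = w) :
    LongPath Γ (D ∪ J \ E) w b (2 ^ e - 2) := by
  have hwX : w ∈ attachments Γ D J := by
    obtain ⟨y, hy, hys⟩ := h.exists_mem_attachments_ne s
    exact (hX y hy).resolve_left hys ▸ hy
  obtain ⟨hwJ, x₁, hx₁, hadj⟩ := hwX
  have hx₁s := (hpaths _ _ _
    (h.admissible_insert hwJ (hC.ne_root hw) hX hx₁ hadj hC.attach_mem he)).1
  have hsb := (hC.linked_attach_sdiff h.connectedOn_J h.right_mem hC.root_notMem).symm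
  have hx₁b := hx₁s.append hsb <| by
    rintro z (rfl | hz) hzC
    · rfl
    · exact absurd hzC.1 (h.notMem_J z (.inr hz))
  refine ((hx₁b.cons ?_ hadj.symm).mono ?_).mono_length (Nat.le_succ _)
  · rintro ((rfl | hwD) | hwC)
    exacts [hC.attach_notMem hw, h.notMem_J w (.inr hwD) hwJ, hwC.2 hw]
  · rintro z (rfl | (rfl | hz) | hz)
    · exact .inr ⟨hwJ, hE.attach_notMem⟩
    · exact .inr ⟨hC.attach_mem, fun hzE => hC.attach_notMem (hEC hzE)⟩
    · exact .inl hz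
    · exact .inr ⟨hz.1, fun hzE => hz.2 (hEC hzE)⟩

variable (h : IsSplit Γ e a b P D J c) (havoid : LobesAvoid Γ D J b) (hΓ : Γ ≤ hypercube n)
  (he : 2 ≤ e) (hpaths : LongPathProperty Γ e)

include h havoid hΓ he hpaths

theorem exists_longPath_insert_attach (hE : IsMinLobe Γ J b w E) :
    ∃ y ∈ E, ∃ y' ∈ P, y' ≠ a ∧ Γ.Adj y' y ∧ LongPath Γ (insert w E) w y (2 ^ e - 1) := by
  by_cases hcube : IsFullSubcube Γ (insert w E) e
  · have haE : a ∉ insert w E := by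
      rintro (haw | haE)
      · exact h.ne_left_of_mem_J hE.attach_mem haw.symm
      · exact h.ne_left_of_mem_J (hE.subset haE) rfl
    obtain ⟨y₁, hy₁, -, hwy₁⟩ := hcube.exists_adj_ne (.inl rfl) he w
    obtain ⟨y₂, hy₂, hne, hwy₂⟩ := hcube.exists_adj_ne (.inl rfl) he y₁
    obtain ⟨y, hy, hwy, hay⟩ : ∃ y ∈ insert w E, Γ.Adj w y ∧ ¬ Γ.Adj a y := by
      by_cases hay₁ : Γ.Adj a y₁
      · exact ⟨y₂, hy₂, hwy₂, fun hay₂ =>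
          hne (hcube.eq_of_adj_of_notMem hΓ haE hy₂ hy₁ hay₂ hay₁)⟩
      · exact ⟨y₁, hy₁, hwy₁, hay₁⟩
    have hyE : y ∈ E := hy.resolve_left hwy.ne.symm
    obtain ⟨y', hy', hyy'⟩ := h.exists_adj_PD_of_isFullSubcube hE hΓ hcube hyE
    refine ⟨y, hyE, y', hy'.resolve_right fun hyD => havoid w E hE y hyE
      ⟨hE.subset hyE, y', hyD, hyy'.symm⟩, ?_, hyy'.symm,
      (h.nearlySpanned_insert_attach hE hΓ he hpaths hyE).2 fun heven => ?_⟩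
    · rintro rfl
      exact hay hyy'.symm
    · have hparity := heven.2
      rw [parity_of_adj hΓ hwy] at hparity
      simp at hparity
  · obtain ⟨y, hy, y', hy', hne, hyy'⟩ := h.exists_adj_P_ne havoid hE a
    exact ⟨y, hy, y', hy', hne, hyy'.symm,
      (h.nearlySpanned_insert_attach hE hΓ he hpaths hy).2 fun heven => hcube heven.1⟩

theorem longPath_of_one_lobe (hE : IsMinLobe Γ J b w E)
    (hwb : LongPath Γ (D ∪ J \ E) w b (2 ^ e - 2)) :
    LongPath Γ (P ∪ D ∪ J) a b (2 ^ (e + 1) - 1) := by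
  have hpow := Nat.pow_le_pow_right two_pos he
  obtain ⟨y, -, y', hy', hne, hadj, hwy⟩ :=
    h.exists_longPath_insert_attach havoid hΓ he hpaths hE
  have hay' := (h.connectedOn_P a h.left_mem y' hy').one_of_ne hne.symm
  have hyb := hwy.symm.append hwb <| by
    rintro z (rfl | hz) hz'
    · rfl
    · exact hz'.elim (fun hzD => absurd (hE.subset hz) (h.notMem_J z (.inr hzD)))
        fun hzE => absurd hz hzE.2
  have hsub : insert w E ∪ (D ∪ J \ E) ⊆ D ∪ J := by
    rintro z ((rfl | hz) | hz | hz)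
    exacts [.inr hE.attach_mem, .inr (hE.subset hz), .inl hz, .inr hz.1]
  have hab := hay'.append_edge hadj hyb fun z hz hz' =>
    (hsub hz').elim (h.notMem_D z hz) (h.notMem_J z (.inl hz))
  refine (hab.mono ?_).mono_length (by omega)
  rw [Set.union_assoc]
  exact Set.union_subset_union_right P hsub

theorem longPath_of_two_lobes {c₁ c₂ x₁ x₂ : Fin n → Bool} {C₁ C₂ E₁ E₂ : Set (Fin n → Bool)}
    (hmin : ∀ s' ∈ separated Γ J b s, s' ≠ s → ∃ x ∈ attachments Γ D J, Linked Γ (J \ {s'}) x b)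
    (hC₁ : IsLobe Γ J b s C₁) (hx₁ : x₁ ∈ C₁) (hx₁D : x₁ ∈ attachments Γ D J)
    (hC₂ : IsLobe Γ J b s C₂) (hx₂ : x₂ ∈ C₂) (hx₂D : x₂ ∈ attachments Γ D J)
    (hE₁ : IsMinLobe Γ J b c₁ E₁) (hE₁C : E₁ ⊆ C₁) (hE₂ : IsMinLobe Γ J b c₂ E₂)
    (hE₂C : E₂ ⊆ C₂) (hne : E₁ ≠ E₂) : LongPath Γ (P ∪ D ∪ J) a b (2 ^ (e + 1) - 1) := by
  obtain ⟨y₁, hy₁, y₁', hy₁', -, hadj₁⟩ := h.exists_adj_P_ne havoid hE₁ a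
  obtain ⟨y₂, hy₂, y₂', hy₂', hy, hadj₂⟩ := h.exists_adj_P_ne havoid hE₂ y₁'
  obtain ⟨T₁, hT₁, T₂, hT₂, hT, ⟨h₁, h₂⟩ | ⟨h₁, h₂⟩⟩ :=
    (h.unseparated_P hy₁' hy₂' hy.symm).exists_disjoint_linked
  · exact h.longPath_of_two_lobes_of_linked havoid hmin hC₁ hx₁ hx₁D hE₁ hE₁C hE₂ hne hΓ he hpaths
      hy₁ hy₂ hadj₁.symm hadj₂.symm hT₁ hT₂ hT h₁.symm h₂
  · exact h.longPath_of_two_lobes_of_linked havoid hmin hC₂ hx₂ hx₂D hE₂ hE₂C hE₁ hne.symm hΓ he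
      hpaths hy₂ hy₁ hadj₂.symm hadj₁.symm hT₂ hT₁ (fun z hz hz' => hT z hz' hz) h₂.symm h₁

theorem longPath_of_lobesAvoid : LongPath Γ (P ∪ D ∪ J) a b (2 ^ (e + 1) - 1) := by
  obtain ⟨s, hs, hXs, hmin⟩ :=
    exists_innermost_separator (X := attachments Γ D J) h.connectedOn_J h.right_mem fun _ hx => hx.1
  have hlobe {x : Fin n → Bool} (hx : x ∈ attachments Γ D J) (hxs : x ≠ s) :
      IsLobe Γ J b s (component Γ (J \ {s}) x) ∧ x ∈ component Γ (J \ {s}) x :=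
    ⟨isLobe_component hs hx.1 hxs ((hXs hx).resolve_left hxs).2, mem_component_self ⟨hx.1, hxs⟩⟩
  obtain ⟨x₀, hx₀, hx₀s⟩ := h.exists_mem_attachments_ne s
  obtain ⟨hC, hx₀C⟩ := hlobe hx₀ hx₀s
  obtain ⟨w, E, hE, hEC⟩ := hC.exists_isMinLobe
  have hw := hC.attach_mem_of_subset h.connectedOn_J h.right_mem hE.toIsLobe hEC hx₀C
    fun hx₀E => havoid w E hE x₀ hx₀E hx₀
  by_contra hno
  have hunique {C' : Set (Fin n → Bool)} {x : Fin n → Bool} (hC' : IsLobe Γ J b s C')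
      (hxC' : x ∈ C') (hx : x ∈ attachments Γ D J) (w' : Fin n → Bool)
      (E' : Set (Fin n → Bool)) (hE' : IsMinLobe Γ J b w' E') (hE'C' : E' ⊆ C') : E' = E := by
    by_contra hne
    exact hno (h.longPath_of_two_lobes havoid hΓ he hpaths hmin hC hx₀C hx₀ hC' hxC' hx hE hEC
      hE' hE'C' fun hEE' => hne hEE'.symm)
  have hXC : ∀ x ∈ attachments Γ D J, x ≠ s → x ∈ component Γ (J \ {s}) x₀ := by
    intro x hx hxs
    obtain ⟨hC', hxC'⟩ := hlobe hx hxs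
    obtain ⟨w', E', hE', hE'C'⟩ := hC'.exists_isMinLobe
    obtain ⟨v, hv⟩ := hE'.nonempty
    exact hC'.subset_of_inter hC (hE'C' hv) (hEC (hunique hC' hxC' hx w' E' hE' hE'C' ▸ hv)) hxC'
  refine hno (h.longPath_of_one_lobe havoid hΓ he hpaths hE ?_)
  by_cases hX : ∃ x ∈ attachments Γ D J, x ≠ s ∧ x ≠ w
  · obtain ⟨x, hx, hxs, hxw⟩ := hX
    exact h.longPath_to_right hC hE hEC hw hpaths (hunique hC hx₀C hx₀) (hXC x hx hxs)
      (fun hxE => havoid w E hE x hxE hx) hxw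
  · push Not at hX
    exact h.longPath_through_D he hpaths hC hE hEC hw fun x hx =>
      or_iff_not_imp_left.2 (hX x hx)

end IsSplit

theorem IsSplit.nearlySpanned {n : ℕ} {Γ : SimpleGraph (Fin n → Bool)} {e : ℕ}
    {P D J : Set (Fin n → Bool)} {a b c : Fin n → Bool} (h : IsSplit Γ e a b P D J c)
    (hΓ : Γ ≤ hypercube n) (he : 2 ≤ e) (hpaths : LongPathProperty Γ e) :
    NearlySpanned Γ (e + 1) (P ∪ D ∪ J) a b := by
  by_cases havoid : LobesAvoid Γ D J b
  · have hpath := h.longPath_of_lobesAvoid havoid hΓ he hpaths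
    exact ⟨hpath.mono_length (by omega), fun _ => hpath⟩
  · simp only [LobesAvoid, not_forall, not_not] at havoid
    obtain ⟨w, E, hE, x', hx', -, x, hx, hadj⟩ := havoid
    exact h.nearlySpanned_of_adj hE hΓ he hpaths hx hx' hadj

end OneLobe

section Cuts

variable {V : Type*} {Γ : SimpleGraph V} {A B H J S : Set V} {a b x y z : V}

theorem ConnectedOn.union (hA : ConnectedOn Γ A) (hB : ConnectedOn Γ B) (hx : x ∈ A) (hy : y ∈ B)
    (e : Γ.Adj x y) : ConnectedOn Γ (A ∪ B) := by
  refine .of_root x ?_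
  rintro z (hz | hz)
  · exact (hA z hz x hx).mono Set.subset_union_left
  · exact ((hB z hz y hy).mono Set.subset_union_right).trans_adj e.symm (.inl hx)

theorem mem_of_adj_component_sdiff (hx : x ∈ S) (hxC : x ∉ component Γ (S \ H) b)
    (hy : y ∈ component Γ (S \ H) b) (e : Γ.Adj x y) : x ∈ H := by
  by_contra hxH
  exact hxC (mem_component_of_adj hy ⟨hx, hxH⟩ e.symm)

theorem ConnectedOn.sdiff_component_sdiff (hS : ConnectedOn Γ S) (hH : ConnectedOn Γ H)
    (hHS : H ⊆ S) (ha : a ∈ H) : ConnectedOn Γ (S \ component Γ (S \ H) b) := by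
  have hsub : H ⊆ S \ component Γ (S \ H) b := fun x hx =>
    ⟨hHS hx, fun hxC => (component_subset hxC).2 hx⟩
  refine .of_root a fun z hz => ?_
  by_contra hza
  refine hza ((hS z hz.1 a (hHS ha)).mem_of_closed (component Γ (S \ component Γ (S \ H) b) z)
    (mem_component_self hz) fun x hx hxS y hy e =>
      mem_component_of_adj hx ⟨hy, fun hyC => hza ?_⟩ e)
  have hxH : x ∈ H := mem_of_adj_component_sdiff hxS (component_subset hx).2 hyC e
  exact LongPath.trans hx ((hH x hxH a ha).mono hsub)

theorem RootedTwoConnected.linked_or_linked (h : RootedTwoConnected Γ S a b) (hz : z ∈ S) :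
    Linked Γ S z a ∨ Linked Γ S z b := by
  by_contra! hno
  obtain ⟨x, hx, y, hy, hyU, -, e⟩ :=
    h (component Γ S z) component_subset ⟨z, mem_component_self hz⟩ hno.1 hno.2 a
  exact hyU (mem_component_of_adj hx hy e)

theorem RootedTwoConnected.linked_of_linked_left (h : RootedTwoConnected Γ S a b) (hza : z ≠ a)
    (hz : Linked Γ S a z) : Linked Γ S a b := by
  by_contra hab
  obtain ⟨x, hx, y, hy, hyU, hya, e⟩ := h (component Γ S a \ {a})
    (Set.sdiff_subset.trans component_subset) ⟨z, hz, hza⟩ (fun ha => ha.2 rfl)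
    (fun hb => hab hb.1) a
  exact hyU ⟨mem_component_of_adj hx.1 hy e, hya⟩

theorem RootedTwoConnected.connectedOn [Finite V] (h : RootedTwoConnected Γ S a b)
    (h3 : 2 < S.ncard) : ConnectedOn Γ S := by
  obtain ⟨z, hz, hza, hzb⟩ := exists_mem_ne_ne_of_two_lt_ncard h3 a b
  have hlinked : Linked Γ S b a := by
    rcases h.linked_or_linked hz with hlink | hlink
    · exact (h.linked_of_linked_left hza hlink.symm).symm
    · exact h.symm.linked_of_linked_left hzb hlink.symm
  refine .of_root a fun x hx => ?_
  exact (h.linked_or_linked hx).elim id fun hxb => hxb.trans hlinked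

namespace RootedThreeConnected

theorem symm (h : RootedThreeConnected Γ S a b) : RootedThreeConnected Γ S b a :=
  fun U hU hne hb ha ⟨z, hz, hzU, hzb, hza⟩ => h U hU hne ha hb ⟨z, hz, hzU, hza, hzb⟩

theorem exists_adj_ne_ne [Finite V] (h : RootedThreeConnected Γ S a b) (h4 : 4 ≤ S.ncard)
    (hz : z ∈ S) (hza : z ≠ a) (hzb : z ≠ b) : ∃ y ∈ S, Γ.Adj a y ∧ y ≠ b ∧ y ≠ z := by
  have hne : (S \ {a, b, z}).Nonempty := by
    refine Set.sdiff_nonempty_of_ncard_lt_ncard ((Set.ncard_insert_le a {b, z}).trans_lt ?_)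
    rwa [Set.ncard_pair hzb.symm]
  obtain ⟨y, hy, x, hx, hxU, hxb, hxz, e⟩ := h (S \ {a, b, z}) Set.sdiff_subset hne (by simp)
    (by simp) ⟨z, hz, by simp, hza, hzb⟩ b z
  obtain rfl : x = a := by
    by_contra hxa
    exact hxU ⟨hx, by simp [hxa, hxb, hxz]⟩
  simp only [Set.mem_sdiff, Set.mem_insert_iff, Set.mem_singleton_iff, not_or] at hy
  exact ⟨y, hy.1, e.symm, hy.2.2.1, hy.2.2.2⟩

theorem connectedOn_sdiff_insert_component (h : RootedThreeConnected Γ S a b) (hJ : J ⊆ S)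
    (hbJ : b ∈ J) (ha : a ∈ S \ J) (hconn : ConnectedOn Γ (S \ J)) (hy : y ∈ J) (hyb : y ≠ b) :
    ConnectedOn Γ (S \ insert b (component Γ (J \ {b}) y)) := by
  have hsub : S \ J ⊆ S \ insert b (component Γ (J \ {b}) y) :=
    Set.sdiff_subset_sdiff_right
      (Set.insert_subset hbJ (component_subset.trans Set.sdiff_subset))
  refine .of_root a fun z ⟨hz, hzJ⟩ => ?_
  rw [Set.mem_insert_iff, not_or] at hzJ
  by_cases hzJ' : z ∉ J
  · exact (hconn z ⟨hz, hzJ'⟩ a ha).mono hsub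
  rw [not_not] at hzJ'
  have hdisjoint : ∀ q ∈ component Γ (J \ {b}) z, q ∉ component Γ (J \ {b}) y := fun q hq hq' =>
    hzJ.2 (LongPath.trans hq' (LongPath.symm hq))
  obtain ⟨x, hx, w, hw, hwU, hwb, -, e⟩ := h (component Γ (J \ {b}) z)
    (component_subset.trans (Set.sdiff_subset.trans hJ)) ⟨z, mem_component_self ⟨hzJ', hzJ.1⟩⟩
    (fun haC => ha.2 (component_subset haC).1) (fun hbC => (component_subset hbC).2 rfl)
    ⟨y, hJ hy, fun hyC => hdisjoint y hyC (mem_component_self ⟨hy, hyb⟩),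
      fun hya => ha.2 (hya ▸ hy), hyb⟩ b b
  have hwJ : w ∈ S \ J := ⟨hw, fun hwJ => hwU (mem_component_of_adj hx ⟨hwJ, hwb⟩ e)⟩
  have hzx : Linked Γ (S \ insert b (component Γ (J \ {b}) y)) z x :=
    (linked_component hx).mono fun q hq => ⟨hJ (component_subset hq).1, by
      rw [Set.mem_insert_iff, not_or]
      exact ⟨(component_subset hq).2, hdisjoint q hq⟩⟩
  exact (hzx.trans_adj e (hsub hwJ)).trans ((hconn w hwJ a ha).mono hsub)

end RootedThreeConnected

/-- `J` is the side of `b` in a cut of `S` between `a` and `b`: both sides are connected, `J` stays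
so without `b`, and every vertex other than `b` has at most one neighbour on the opposite side. -/
structure IsCut {V : Type*} (Γ : SimpleGraph V) (S : Set V) (a b : V) (J : Set V) : Prop where
  subset : J ⊆ S
  right_mem : b ∈ J
  left_mem : a ∈ S \ J
  connectedOn : ConnectedOn Γ J
  connectedOn_sdiff_right : ConnectedOn Γ (J \ {b})
  nonempty_sdiff_right : (J \ {b}).Nonempty
  connectedOn_sdiff : ConnectedOn Γ (S \ J)
  exists_ne_left : ∃ z ∈ S \ J, z ≠ a
  eq_of_adj_right : ∀ x ∈ S \ J, ∀ y ∈ J, Γ.Adj x y → ∀ y' ∈ J, Γ.Adj x y' → y = y'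
  eq_of_adj_left : ∀ x ∈ J, x ≠ b →
    ∀ y ∈ S \ J, Γ.Adj x y → ∀ y' ∈ S \ J, Γ.Adj x y' → y = y'

theorem isCut_insert_component {σ : V → V} (hσ : Function.Injective σ)
    (h : RootedThreeConnected Γ S a b) (hJ : J ⊆ S) (hbJ : b ∈ J) (ha : a ∈ S \ J)
    (hconn : ConnectedOn Γ (S \ J)) (hx : x ∈ S \ J) (hxa : x ≠ a) (hy : y ∈ J)
    (e : Γ.Adj b y) (hσJ : ∀ x ∈ S \ J, ∀ y ∈ J, Γ.Adj x y → y = σ x) :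
    IsCut Γ S a b (insert b (component Γ (J \ {b}) y)) := by
  set C := component Γ (J \ {b}) y
  have hyC : y ∈ C := mem_component_self ⟨hy, e.ne.symm⟩
  have hCJ : C ⊆ J := component_subset.trans Set.sdiff_subset
  have hbC : b ∉ C := fun hb => (component_subset hb).2 rfl
  have hsub : insert b C ⊆ J := Set.insert_subset hbJ hCJ
  have hsdiff : insert b C \ {b} = C := Set.insert_sdiff_self_of_notMem hbC
  have hclosed : ∀ x ∈ C, ∀ z ∈ S \ insert b C, Γ.Adj x z → z ∉ J := fun x hx z hz e' hzJ =>
    hz.2 (.inr (mem_component_of_adj hx ⟨hzJ, fun hzb => hz.2 (.inl hzb)⟩ e'))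
  refine ⟨hsub.trans hJ, .inl rfl, ⟨ha.1, fun haC => ha.2 (hsub haC)⟩, ?_,
    hsdiff.symm ▸ connectedOn_component, hsdiff.symm ▸ ⟨y, hyC⟩,
    h.connectedOn_sdiff_insert_component hJ hbJ ha hconn hy e.ne.symm,
    ⟨x, ⟨hx.1, fun hxC => hx.2 (hsub hxC)⟩, hxa⟩, ?_, ?_⟩
  · rw [← Set.singleton_union]
    refine ConnectedOn.union (.of_root b ?_) connectedOn_component rfl hyC e
    rintro _ rfl
    exact .refl rfl
  · rintro z hz u hu eu v hv ev
    by_cases hzJ : z ∈ J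
    · have heq : ∀ u ∈ insert b C, Γ.Adj z u → u = b := fun u hu eu =>
        hu.resolve_right fun huC => hclosed u huC z hz eu.symm hzJ
      rw [heq u hu eu, heq v hv ev]
    · rw [hσJ z ⟨hz.1, hzJ⟩ u (hsub hu) eu, hσJ z ⟨hz.1, hzJ⟩ v (hsub hv) ev]
  · intro z hz hzb u hu eu v hv ev
    have hzC : z ∈ C := hz.resolve_left hzb
    have heq : ∀ u ∈ S \ insert b C, Γ.Adj z u → z = σ u := fun u hu eu =>
      hσJ u ⟨hu.1, hclosed z hzC u hu eu⟩ z (hsub hz) eu.symm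
    exact hσ ((heq u hu eu).symm.trans (heq v hv ev))

end Cuts

section Direction

variable {n : ℕ} {Γ : SimpleGraph (Fin n → Bool)} {S : Set (Fin n → Bool)}
  {a b : Fin n → Bool}

theorem RootedThreeConnected.exists_adj_apply_eq (h : RootedThreeConnected Γ S a b)
    (hΓ : Γ ≤ hypercube n) (h4 : 4 ≤ S.ncard) (i : Fin n) :
    ∃ y ∈ S, Γ.Adj a y ∧ y ≠ b ∧ y i = a i := by
  obtain ⟨z, hz, hza, hzb⟩ := exists_mem_ne_ne_of_two_lt_ncard (Nat.lt_of_succ_lt h4) a b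
  obtain ⟨y₁, hy₁, e₁, hb₁, -⟩ := h.exists_adj_ne_ne h4 hz hza hzb
  obtain ⟨y₂, hy₂, e₂, hb₂, hne⟩ := h.exists_adj_ne_ne h4 hy₁ e₁.ne.symm hb₁
  obtain ⟨j, rfl⟩ := exists_eq_flip hΓ e₁
  obtain ⟨k, rfl⟩ := exists_eq_flip hΓ e₂
  by_cases hij : i = j
  · exact ⟨_, hy₂, e₂, hb₂, flip_of_ne fun hik => hne (by rw [← hik, hij])⟩
  · exact ⟨_, hy₁, e₁, hb₁, flip_of_ne hij⟩

theorem RootedThreeConnected.exists_isCut (h : RootedThreeConnected Γ S a b)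
    (hΓ : Γ ≤ hypercube n) (hab : a ≠ b) (ha : a ∈ S) (hb : b ∈ S) (h4 : 4 ≤ S.ncard)
    (hS : ConnectedOn Γ S) : ∃ J, IsCut Γ S a b J := by
  obtain ⟨i, hi⟩ := Function.ne_iff.1 hab
  obtain ⟨x, hx, ex, -, hxi⟩ := h.exists_adj_apply_eq hΓ h4 i
  obtain ⟨y, hy, ey, -, hyi⟩ := h.symm.exists_adj_apply_eq hΓ h4 i
  set H := component Γ (S ∩ {z | z i = a i}) a
  have hHS : H ⊆ S ∩ {z | z i = a i} := component_subset
  have haH : a ∈ H := mem_component_self ⟨ha, rfl⟩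
  have hbH : b ∉ H := fun hbH => hi (hHS hbH).2.symm
  have hyH : y ∉ H := fun hyH => hi ((hHS hyH).2.symm.trans hyi)
  set J := component Γ (S \ H) b
  have hJS : J ⊆ S \ H := component_subset
  have hnotJ : ∀ z ∈ H, z ∈ S \ J := fun z hz => ⟨(hHS hz).1, fun hzJ => (hJS hzJ).2 hz⟩
  have hbJ : b ∈ J := mem_component_self ⟨hb, hbH⟩
  have hcross : ∀ u ∈ S \ J, ∀ v ∈ J, Γ.Adj u v → v = flip u i := by
    intro u hu v hv e
    have huH : u ∈ H := mem_of_adj_component_sdiff hu.1 hu.2 hv e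
    have hvi : v i ≠ a i := fun hvi =>
      (hJS hv).2 (mem_component_of_adj huH ⟨(hJS hv).1, hvi⟩ e)
    obtain ⟨j, rfl⟩ := exists_eq_flip hΓ e
    by_cases hij : i = j
    · rw [hij]
    · rw [flip_of_ne hij] at hvi
      exact absurd (hHS huH).2 hvi
  have hinj : Function.Injective fun u => flip u i :=
    Function.Involutive.injective fun _ => flip_flip
  exact ⟨_, isCut_insert_component hinj h (hJS.trans Set.sdiff_subset) hbJ
    (hnotJ a haH) (hS.sdiff_component_sdiff connectedOn_component (fun z hz => (hHS hz).1) haH)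
    (hnotJ x (mem_component_of_adj haH ⟨hx, hxi⟩ ex)) ex.ne.symm
    (mem_component_of_adj hbJ ⟨hy, hyH⟩ ey) ey hcross⟩

end Direction

section Cores

variable {V : Type*} {Γ : SimpleGraph V} {S J D K P : Set V} {a b c w : V}

/-- `P` contains `a` and `c`, is joined to `D` only through `c`, and can be cut off together with
`D` from the rest of `S`: what remains is connected, with and without `b`, and its vertices other
than `b` have at most one neighbour in `P ∪ D`. -/
structure IsCore {V : Type*} (Γ : SimpleGraph V) (S : Set V) (a b c : V) (D P : Set V) :
    Prop where
  left_mem : a ∈ P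
  cut_mem : c ∈ P
  right_notMem : b ∉ P
  subset : P ⊆ S
  notMem_D : ∀ x ∈ P, x ∉ D
  eq_cut_of_adj : ∀ x ∈ D, ∀ y ∈ P, Γ.Adj x y → y = c
  connectedOn : ConnectedOn Γ P
  connectedOn_rest : ConnectedOn Γ (S \ (P ∪ D))
  connectedOn_rest_sdiff : ConnectedOn Γ ((S \ (P ∪ D)) \ {b})
  eq_of_adj : ∀ x ∈ S \ (P ∪ D), x ≠ b →
    ∀ y ∈ P ∪ D, Γ.Adj x y → ∀ y' ∈ P ∪ D, Γ.Adj x y' → y = y'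

theorem IsCut.isCore (h : IsCut Γ S a b J) (hD : IsLobe Γ (S \ J) a c D) :
    IsCore Γ S a b c D ((S \ J) \ D) := by
  have hunion : (S \ J) \ D ∪ D = S \ J := Set.sdiff_union_of_subset hD.subset
  have hrest : S \ ((S \ J) \ D ∪ D) = J := by rw [hunion, Set.sdiff_sdiff_cancel_left h.subset]
  refine ⟨⟨h.left_mem, hD.root_notMem⟩, ⟨hD.attach_mem, hD.attach_notMem⟩,
    fun hb => hb.1.2 h.right_mem, Set.sdiff_subset.trans Set.sdiff_subset, fun _ hx => hx.2,
    fun x hx y hy e => (hD.closed x hx y hy.1 e).resolve_left hy.2,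
    hD.connectedOn_sdiff h.connectedOn_sdiff, ?_, ?_, ?_⟩
  · rw [hrest]
    exact h.connectedOn
  · rw [hrest]
    exact h.connectedOn_sdiff_right
  · rw [hrest, hunion]
    exact h.eq_of_adj_left

namespace IsCore

theorem not_adj_of_isLobe (h : IsCore Γ S a b c D P) (hK : IsLobe Γ P a w K) (hcK : c ∉ K) :
    ∀ x ∈ K, ∀ y ∈ D, ¬ Γ.Adj x y := fun x hx y hy e =>
  hcK (h.eq_cut_of_adj y hy x (hK.subset hx) e.symm ▸ hx)

theorem exists_adj_rest (h : IsCore Γ S a b c D P) (h3 : RootedThreeConnected Γ S a b)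
    (hD : ∃ z ∈ D, z ∈ S ∧ z ≠ b) (hK : IsLobe Γ P a w K) (hcK : c ∉ K) :
    ∃ x ∈ K, ∃ y ∈ (S \ (P ∪ D)) \ {b}, Γ.Adj x y := by
  obtain ⟨z, hzD, hzS, hzb⟩ := hD
  obtain ⟨x, hx, y, hy, hyK, hyw, hyb, e⟩ := h3 K (hK.subset.trans h.subset) hK.nonempty
    hK.root_notMem (fun hbK => h.right_notMem (hK.subset hbK))
    ⟨z, hzS, fun hzK => h.notMem_D z (hK.subset hzK) hzD,
      fun hza => h.notMem_D a h.left_mem (hza ▸ hzD), hzb⟩ w b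
  refine ⟨x, hx, y, ⟨⟨hy, ?_⟩, hyb⟩, e⟩
  rintro (hyP | hyD)
  · exact (hK.closed x hx y hyP e).elim hyK hyw
  · exact h.not_adj_of_isLobe hK hcK x hx y hyD e

theorem sdiff_isLobe (h : IsCore Γ S a b c D P) (h3 : RootedThreeConnected Γ S a b)
    (hD : ∃ z ∈ D, z ∈ S ∧ z ≠ b) (hK : IsLobe Γ P a w K) (hcK : c ∉ K) :
    IsCore Γ S a b c D (P \ K) := by
  obtain ⟨x, hx, y, hy, e⟩ := h.exists_adj_rest h3 hD hK hcK
  have hrest : S \ (P \ K ∪ D) = S \ (P ∪ D) ∪ K := by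
    ext v
    have := @hK.subset v
    have := @h.subset v
    have := h.notMem_D v
    simp only [Set.mem_sdiff, Set.mem_union]
    tauto
  have hrest' : (S \ (P ∪ D) ∪ K) \ {b} = (S \ (P ∪ D)) \ {b} ∪ K := by
    rw [Set.union_sdiff_distrib, Set.sdiff_singleton_eq_self
      fun hbK => h.right_notMem (hK.subset hbK)]
  have hsub : P \ K ∪ D ⊆ P ∪ D := Set.union_subset_union_left D Set.sdiff_subset
  refine ⟨⟨h.left_mem, hK.root_notMem⟩, ⟨h.cut_mem, hcK⟩, fun hb => h.right_notMem hb.1,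
    Set.sdiff_subset.trans h.subset, fun x hx => h.notMem_D x hx.1,
    fun x hx y hy => h.eq_cut_of_adj x hx y hy.1, hK.connectedOn_sdiff h.connectedOn, ?_, ?_, ?_⟩
  · rw [hrest]
    exact h.connectedOn_rest.union hK.connectedOn hy.1 hx e.symm
  · rw [hrest, hrest']
    exact h.connectedOn_rest_sdiff.union hK.connectedOn hy hx e.symm
  · rw [hrest]
    rintro v (hv | hv) hvb u hu eu u' hu' eu'
    · exact h.eq_of_adj v hv hvb u (hsub hu) eu u' (hsub hu') eu'
    · have heq : ∀ u ∈ P \ K ∪ D, Γ.Adj v u → u = w := by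
        rintro u (hu | hu) eu
        · exact (hK.closed v hv u hu.1 eu).resolve_left hu.2
        · exact absurd eu (h.not_adj_of_isLobe hK hcK v hv u hu)
      rw [heq u hu eu, heq u' hu' eu']

theorem rootedTwoConnected_of_minimal [Finite V] (h : Minimal (IsCore Γ S a b c D) P)
    (h3 : RootedThreeConnected Γ S a b) (hD : ∃ z ∈ D, z ∈ S ∧ z ≠ b) :
    RootedTwoConnected Γ P a c := by
  intro U hUP hU haU hcU t
  by_contra! hno
  obtain ⟨w, K, hK, hKU⟩ := exists_isMinLobe_subset (t := t) h.prop.connectedOn h.prop.left_mem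
    hUP hU haU fun x hx y hy e => by
      by_contra! hy'
      exact hno x hx y hy hy'.1 hy'.2 e
  have hcore := h.prop.sdiff_isLobe h3 hD hK.toIsLobe fun hcK => hcU (hKU hcK)
  obtain ⟨z, hz⟩ := hK.nonempty
  exact (h.le_of_le hcore Set.sdiff_subset (hK.subset hz)).2 hz

end IsCore

end Cores

section Splits

variable {n e : ℕ} {Γ : SimpleGraph (Fin n → Bool)} {S : Set (Fin n → Bool)}
  {a b : Fin n → Bool}

theorem IsCore.isSplit_of_minimal {D J P : Set (Fin n → Bool)} {c : Fin n → Bool}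
    (hmin : Minimal (IsCore Γ S a b c D) P) (hJ : IsCut Γ S a b J)
    (hD : IsMinLobe Γ (S \ J) a c D) (hPJ : P ⊆ S \ J) (h : RootedThreeConnected Γ S a b)
    (hdeg : ∀ z ∈ S, z ≠ a → z ≠ b → e < degreeIn Γ S z) :
    IsSplit Γ e a b P D (S \ (P ∪ D)) c := by
  have hP := hmin.prop
  have hDS : D ⊆ S := hD.subset.trans Set.sdiff_subset
  have hS : P ∪ D ∪ S \ (P ∪ D) = S := Set.union_sdiff_cancel (Set.union_subset hP.subset hDS)
  have hJsub : J ⊆ S \ (P ∪ D) := fun x hx => ⟨hJ.subset hx, fun hx' =>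
    hx'.elim (fun hxP => (hPJ hxP).2 hx) fun hxD => (hD.subset hxD).2 hx⟩
  have hadj (x) (hx : x ∈ D) (y) (hy : y ∈ S \ (P ∪ D)) (hxy : Γ.Adj x y) : y ∈ J := by
    by_contra hyJ
    rcases hD.closed x hx y ⟨hy.1, hyJ⟩ hxy with hyD | rfl
    · exact hy.2 (.inr hyD)
    · exact hy.2 (.inl hP.cut_mem)
  obtain ⟨z, hz⟩ := hD.nonempty
  have hzb : z ≠ b := fun hzb => (hD.subset hz).2 (hzb ▸ hJ.right_mem)
  exact {
    rootedThreeConnected := hS.symm ▸ h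
    lt_degreeIn := hS.symm ▸ hdeg
    notMem_D := hP.notMem_D
    notMem_J := fun x hx hx' => hx'.2 hx
    left_mem := hP.left_mem
    cut_mem := hP.cut_mem
    right_mem := hJsub hJ.right_mem
    connectedOn_P := hP.connectedOn
    rootedTwoConnected_P := IsCore.rootedTwoConnected_of_minimal hmin h ⟨z, hz, hDS hz, hzb⟩
    nonempty_D := hD.nonempty
    connectedOn_D := hD.connectedOn
    linked_cut := fun z hz t => hD.linked_attach hJ.connectedOn_sdiff hJ.left_mem hz
    eq_cut_of_adj := hP.eq_cut_of_adj
    eq_of_adj_J := fun x hx y hy hxy y' hy' hxy' => hJ.eq_of_adj_right x (hD.subset hx)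
      y (hadj x hx y hy hxy) hxy y' (hadj x hx y' hy' hxy') hxy'
    connectedOn_J := hP.connectedOn_rest
    connectedOn_J_sdiff := hP.connectedOn_rest_sdiff
    nonempty_J_sdiff := hJ.nonempty_sdiff_right.mono (Set.sdiff_subset_sdiff_left hJsub)
    eq_of_adj_PD := hP.eq_of_adj }

theorem IsCut.exists_isSplit {J : Set (Fin n → Bool)} (hJ : IsCut Γ S a b J)
    (h : RootedThreeConnected Γ S a b)
    (hdeg : ∀ z ∈ S, z ≠ a → z ≠ b → e < degreeIn Γ S z) :
    ∃ P D J c, P ∪ D ∪ J = S ∧ IsSplit Γ e a b P D J c := by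
  obtain ⟨z, hz, hza⟩ := hJ.exists_ne_left
  obtain ⟨c, D, hD, -⟩ := (isLobe_component (G := Γ) (r := a) hJ.left_mem hz hza
    fun hz => hz.right_mem.2 rfl).exists_isMinLobe
  obtain ⟨P, hPsub, hmin⟩ := (Set.toFinite {P | IsCore Γ S a b c D P}).exists_le_minimal
    (hJ.isCore hD.toIsLobe)
  have hPJ : P ⊆ S \ J := hPsub.trans Set.sdiff_subset
  have hsub : P ∪ D ⊆ S := (Set.union_subset hPJ hD.subset).trans Set.sdiff_subset
  exact ⟨P, D, S \ (P ∪ D), c, Set.union_sdiff_cancel hsub,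
    IsCore.isSplit_of_minimal hmin hJ hD hPJ h hdeg⟩

end Splits

section Separations

variable {V : Type*} {Γ : SimpleGraph V} {S S₁ S₂ T U : Set V} {a b u v : V} {k : ℕ}

/-- `u` and `v` separate a nonempty part `U` of `S` from `a`, `b` and a further vertex; they may
coincide with `a` and `b`. -/
structure IsSeparation (Γ : SimpleGraph V) (S : Set V) (a b : V) (U : Set V) (u v : V) :
    Prop where
  subset : U ⊆ S
  nonempty : U.Nonempty
  left_notMem : a ∉ U
  right_notMem : b ∉ U
  exists_ne : ∃ z ∈ S, z ∉ U ∧ z ≠ a ∧ z ≠ b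
  closed : ∀ x ∈ U, ∀ y ∈ S, Γ.Adj x y → y ∈ insert u (insert v U)

theorem exists_isSeparation (h : ¬ RootedThreeConnected Γ S a b) :
    ∃ U u v, IsSeparation Γ S a b U u v := by
  simp only [RootedThreeConnected, not_forall] at h
  obtain ⟨U, hUS, hU, haU, hbU, hz, u, v, hno⟩ := h
  refine ⟨U, u, v, hUS, hU, haU, hbU, hz, fun x hx y hy e => ?_⟩
  by_contra! hyU
  simp only [Set.mem_insert_iff, not_or] at hyU
  exact hno ⟨x, hx, y, hy, hyU.2.2, hyU.1, hyU.2.1, e⟩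

theorem RootedTwoConnected.of_closed (h : RootedTwoConnected Γ S a b)
    (hT : ∀ x ∈ T, x ≠ u → x ≠ v → x ∈ S ∧ x ≠ a ∧ x ≠ b ∧ ∀ y ∈ S, Γ.Adj x y → y ∈ T) :
    RootedTwoConnected Γ T u v := by
  intro W hWT hW huW hvW t
  have hclosed : ∀ x ∈ W, x ∈ S ∧ x ≠ a ∧ x ≠ b ∧ ∀ y ∈ S, Γ.Adj x y → y ∈ T := fun x hx =>
    hT x (hWT hx) (fun hxu => huW (hxu ▸ hx)) fun hxv => hvW (hxv ▸ hx)
  obtain ⟨x, hx, y, hy, hyW, hyt, e⟩ := h W (fun x hx => (hclosed x hx).1) hW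
    (fun haW => (hclosed a haW).2.1 rfl) (fun hbW => (hclosed b hbW).2.2.1 rfl) t
  exact ⟨x, hx, y, (hclosed x hx).2.2.2 y hy e, hyW, hyt, e⟩

theorem LongPath.extend_ends (h : LongPath Γ T u v k) (hT : T ⊆ insert u (insert v U))
    (h₁ : Linked Γ S₁ a u) (h₂ : Linked Γ S₂ b v) (hS₁ : ∀ x ∈ S₁, x ∉ U)
    (hS₂ : ∀ x ∈ S₂, x ∉ U) (hdisj : ∀ x ∈ S₁, x ∉ S₂) (hne : ¬ (a = u ∧ b = v)) :
    LongPath Γ (S₁ ∪ T ∪ S₂) a b (k + 1) := by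
  have hpath {k₁ k₂} (h₁ : LongPath Γ S₁ a u k₁) (h₂ : LongPath Γ S₂ b v k₂) :
      LongPath Γ (S₁ ∪ T ∪ S₂) a b (k₁ + k + k₂) := by
    refine (h₁.append h ?_).append h₂.symm ?_
    · intro x hx hxT
      rcases hT hxT with hxu | rfl | hxU
      · exact hxu
      · exact absurd h₂.right_mem (hdisj x hx)
      · exact absurd hxU (hS₁ x hx)
    · rintro x (hx | hxT) hx₂
      · exact absurd hx₂ (hdisj x hx)
      rcases hT hxT with rfl | hxv | hxU
      · exact absurd hx₂ (hdisj x h₁.right_mem)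
      · exact hxv
      · exact absurd hxU (hS₂ x hx₂)
  by_cases hau : a = u
  · exact (hpath h₁ (h₂.one_of_ne fun hbv => hne ⟨hau, hbv⟩)).mono_length (by omega)
  · exact (hpath (h₁.one_of_ne hau) h₂).mono_length (by omega)

namespace IsSeparation

variable (h : IsSeparation Γ S a b U u v)

include h

theorem swap : IsSeparation Γ S a b U v u :=
  { h with closed := Set.insert_comm u v U ▸ h.closed }

theorem right_cut_mem (h2 : RootedTwoConnected Γ S a b) : v ∈ S \ U ∧ v ≠ u := by
  obtain ⟨x, hx, y, hy, hyU, hyu, e⟩ :=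
    h2 U h.subset h.nonempty h.left_notMem h.right_notMem u
  obtain rfl : y = v := ((h.closed x hx y hy e).resolve_left hyu).resolve_right hyU
  exact ⟨⟨hy, hyU⟩, hyu⟩

theorem insert_insert_ssubset (h2 : RootedTwoConnected Γ S a b) (ha : a ∈ S) (hb : b ∈ S)
    (hab : a ≠ b) : insert u (insert v U) ⊂ S := by
  refine ⟨Set.insert_subset (h.swap.right_cut_mem h2).1.1
    (Set.insert_subset (h.right_cut_mem h2).1.1 h.subset), fun hsub => ?_⟩
  obtain ⟨z, hz, hzU, hza, hzb⟩ := h.exists_ne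
  have hcut {x} (hx : x ∈ S) (hxU : x ∉ U) : x = u ∨ x = v :=
    (hsub hx).imp_right fun hx' => hx'.resolve_right hxU
  rcases hcut ha h.left_notMem with rfl | rfl <;>
    rcases hcut hb h.right_notMem with rfl | rfl <;>
    rcases hcut hz hzU with rfl | rfl <;> contradiction

theorem unseparated (h2 : RootedTwoConnected Γ S a b) :
    Unseparated Γ (S \ U) {a, b} {u, v} := by
  intro s
  by_contra! hno
  let W : Set V := {z | ∃ c ∈ ({u, v} : Set V), Linked Γ ((S \ U) \ {s}) c z}
  have hW {c} (hc : c ∈ ({a, b} : Set V)) (hcU : c ∉ U) : c ∉ W ∪ U := by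
    rintro (⟨c', hc', hlink⟩ | hc')
    · exact hno c hc c' hc' hlink.symm
    · exact hcU hc'
  obtain ⟨x, hx, y, hy, hyW, hys, e⟩ := h2 (W ∪ U)
    (Set.union_subset (fun z ⟨_, _, hz⟩ => hz.right_mem.1.1) h.subset) (h.nonempty.inr)
    (hW (.inl rfl) h.left_notMem) (hW (.inr rfl) h.right_notMem) s
  have hy' : y ∈ (S \ U) \ {s} := ⟨⟨hy, fun hyU => hyW (.inr hyU)⟩, hys⟩
  refine hyW (.inl ?_)
  rcases hx with ⟨c, hc, hlink⟩ | hxU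
  · exact ⟨c, hc, hlink.trans_adj e hy'⟩
  · rcases h.closed x hxU y hy e with hyu | hyv | hyU
    · exact ⟨y, .inl hyu, .refl hy'⟩
    · exact ⟨y, .inr hyv, .refl hy'⟩
    · exact absurd hyU hy'.1.2

theorem longPath_succ [Finite V] (h2 : RootedTwoConnected Γ S a b)
    (hpath : LongPath Γ (insert u (insert v U)) u v k) (hne : ¬ (a = u ∧ b = v))
    (hne' : ¬ (a = v ∧ b = u)) : LongPath Γ S a b (k + 1) := by
  obtain ⟨S₁, hS₁, S₂, hS₂, hdisj, hlink⟩ := (h.unseparated h2).exists_disjoint_linked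
  have hunion : S₁ ∪ insert u (insert v U) ∪ S₂ ⊆ S :=
    Set.union_subset (Set.union_subset (hS₁.trans Set.sdiff_subset)
      (Set.insert_subset (h.swap.right_cut_mem h2).1.1
        (Set.insert_subset (h.right_cut_mem h2).1.1 h.subset))) (hS₂.trans Set.sdiff_subset)
  rcases hlink with ⟨h₁, h₂⟩ | ⟨h₁, h₂⟩
  · exact (hpath.extend_ends subset_rfl h₁ h₂ (fun x hx => (hS₁ hx).2) (fun x hx => (hS₂ hx).2)
      hdisj hne).mono hunion
  · exact (hpath.symm.extend_ends (Set.insert_comm u v U).subset h₁ h₂ (fun x hx => (hS₁ hx).2)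
      (fun x hx => (hS₂ hx).2) hdisj hne').mono hunion

end IsSeparation

end Separations

section InductionStep

variable {n d e : ℕ} {Γ : SimpleGraph (Fin n → Bool)} {S T U : Set (Fin n → Bool)}
  {a b u v z : Fin n → Bool}

namespace Admissible

theorem of_closed (h : Admissible Γ d S a b)
    (hT : ∀ x ∈ T, x ≠ u → x ≠ v → x ∈ S ∧ x ≠ a ∧ x ≠ b ∧ ∀ y ∈ S, Γ.Adj x y → y ∈ T)
    (hu : u ∈ T) (hv : v ∈ T) (huv : u ≠ v) (hz : z ∈ T) (hzu : z ≠ u) (hzv : z ≠ v) :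
    Admissible Γ d T u v where
  left_mem := hu
  right_mem := hv
  ne := huv
  three_le_ncard := (Set.two_lt_ncard_iff (Set.toFinite T)).2
    ⟨u, v, z, hu, hv, hz, huv, hzu.symm, hzv.symm⟩
  rootedTwoConnected := h.rootedTwoConnected.of_closed hT
  le_degreeIn x hx hxu hxv := by
    obtain ⟨hxS, hxa, hxb, hadj⟩ := hT x hx hxu hxv
    exact (h.le_degreeIn x hxS hxa hxb).trans (degreeIn_le hadj)

theorem insert_insert (h : Admissible Γ d S a b) (hsep : IsSeparation Γ S a b U u v) :
    Admissible Γ d (insert u (insert v U)) u v := by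
  obtain ⟨z, hz⟩ := hsep.nonempty
  have hu := hsep.swap.right_cut_mem h.rootedTwoConnected
  have hv := hsep.right_cut_mem h.rootedTwoConnected
  refine h.of_closed ?_ (.inl rfl) (.inr (.inl rfl)) hu.2 (.inr (.inr hz))
    (fun hzu => hu.1.2 (hzu ▸ hz)) fun hzv => hv.1.2 (hzv ▸ hz)
  intro x hx hxu hxv
  have hxU : x ∈ U := (hx.resolve_left hxu).resolve_left hxv
  exact ⟨hsep.subset hxU, fun hxa => hsep.left_notMem (hxa ▸ hxU),
    fun hxb => hsep.right_notMem (hxb ▸ hxU), hsep.closed x hxU⟩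

theorem sdiff (h : Admissible Γ d S a b) (hsep : IsSeparation Γ S a b U a b) :
    Admissible Γ d (S \ U) a b := by
  obtain ⟨z, hz, hzU, hza, hzb⟩ := hsep.exists_ne
  refine h.of_closed ?_ ⟨h.left_mem, hsep.left_notMem⟩ ⟨h.right_mem, hsep.right_notMem⟩ h.ne
    ⟨hz, hzU⟩ hza hzb
  intro x hx hxa hxb
  refine ⟨hx.1, hxa, hxb, fun y hy e => ⟨hy, fun hyU => ?_⟩⟩
  rcases hsep.closed y hyU x hx.1 e.symm with hxa' | hxb' | hxU
  exacts [hxa hxa', hxb hxb', hx.2 hxU]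

end Admissible

theorem IsFullSubcube.flip_mem_of_apply_ne (h : IsFullSubcube Γ S d) (ha : a ∈ S) (hb : b ∈ S)
    {i : Fin n} (hi : a i ≠ b i) : flip a i ∈ S := by
  obtain ⟨I, u, -, rfl, -⟩ := h
  rw [flip_mem_subcube_iff ha]
  by_contra hiI
  exact hi ((ha i hiI).trans (hb i hiI).symm)

/- Two `d`-cubes through `a` and `b` share a further vertex, so the two sides of a separation by
`a` and `b` cannot both be exceptional. -/
theorem IsSeparation.nearlySpanned (hsep : IsSeparation Γ S a b U a b)
    (hadm : Admissible Γ d S a b) (h₁ : NearlySpanned Γ d (insert a (insert b U)) a b)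
    (h₂ : NearlySpanned Γ d (S \ U) a b) : NearlySpanned Γ d S a b := by
  have hsub : insert a (insert b U) ⊆ S :=
    Set.insert_subset hadm.left_mem (Set.insert_subset hadm.right_mem hsep.subset)
  refine .of_longPath ?_
  by_cases hcube₁ : IsEvenSubcube Γ d (insert a (insert b U)) a b
  swap
  · exact (h₁.2 hcube₁).mono hsub
  by_cases hcube₂ : IsEvenSubcube Γ d (S \ U) a b
  swap
  · exact (h₂.2 hcube₂).mono Set.sdiff_subset
  exfalso
  obtain ⟨i, hi⟩ := Function.ne_iff.1 hadm.ne
  rcases hcube₁.1.flip_mem_of_apply_ne h₁.1.left_mem h₁.1.right_mem hi with hmem | hmem | hmem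
  · exact flip_ne_self hmem
  · have hparity := hcube₁.2
    rw [← hmem, parity_flip] at hparity
    simp at hparity
  · exact (hcube₂.1.flip_mem_of_apply_ne h₂.1.left_mem h₂.1.right_mem hi).2 hmem

theorem IsSeparation.nearlySpanned_of_ssubset (hsep : IsSeparation Γ S a b U u v)
    (hadm : Admissible Γ d S a b)
    (ih : ∀ T ⊂ S, ∀ a b, Admissible Γ d T a b → NearlySpanned Γ d T a b) :
    NearlySpanned Γ d S a b := by
  have hU : NearlySpanned Γ d (insert u (insert v U)) u v := ih _
    (hsep.insert_insert_ssubset hadm.rootedTwoConnected hadm.left_mem hadm.right_mem hadm.ne)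
    u v (hadm.insert_insert hsep)
  have hsub : S \ U ⊂ S := by
    obtain ⟨z, hz⟩ := hsep.nonempty
    exact ⟨Set.sdiff_subset, fun h => (h (hsep.subset hz)).2 hz⟩
  by_cases huv : a = u ∧ b = v
  · obtain ⟨rfl, rfl⟩ := huv
    exact hsep.nearlySpanned hadm hU (ih _ hsub a b (hadm.sdiff hsep))
  by_cases hvu : a = v ∧ b = u
  · obtain ⟨rfl, rfl⟩ := hvu
    rw [Set.insert_comm] at hU
    exact hsep.swap.nearlySpanned hadm hU.symm (ih _ hsub a b (hadm.sdiff hsep.swap))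
  · exact .of_longPath ((hsep.longPath_succ hadm.rootedTwoConnected hU.1 huv hvu).mono_length
      (by omega))

theorem Admissible.nearlySpanned_of_rootedThreeConnected (h : Admissible Γ (e + 1) S a b)
    (h3 : RootedThreeConnected Γ S a b) (hΓ : Γ ≤ hypercube n) (he : 2 ≤ e)
    (hpaths : LongPathProperty Γ e) : NearlySpanned Γ (e + 1) S a b := by
  obtain ⟨z, hz, hza, hzb⟩ := exists_mem_ne_ne_of_two_lt_ncard h.three_le_ncard a b
  have h4 : 4 ≤ S.ncard :=
    (Nat.succ_le_succ he).trans_lt ((h.le_degreeIn z hz hza hzb).trans_lt (degreeIn_lt_ncard hz))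
  have hS : ConnectedOn Γ S := h.rootedTwoConnected.connectedOn h.three_le_ncard
  obtain ⟨J, hJ⟩ := h3.exists_isCut hΓ h.ne h.left_mem h.right_mem h4 hS
  obtain ⟨P, D, J, c, rfl, hsplit⟩ := hJ.exists_isSplit h3 h.le_degreeIn
  exact hsplit.nearlySpanned hΓ he hpaths

theorem LongPathProperty.succ (hpaths : LongPathProperty Γ e) (hΓ : Γ ≤ hypercube n)
    (he : 2 ≤ e) : LongPathProperty Γ (e + 1) := by
  suffices h : ∀ S a b, Admissible Γ (e + 1) S a b → NearlySpanned Γ (e + 1) S a b from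
    fun S a b hadm => ⟨(h S a b hadm).1, fun _ => h S a b hadm⟩
  intro S
  induction S using WellFoundedLT.induction with
  | ind S ih =>
    intro a b hadm
    by_cases h3 : RootedThreeConnected Γ S a b
    · exact hadm.nearlySpanned_of_rootedThreeConnected h3 hΓ he hpaths
    · obtain ⟨U, u, v, hsep⟩ := exists_isSeparation h3
      exact hsep.nearlySpanned_of_ssubset hadm ih

theorem longPathProperty (hΓ : Γ ≤ hypercube n) (hd : 2 ≤ d) : LongPathProperty Γ d := by
  induction d, hd using Nat.le_induction with
  | base => exact longPathProperty_two hΓ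
  | succ e he ih => exact ih.succ hΓ he

end InductionStep

section Subgraphs

variable {V : Type*} {H : SimpleGraph V} {G : H.Subgraph} {a b v z : V} {k : ℕ}

theorem LongPath.exists_coe_walk (h : LongPath G.spanningCoe G.verts a b k) (ha : a ∈ G.verts)
    (hb : b ∈ G.verts) : ∃ p : G.coe.Walk ⟨a, ha⟩ ⟨b, hb⟩, p.IsPath ∧ k ≤ p.length := by
  obtain ⟨p, hp, hS, hk⟩ := h
  have hmap := p.map_induce hS
  have hpath : (p.induce G.verts hS).IsPath := .of_map (by rwa [hmap])
  have hlength : (p.induce G.verts hS).length = p.length :=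
    (SimpleGraph.Walk.length_map _ _).symm.trans (congrArg SimpleGraph.Walk.length hmap)
  exact ⟨p.induce G.verts hS, hpath, hk.trans_eq hlength.symm⟩

theorem exists_adj_crossing_of_twoConnected (h2 : TwoConnected G.coe) {U : Set V}
    (hv : v ∈ G.verts) (ha : a ∈ G.verts) (hb : b ∈ G.verts) (hav : a ≠ v) (hbv : b ≠ v)
    (haU : a ∈ U) (hbU : b ∉ U) :
    ∃ x ∈ U, ∃ y ∈ G.verts, y ∉ U ∧ y ≠ v ∧ G.spanningCoe.Adj x y := by
  let K := (⊤ : G.coe.Subgraph).deleteVerts {⟨v, hv⟩}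
  have mem_K {q : V} (hq : q ∈ G.verts) (hqv : q ≠ v) : (⟨q, hq⟩ : G.verts) ∈ K.verts :=
    ⟨trivial, fun h => hqv (congrArg Subtype.val h)⟩
  obtain ⟨p⟩ := (h2.2 ⟨v, hv⟩).preconnected ⟨_, mem_K ha hav⟩ ⟨_, mem_K hb hbv⟩
  obtain ⟨e, -, hfst, hsnd⟩ := p.exists_boundary_dart {x | x.1.1 ∈ U} haU hbU
  have hadj : G.coe.Adj e.fst.1 e.snd.1 := K.adj_sub e.adj
  exact ⟨e.fst.1, hfst, e.snd.1, e.snd.1.2, hsnd, fun h => e.snd.2.2 (Subtype.ext h), hadj⟩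

theorem rootedTwoConnected_of_twoConnected (h2 : TwoConnected G.coe) (ha : a ∈ G.verts)
    (hb : b ∈ G.verts) (hab : a ≠ b) : RootedTwoConnected G.spanningCoe G.verts a b := by
  intro U hU ⟨z, hz⟩ haU hbU t
  have hza : z ≠ a := ne_of_mem_of_not_mem hz haU
  obtain ⟨x, hx, y, hy, hyU, -, e⟩ :=
    exists_adj_crossing_of_twoConnected h2 ha (hU hz) hb hza hab.symm hz hbU
  by_cases hyt : y = t
  · subst hyt
    obtain ⟨w, hw, hwU, hwy⟩ : ∃ w ∈ G.verts, w ∉ U ∧ w ≠ y := by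
      by_cases hay : a = y
      · exact ⟨b, hb, hbU, hay ▸ hab.symm⟩
      · exact ⟨a, ha, haU, hay⟩
    exact exists_adj_crossing_of_twoConnected h2 hy (hU hz) hw
      (ne_of_mem_of_not_mem hz hyU) hwy hz hwU
  · exact ⟨x, hx, y, hy, hyU, hyt, e⟩

theorem degreeIn_spanningCoe_verts :
    degreeIn G.spanningCoe G.verts z = (G.neighborSet z).ncard := by
  rw [degreeIn]
  exact congrArg Set.ncard (Set.inter_eq_right.2 (G.neighborSet_subset_verts z))

variable [Finite V]

theorem RootedTwoConnected.two_le_degreeIn {Γ : SimpleGraph V} {S : Set V}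
    (h : RootedTwoConnected Γ S a b) (hz : z ∈ S) (hza : z ≠ a) (hzb : z ≠ b) :
    2 ≤ degreeIn Γ S z := by
  have exists_adj (t : V) : ∃ y ∈ S, y ≠ t ∧ Γ.Adj z y := by
    obtain ⟨_, rfl, y, hy, -, hyt, e⟩ := h {z} (by simpa using hz) ⟨z, rfl⟩ hza.symm hzb.symm t
    exact ⟨y, hy, hyt, e⟩
  obtain ⟨x, hx, -, ex⟩ := exists_adj z
  obtain ⟨y, hy, hyx, ey⟩ := exists_adj x
  exact (Set.one_lt_ncard).2 ⟨x, ⟨hx, ex⟩, y, ⟨hy, ey⟩, hyx.symm⟩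

theorem three_le_ncard_verts_of_twoConnected (h2 : TwoConnected G.coe) : 3 ≤ G.verts.ncard := by
  obtain ⟨x, y, z, hxy, hxz, hyz⟩ := h2.1
  exact (Set.two_lt_ncard_iff).2 ⟨x, y, z, x.2, y.2, z.2, Subtype.coe_ne_coe.2 hxy,
    Subtype.coe_ne_coe.2 hxz, Subtype.coe_ne_coe.2 hyz⟩

theorem two_le_degreeIn_of_twoConnected (h2 : TwoConnected G.coe) (hz : z ∈ G.verts) :
    2 ≤ degreeIn G.spanningCoe G.verts z := by
  have hcard := three_le_ncard_verts_of_twoConnected h2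
  obtain ⟨a, ha, haz, -⟩ := exists_mem_ne_ne_of_two_lt_ncard hcard z z
  obtain ⟨b, hb, hbz, hba⟩ := exists_mem_ne_ne_of_two_lt_ncard hcard z a
  exact (rootedTwoConnected_of_twoConnected h2 ha hb hba.symm).two_le_degreeIn hz haz.symm hbz.symm

end Subgraphs

section Isomorphism

variable {n d : ℕ} {x y : Fin n → Bool} {I : Finset (Fin n)} {u : Fin n → Bool}

theorem even_hammingDist_iff : Even (hammingDist x y) ↔ parity x = parity y := by
  have hsum : ∑ i, (x i).toNat + ∑ i, (y i).toNat =
      hammingDist x y + 2 * ∑ i, (x i && y i).toNat := by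
    rw [hammingDist, Finset.card_filter, Finset.mul_sum, ← Finset.sum_add_distrib,
      ← Finset.sum_add_distrib]
    refine Finset.sum_congr rfl fun i _ => ?_
    cases x i <;> cases y i <;> rfl
  have hbodd := congrArg Nat.bodd hsum
  simp only [Nat.bodd_add, Nat.bodd_mul, Nat.bodd_two, Bool.false_and, Bool.xor_false] at hbodd
  rw [← Nat.not_odd_iff_even, Nat.odd_iff, Nat.mod_two_of_bodd, ← hbodd, parity, parity]
  cases (∑ i, (x i).toNat).bodd <;> cases (∑ i, (y i).toNat).bodd <;> simp

theorem hypercube_adj_iff_hammingDist : (hypercube n).Adj x y ↔ hammingDist x y = 1 :=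
  hypercube_adj_iff.trans hammingDist_eq_one_iff.symm

/-- A subcube is parametrised by the values on its free coordinates, numbered by `φ`. -/
def subcubeEquiv (u : Fin n → Bool) (φ : I ≃ Fin d) : subcube I u ≃ (Fin d → Bool) where
  toFun x k := x.1 (φ.symm k)
  invFun y := ⟨fun i => if h : i ∈ I then y (φ ⟨i, h⟩) else u i, fun i hi => by simp [hi]⟩
  left_inv x := by
    ext i
    by_cases hi : i ∈ I
    · simp [hi]
    · simp [hi, x.2 i hi]
  right_inv y := by
    ext k
    simp

theorem hammingDist_subcubeEquiv (φ : I ≃ Fin d) (x y : subcube I u) :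
    hammingDist (subcubeEquiv u φ x) (subcubeEquiv u φ y) = hammingDist x.1 y.1 := by
  refine Finset.card_bij (fun k _ => (φ.symm k : Fin n))
    (fun k hk => (Finset.mem_filter_univ _).2 ((Finset.mem_filter_univ k).1 hk))
    (fun k _ l _ h => φ.symm.injective (Subtype.ext h)) fun i hi => ?_
  have hne : x.1 i ≠ y.1 i := by simpa using hi
  have hiI : i ∈ I := by_contra fun hiI => hne ((x.2 i hiI).trans (y.2 i hiI).symm)
  exact ⟨φ ⟨i, hiI⟩, (Finset.mem_filter_univ _).2 (by simpa [subcubeEquiv] using hne), by simp⟩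

theorem IsFullSubcube.adj_iff {Γ : SimpleGraph (Fin n → Bool)} {S : Set (Fin n → Bool)}
    (hΓ : Γ ≤ hypercube n) (h : IsFullSubcube Γ S d) (hx : x ∈ S) (hy : y ∈ S) :
    Γ.Adj x y ↔ (hypercube n).Adj x y := by
  refine ⟨fun e => hΓ e, fun e => ?_⟩
  obtain ⟨I, u, -, rfl, hadj⟩ := h
  obtain ⟨i, rfl⟩ := hypercube_adj_iff.1 e
  exact hadj x hx i ((flip_mem_subcube_iff hx).1 hy)

theorem IsFullSubcube.exists_iso {G : (hypercube n).Subgraph}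
    (h : IsFullSubcube G.spanningCoe G.verts d) :
    ∃ e : G.coe ≃g hypercube d, ∀ x y, hammingDist (e x) (e y) = hammingDist x.1 y.1 := by
  have hfull := h
  obtain ⟨I, u, hI, hverts, -⟩ := h
  let φ : G.verts ≃ (Fin d → Bool) :=
    (Equiv.setCongr hverts).trans (subcubeEquiv u (I.equivFinOfCardEq hI))
  have hφ (x y : G.verts) : hammingDist (φ x) (φ y) = hammingDist x.1 y.1 :=
    hammingDist_subcubeEquiv _ (Equiv.setCongr hverts x) (Equiv.setCongr hverts y)
  have hadj (x y : G.verts) : (hypercube d).Adj (φ x) (φ y) ↔ G.coe.Adj x y := by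
    rw [hypercube_adj_iff_hammingDist, hφ, ← hypercube_adj_iff_hammingDist]
    exact (hfull.adj_iff G.spanningCoe_le x.2 y.2).symm
  exact ⟨⟨φ, hadj _ _⟩, hφ⟩

end Isomorphism

theorem longPath_of_twoConnected {n d : ℕ} {G : (hypercube n).Subgraph} {a b : Fin n → Bool}
    (h2 : TwoConnected G.coe) (ha : a ∈ G.verts) (hb : b ∈ G.verts) (hab : a ≠ b)
    (hdeg : ∀ z ∈ G.verts, z ≠ a → z ≠ b → d ≤ degreeIn G.spanningCoe G.verts z)
    (hnot : ¬ IsEvenSubcube G.spanningCoe d G.verts a b) :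
    LongPath G.spanningCoe G.verts a b (2 ^ d - 1) := by
  have hroot := rootedTwoConnected_of_twoConnected h2 ha hb hab
  have hcard := three_le_ncard_verts_of_twoConnected h2
  by_cases hd : 2 ≤ d
  · have hpaths := longPathProperty G.spanningCoe_le hd _ _ _ ⟨ha, hb, hab, hcard, hroot, hdeg⟩
    have hthree : G.verts.ncard ≠ 3 := ncard_ne_three G.spanningCoe_le ha hb hab
      (two_le_degreeIn_of_twoConnected h2 ha) (two_le_degreeIn_of_twoConnected h2 hb)
    exact (hpaths.2 fun h => hthree h.2).2 hnot
  · have hpow : 2 ^ d - 1 ≤ 1 := by interval_cases d <;> norm_num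
    exact ((hroot.connectedOn hcard a ha b hb).one_of_ne hab).mono_length hpow

end HypercubePath

/-- Let `G` be a 2-connected subgraph of `Q_n` with distinct vertices `a, b` such that
every vertex other than `a, b` has degree at least `d`.  If `G` is not isomorphic to
`Q_d` with `a` and `b` at even Hamming distance, then `G` contains an `a-b` path of
length at least `2^d - 1`. -/
theorem hypercube_twoConnected_path_tight (n d : ℕ) (G : (hypercube n).Subgraph)
    (h2 : TwoConnected G.coe)
    (a b : Fin n → Bool) (ha : a ∈ G.verts) (hb : b ∈ G.verts) (hab : a ≠ b)
    (hdeg : ∀ z ∈ G.verts, z ≠ a → z ≠ b → d ≤ (G.neighborSet z).ncard)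
    (hnot : ¬ ∃ e : G.coe ≃g hypercube d,
      Even (hammingDist (e ⟨a, ha⟩) (e ⟨b, hb⟩))) :
    ∃ p : G.coe.Walk ⟨a, ha⟩ ⟨b, hb⟩, p.IsPath ∧ 2 ^ d - 1 ≤ p.length := by
  have hdeg' (z) (hz : z ∈ G.verts) (hza : z ≠ a) (hzb : z ≠ b) :
      d ≤ HypercubePath.degreeIn G.spanningCoe G.verts z :=
    (hdeg z hz hza hzb).trans_eq HypercubePath.degreeIn_spanningCoe_verts.symm
  have hnotEven : ¬ HypercubePath.IsEvenSubcube G.spanningCoe d G.verts a b := by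
    rintro ⟨hfull, hparity⟩
    obtain ⟨e, he⟩ := hfull.exists_iso
    exact hnot ⟨e, by rwa [he, HypercubePath.even_hammingDist_iff]⟩
  exact (HypercubePath.longPath_of_twoConnected h2 ha hb hab hdeg' hnotEven).exists_coe_walk ha hb
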